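/- arXiv:2404.05864 — 7 statements merged into one kernel-verified Lean document; each statement's English description precedes it below -/
import Mathlib

section
/- There exists an absolute constant C > 0 such that the following holds for every odd integer r ≥ 5, all integers n ≥ 3, k ≥ 1, and all δ ∈ (0,1): if there exists a binary linear (r,δ)-LCC of block length n and dimension k, then k ≤ C · δ^{-2} · n^{1 - 2/(r-1)} · (log₂ n)³. -/
/-- A binary linear `(r, δ)`-LCC of block length `n` and dimension `k`:
a full-rank matrix whose rows `v 1, …, v n ∈ F₂ᵏ` span `F₂ᵏ`, together with
`r`-uniform matchings `H i` over `[n]` of size at least `δ·n`, such that each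
hyperedge `{a₁,…,a_r} ∈ H i` satisfies `v i = v a₁ + ⋯ + v a_r`. -/
def IsBinaryLCC (r : ℕ) (δ : ℝ) {n k : ℕ} (v : Fin n → Fin k → ZMod 2)
    (H : Fin n → Finset (Finset (Fin n))) : Prop :=
  Submodule.span (ZMod 2) (Set.range v) = ⊤ ∧
  (∀ i : Fin n, ∀ e ∈ H i, e.card = r) ∧
  (∀ i : Fin n, ∀ e ∈ H i, ∀ e' ∈ H i, e ≠ e' → Disjoint e e') ∧
  (∀ i : Fin n, δ * n ≤ ((H i).card : ℝ)) ∧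
  (∀ i : Fin n, ∀ e ∈ H i, v i = ∑ a ∈ e, v a)

/-! Suppose `r = 2 q + 1`. Fix a word `c ↦ e c` of letters in `[n]` of length about
`q g (log n) ^ 2`, and for each position `c` pair up all but one of the points of every hyperedge of
`H (e c)`. Moving the `j`-th of `q` sets of size `g` across the `j`-th pair, for all `j` at once,
gives a Kikuchi graph of colour `c`: along each of its edges the row sum of the `q`-tuple changes by
`v (e c) + v d`, where `d` is the unpaired point of the hyperedge. When `g` is about
`n ^ (1 - 1 / q)`, up to factors depending on `q` and `δ`, enough edges remain after discarding the
vertices where two hyperedges compete, so each colour is a large partial matching.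

The union of these matchings contains a subgraph with logarithmic vertex expansion. In such a graph
the rainbow walks from a vertex `u` that use only a random half `W` of the colours reach most
vertices, and so do those that use only `Wᶜ`. Hence some `w ≠ u` is joined to `u` by two rainbow
walks with disjoint sets of colours. Replacing the letter `e c` by the letter `d` of the edge, for
every colour `c` on the two walks, does not change the sum of the rows over the word. The hyperedges
can be chosen to avoid any prescribed small set of letters, so the word has an equivalent rewriting
that contains a letter outside that set.

Therefore many different rows have the property that adding one of them to the sum of the word gives
the sum of a shorter word. Among more than about `2 / δ` words two share such a row, and it cancels.
So every element of the span is a short sum of rows, and counting short sums bounds the dimension.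
-/

open Finset

section LevelMean

open scoped BigOperators

variable {T : Type*} [Fintype T]

/-- The average of `A` over the level `{W | #W = m}` of the Boolean lattice, that is, the
expectation of `A W` for a uniformly random `m`-element set `W`. -/
noncomputable def levelMean (A : Finset T → ℝ) (m : ℕ) : ℝ :=
  𝔼 W ∈ powersetCard m univ, A W

lemma choose_mul_levelMean (A : Finset T → ℝ) {m : ℕ} (hm : m ≤ Fintype.card T) :
    ((Fintype.card T).choose m : ℝ) * levelMean A m = ∑ W ∈ powersetCard m univ, A W := by
  rw [levelMean, expect_eq_sum_div_card, card_powersetCard, card_univ,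
    mul_div_cancel₀ _ (by exact_mod_cast (Nat.choose_pos hm).ne')]

lemma succ_mul_choose_succ_cast {t m : ℕ} (hm : m ≤ t) :
    ((m : ℝ) + 1) * t.choose (m + 1) = (t - m) * t.choose m := by
  have h := congrArg (Nat.cast : ℕ → ℝ) (Nat.choose_succ_right_eq t m)
  push_cast [Nat.cast_sub hm] at h
  linarith

variable [DecidableEq T]

lemma sum_powersetCard_sum_compl_insert {M : Type*} [AddCommMonoid M]
    (F : Finset T → Finset T → M) (m : ℕ) :
    ∑ W ∈ powersetCard m univ, ∑ c ∈ Wᶜ, F W (insert c W) =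
      ∑ W ∈ powersetCard (m + 1) univ, ∑ c ∈ W, F (W.erase c) W := by
  rw [sum_sigma', sum_sigma']
  refine sum_bij' (fun x _ ↦ ⟨insert x.2 x.1, x.2⟩) (fun x _ ↦ ⟨x.1.erase x.2, x.2⟩)
    ?_ ?_ ?_ ?_ ?_ <;> rintro ⟨W, c⟩ hx <;>
    simp only [mem_sigma, mem_powersetCard_univ, mem_compl] at hx ⊢
  · exact ⟨by rw [card_insert_of_notMem hx.2, hx.1], mem_insert_self c W⟩
  · exact ⟨by rw [card_erase_of_mem hx.2, hx.1, Nat.add_sub_cancel], notMem_erase c W⟩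
  · rw [erase_insert hx.2]
  · rw [insert_erase hx.2]
  · rw [erase_insert hx.2]

lemma expect_sum_compl_insert (A : Finset T → ℝ) {m : ℕ} (hm : m < Fintype.card T) :
    𝔼 W ∈ powersetCard m univ, ∑ c ∈ Wᶜ, A (insert c W) =
      (Fintype.card T - m) * levelMean A (m + 1) := by
  have hpos : ((Fintype.card T).choose m : ℝ) ≠ 0 := by
    exact_mod_cast (Nat.choose_pos hm.le).ne'
  have hcard : ∑ W ∈ powersetCard (m + 1) univ, ∑ _c ∈ W, A W =
      (m + 1) * ∑ W ∈ powersetCard (m + 1) univ, A W := by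
    rw [mul_sum]
    refine sum_congr rfl fun W hW ↦ ?_
    rw [sum_const, (mem_powersetCard_univ.1 hW), nsmul_eq_mul, Nat.cast_add_one]
  rw [expect_eq_sum_div_card, sum_powersetCard_sum_compl_insert (fun _ W ↦ A W), hcard,
    ← choose_mul_levelMean A hm, ← mul_assoc, succ_mul_choose_succ_cast hm.le,
    card_powersetCard, card_univ]
  field_simp

lemma expect_sum_erase (A : Finset T → ℝ) {m : ℕ} (hm : m < Fintype.card T) :
    𝔼 W ∈ powersetCard (m + 1) univ, ∑ c ∈ W, A (W.erase c) = (m + 1) * levelMean A m := by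
  have hpos : ((Fintype.card T).choose (m + 1) : ℝ) ≠ 0 := by
    exact_mod_cast (Nat.choose_pos hm).ne'
  have hcard : ∑ W ∈ powersetCard m univ, ∑ _c ∈ Wᶜ, A W =
      (Fintype.card T - m) * ∑ W ∈ powersetCard m univ, A W := by
    rw [mul_sum]
    refine sum_congr rfl fun W hW ↦ ?_
    rw [sum_const, card_compl, (mem_powersetCard_univ.1 hW), nsmul_eq_mul, Nat.cast_sub hm.le]
  rw [expect_eq_sum_div_card, ← sum_powersetCard_sum_compl_insert (fun W _ ↦ A W), hcard,
    ← choose_mul_levelMean A hm.le, ← mul_assoc, ← succ_mul_choose_succ_cast hm.le,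
    card_powersetCard, card_univ]
  field_simp

lemma levelMean_succ_le {A : Finset T → ℝ} (hA : ∀ W c, A (insert c W) ≤ A W) {m : ℕ}
    (hm : m < Fintype.card T) : levelMean A (m + 1) ≤ levelMean A m := by
  have hpos : (0 : ℝ) < Fintype.card T - m := sub_pos.2 (by exact_mod_cast hm)
  refine le_of_mul_le_mul_left ?_ hpos
  rw [← expect_sum_compl_insert A hm, levelMean, mul_expect]
  refine expect_le_expect fun W hW ↦ (sum_le_card_nsmul _ _ _ fun c _ ↦ hA W c).trans_eq ?_
  rw [card_compl, mem_powersetCard_univ.1 hW, nsmul_eq_mul, Nat.cast_sub hm.le]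

lemma half_mul_levelMean_le {A : Finset T → ℝ} {φ : ℝ}
    (hA : ∀ W, φ / 2 * A W ≤ ∑ c ∈ Wᶜ, (A W - A (insert c W)) + ∑ c ∈ W, (A (W.erase c) - A W))
    {m : ℕ} (hm : m + 1 < Fintype.card T) :
    φ / 2 * levelMean A (m + 1) ≤
      (Fintype.card T - (m + 1)) * (levelMean A (m + 1) - levelMean A (m + 2)) +
        (m + 1) * (levelMean A m - levelMean A (m + 1)) := by
  have hpoint : ∀ W ∈ powersetCard (m + 1) (univ : Finset T), φ / 2 * A W ≤
      ((Fintype.card T - (m + 1)) * A W - ∑ c ∈ Wᶜ, A (insert c W)) +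
        (∑ c ∈ W, A (W.erase c) - (m + 1) * A W) := by
    intro W hW
    refine (hA W).trans_eq ?_
    rw [sum_sub_distrib, sum_sub_distrib, sum_const, sum_const, card_compl,
      mem_powersetCard_univ.1 hW, nsmul_eq_mul, nsmul_eq_mul, Nat.cast_sub hm.le, Nat.cast_add_one]
  have h := expect_le_expect hpoint
  rw [expect_add_distrib, expect_sub_distrib, expect_sub_distrib, ← mul_expect, ← mul_expect,
    ← mul_expect, expect_sum_compl_insert A hm, expect_sum_erase A (by lia)] at h
  simp only [← levelMean.eq_def] at h
  push_cast at h
  linarith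

lemma levelMean_add_two_mul_le {A : Finset T → ℝ} {φ : ℝ} (hφ : 0 ≤ φ)
    (hanti : ∀ W c, A (insert c W) ≤ A W)
    (hA : ∀ W, φ / 2 * A W ≤ ∑ c ∈ Wᶜ, (A W - A (insert c W)) + ∑ c ∈ W, (A (W.erase c) - A W))
    {m : ℕ} (hm : m + 1 < Fintype.card T) :
    levelMean A (m + 2) * (1 + φ / (2 * Fintype.card T)) ≤ levelMean A m := by
  set t : ℝ := (Fintype.card T : ℝ)
  have htm : (m : ℝ) + 1 < t := by rw [← Nat.cast_add_one]; exact Nat.cast_lt.2 hm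
  have : (0 : ℝ) ≤ m := m.cast_nonneg
  have h₁ : levelMean A (m + 1) ≤ levelMean A m := levelMean_succ_le hanti (by lia)
  have h₂ : levelMean A (m + 2) ≤ levelMean A (m + 1) := levelMean_succ_le hanti hm
  have hdrop : φ / 2 * levelMean A (m + 2) ≤ t * (levelMean A m - levelMean A (m + 2)) :=
    calc φ / 2 * levelMean A (m + 2) ≤ φ / 2 * levelMean A (m + 1) := by gcongr
      _ ≤ (t - (m + 1)) * (levelMean A (m + 1) - levelMean A (m + 2)) +
          (m + 1) * (levelMean A m - levelMean A (m + 1)) := half_mul_levelMean_le hA hm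
      _ ≤ t * (levelMean A (m + 1) - levelMean A (m + 2)) +
          t * (levelMean A m - levelMean A (m + 1)) := by
        gcongr
        linarith
      _ = t * (levelMean A m - levelMean A (m + 2)) := by ring
  have : levelMean A (m + 2) * (φ / (2 * t)) ≤ levelMean A m - levelMean A (m + 2) := by
    rw [mul_div_assoc', div_le_iff₀ (by linarith)]
    linarith
  linarith

lemma levelMean_two_mul_mul_pow_le {A : Finset T → ℝ} {φ : ℝ} (hφ : 0 ≤ φ)
    (hanti : ∀ W c, A (insert c W) ≤ A W)
    (hA : ∀ W, φ / 2 * A W ≤ ∑ c ∈ Wᶜ, (A W - A (insert c W)) + ∑ c ∈ W, (A (W.erase c) - A W))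
    {i : ℕ} (hi : 2 * i ≤ Fintype.card T) :
    levelMean A (2 * i) * (1 + φ / (2 * Fintype.card T)) ^ i ≤ A ∅ := by
  induction i with
  | zero => simp [levelMean]
  | succ i ih =>
    set ρ : ℝ := 1 + φ / (2 * Fintype.card T)
    calc levelMean A (2 * (i + 1)) * ρ ^ (i + 1)
        = levelMean A (2 * i + 2) * ρ * ρ ^ i := by rw [mul_add_one, pow_succ]; ring
      _ ≤ levelMean A (2 * i) * ρ ^ i := by
        gcongr
        exact levelMean_add_two_mul_le hφ hanti hA (by lia)
      _ ≤ A ∅ := ih (by lia)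

lemma levelMean_compl (A : Finset T → ℝ) {s : ℕ} (hT : Fintype.card T = 2 * s) :
    levelMean (fun W ↦ A Wᶜ) s = levelMean A s := by
  have hmem (W : Finset T) (hW : W ∈ powersetCard s univ) : Wᶜ ∈ powersetCard s univ := by
    rw [mem_powersetCard_univ] at hW ⊢
    rw [card_compl]
    lia
  exact expect_bij' (fun W _ ↦ Wᶜ) (fun W _ ↦ Wᶜ) hmem hmem (by simp) (by simp) (by simp)

lemma exists_add_compl_le_two_mul_levelMean (A : Finset T → ℝ) {s : ℕ}
    (hT : Fintype.card T = 2 * s) : ∃ W, A W + A Wᶜ ≤ 2 * levelMean A s := by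
  have hmean : 𝔼 W ∈ powersetCard s univ, (A W + A Wᶜ) ≤ 2 * levelMean A s := by
    rw [expect_add_distrib, two_mul]
    exact (congrArg _ (levelMean_compl A hT)).le
  obtain ⟨W, -, hW⟩ := exists_le_of_expect_le
    (powersetCard_nonempty_of_le (by rw [card_univ]; lia)) hmean
  exact ⟨W, hW⟩

lemma exists_add_compl_lt {A : Finset T → ℝ} {φ ε : ℝ} {j : ℕ} (hT : Fintype.card T = 4 * j)
    (hφ : 0 ≤ φ) (hanti : ∀ W c, A (insert c W) ≤ A W)
    (hA : ∀ W, φ / 2 * A W ≤ ∑ c ∈ Wᶜ, (A W - A (insert c W)) + ∑ c ∈ W, (A (W.erase c) - A W))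
    (hsmall : 2 * A ∅ < ε * (1 + φ / (8 * j)) ^ j) : ∃ W, A W + A Wᶜ < ε := by
  have hdecay := levelMean_two_mul_mul_pow_le hφ hanti hA (i := j) (by lia)
  have hden : (2 : ℝ) * Fintype.card T = 8 * j := by rw [hT]; push_cast; ring
  rw [hden] at hdecay
  obtain ⟨W, hW⟩ := exists_add_compl_le_two_mul_levelMean A (s := 2 * j) (by lia)
  refine ⟨W, hW.trans_lt (lt_of_mul_lt_mul_right ?_ (by positivity : 0 ≤ (1 + φ / (8 * j)) ^ j))⟩
  linarith

end LevelMean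

section Expander

variable {T V : Type*}

lemma card_interedges_comm (H : SimpleGraph V) [DecidableRel H.Adj] (X Y : Finset V) :
    #(H.interedges X Y) = #(H.interedges Y X) :=
  have := H.symm
  Rel.card_interedges_comm X Y

variable [Fintype T]

open scoped Classical in
/-- The number of ordered coloured edges from `X` to `Y` in the coloured multigraph whose edges
of colour `c` are those of `G c`. -/
noncomputable def edgeCount (G : T → SimpleGraph V) (X Y : Finset V) : ℕ :=
  ∑ c, #((G c).interedges X Y)

lemma edgeCount_comm (G : T → SimpleGraph V) (X Y : Finset V) :
    edgeCount G X Y = edgeCount G Y X := by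
  classical exact sum_congr rfl fun c _ ↦ card_interedges_comm (G c) X Y

lemma two_le_card_of_edgeCount_self_pos {G : T → SimpleGraph V} {X : Finset V}
    (hX : 0 < edgeCount G X X) : 2 ≤ #X := by
  classical
  obtain ⟨c, -, hc⟩ := exists_ne_zero_of_sum_ne_zero hX.ne'
  obtain ⟨⟨y, z⟩, hp⟩ := card_ne_zero.1 hc
  obtain ⟨hy, hz, hadj⟩ := (G c).mem_interedges_iff.1 hp
  exact one_lt_card.2 ⟨y, hy, z, hz, hadj.ne⟩

variable [DecidableEq V]

lemma edgeCount_union_left (G : T → SimpleGraph V) {U U' : Finset V} (h : Disjoint U U')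
    (Y : Finset V) : edgeCount G (U ∪ U') Y = edgeCount G U Y + edgeCount G U' Y := by
  classical
  rw [edgeCount, edgeCount, edgeCount, ← sum_add_distrib]
  refine sum_congr rfl fun c _ ↦ ?_
  have hdisj := SimpleGraph.interedges_disjoint_left (G c) h Y
  simp only [SimpleGraph.interedges, Rel.interedges] at hdisj ⊢
  rw [union_product, filter_union, card_union_of_disjoint hdisj]

lemma edgeCount_self (G : T → SimpleGraph V) {X U : Finset V} (hU : U ⊆ X) :
    edgeCount G X X =
      edgeCount G U U + edgeCount G (X \ U) (X \ U) + 2 * edgeCount G U (X \ U) := by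
  have hsplit (Y : Finset V) : edgeCount G X Y = edgeCount G U Y + edgeCount G (X \ U) Y := by
    rw [← edgeCount_union_left G disjoint_sdiff, union_sdiff_of_subset hU]
  rw [hsplit X, edgeCount_comm G U, edgeCount_comm G (X \ U), hsplit U, hsplit (X \ U),
    edgeCount_comm G (X \ U) U]
  ring

/- Among the vertex sets `X` with more than `2 φ |X| log |X|` edges take one of least size: if `U`
had too small a boundary in it, one of `U` and `X \ U` would be a smaller such set. -/
lemma exists_expanding_subset [Fintype V] (G : T → SimpleGraph V) {φ : ℝ} (hφ : 0 ≤ φ)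
    (hdense : 2 * φ * Fintype.card V * Real.log (Fintype.card V) < edgeCount G univ univ) :
    ∃ X : Finset V, 0 < edgeCount G X X ∧ ∀ U ⊆ X, U.Nonempty →
      φ * #U * (Real.log #X - Real.log #U) ≤ edgeCount G U (X \ U) := by
  obtain ⟨X, hX, hmin⟩ := exists_min_image
    {X : Finset V | 2 * φ * #X * Real.log #X < edgeCount G X X} card ⟨univ, by simpa using hdense⟩
  have hXdense : 2 * φ * #X * Real.log #X < edgeCount G X X := (mem_filter.1 hX).2
  have hsparse (U : Finset V) (hU : #U < #X) :
      (edgeCount G U U : ℝ) ≤ 2 * φ * #U * Real.log #U := by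
    by_contra! h
    exact (hmin U (by simpa using h)).not_gt hU
  refine ⟨X, ?_, fun U hUX hU ↦ ?_⟩
  · have := Real.log_natCast_nonneg #X
    exact_mod_cast (by positivity : 0 ≤ 2 * φ * #X * Real.log #X).trans_lt hXdense
  obtain rfl | hne := eq_or_ne U X
  · simp
  have hlt : #U < #X := card_lt_card (hUX.ssubset_of_ne hne)
  have hcard : (#(X \ U) : ℝ) = #X - #U := by
    rw [card_sdiff_of_subset hUX, Nat.cast_sub hlt.le]
  have hlt' : #(X \ U) < #X := by
    rw [card_sdiff_of_subset hUX]
    have := hU.card_pos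
    lia
  have hlog : Real.log #(X \ U) ≤ Real.log #X :=
    Real.log_le_log (by rw [hcard, sub_pos]; exact_mod_cast hlt) (by exact_mod_cast hlt'.le)
  have hself := congrArg (Nat.cast : ℕ → ℝ) (edgeCount_self G hUX)
  push_cast at hself
  have hsdiff : φ * #(X \ U) * Real.log #(X \ U) ≤ φ * (#X - #U) * Real.log #X := by
    rw [← hcard]
    gcongr
  linarith [hsparse U hlt, hsparse _ hlt']

end Expander

lemma div_le_log_sub_log {y b y' z : ℝ} (hy : 0 < y) (hb : 0 ≤ b) (hy' : y + b ≤ y')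
    (hz : y + b ≤ z) : b / z ≤ Real.log y' - Real.log y := by
  have hlog := Real.one_sub_inv_le_log_of_pos (show 0 < (y + b) / y by positivity)
  rw [inv_div, Real.log_div (by positivity) hy.ne'] at hlog
  calc b / z ≤ b / (y + b) := by gcongr
    _ = 1 - y / (y + b) := by field_simp; ring
    _ ≤ Real.log (y + b) - Real.log y := hlog
    _ ≤ Real.log y' - Real.log y := by gcongr

section RainbowWalk

variable {T V : Type*} [DecidableEq T]

/-- `RainbowWalk G u W y` says that some walk from `u` to `y` uses pairwise distinct colours, where
an edge of colour `c` is an edge of `G c`, and that `W` is the set of colours it uses. -/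
inductive RainbowWalk (G : T → SimpleGraph V) (u : V) : Finset T → V → Prop
  | nil : RainbowWalk G u ∅ u
  | snoc {W : Finset T} {c : T} {y z : V} (h : RainbowWalk G u W y) (hc : c ∉ W)
      (hyz : (G c).Adj y z) : RainbowWalk G u (insert c W) z

lemma RainbowWalk.exists_replacement {M ι : Type*} [AddCommGroup M] [Module (ZMod 2) M]
    {G : T → SimpleGraph V} {u : V} {W : Finset T} {v : ι → M} {x : V → M} {e : T → ι}
    {Bad : Finset ι}
    (hedge : ∀ c y z, (G c).Adj y z → ∃ d ∉ Bad, x y + x z = v (e c) + v d) {w : V}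
    (h : RainbowWalk G u W w) :
    ∃ f : T → ι, (∀ c ∈ W, f c ∉ Bad) ∧ x u + x w = ∑ c ∈ W, (v (e c) + v (f c)) := by
  induction h with
  | nil => exact ⟨e, by simp, by simp [ZModModule.add_self]⟩
  | @snoc W c y z _ hc hyz ih =>
    obtain ⟨f, hf, hsum⟩ := ih
    obtain ⟨d, hd, hyz⟩ := hedge c y z hyz
    have hne : ∀ s ∈ W, s ≠ c := fun s hs hsc ↦ hc (hsc ▸ hs)
    refine ⟨Function.update f c d, fun s hs ↦ ?_, ?_⟩
    · obtain rfl | hs := mem_insert.1 hs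
      · rwa [Function.update_self]
      · rw [Function.update_of_ne (hne s hs)]
        exact hf s hs
    · rw [sum_insert hc, Function.update_self, ← hyz,
        sum_congr rfl fun s hs ↦ by rw [Function.update_of_ne (hne s hs)], ← hsum]
      have := ZModModule.add_self (x y)
      grind

open scoped Classical in
/-- The vertices of `X` reached from `u` by a rainbow walk with all colours in `W`. The walk itself
may leave `X`. -/
noncomputable def rainbowReach (G : T → SimpleGraph V) (X : Finset V) (u : V) (W : Finset T) :
    Finset V :=
  {y ∈ X | ∃ W₀ ⊆ W, RainbowWalk G u W₀ y}

variable {G : T → SimpleGraph V} {X : Finset V} {u : V} {W : Finset T} {c : T}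

lemma mem_rainbowReach {y : V} :
    y ∈ rainbowReach G X u W ↔ y ∈ X ∧ ∃ W₀ ⊆ W, RainbowWalk G u W₀ y := by
  classical exact mem_filter

lemma rainbowReach_subset : rainbowReach G X u W ⊆ X := fun _ hy ↦ (mem_rainbowReach.1 hy).1

lemma rainbowReach_mono {W' : Finset T} (h : W ⊆ W') :
    rainbowReach G X u W ⊆ rainbowReach G X u W' := fun y hy ↦ by
  obtain ⟨hyX, W₀, hW₀, hwalk⟩ := mem_rainbowReach.1 hy
  exact mem_rainbowReach.2 ⟨hyX, W₀, hW₀.trans h, hwalk⟩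

lemma self_mem_rainbowReach (hu : u ∈ X) : u ∈ rainbowReach G X u W :=
  mem_rainbowReach.2 ⟨hu, ∅, empty_subset _, .nil⟩

lemma rainbowReach_step {y z : V} (hy : y ∈ rainbowReach G X u W) (hc : c ∉ W)
    (hyz : (G c).Adj y z) (hz : z ∈ X) : z ∈ rainbowReach G X u (insert c W) := by
  obtain ⟨-, W₀, hW₀, hwalk⟩ := mem_rainbowReach.1 hy
  exact mem_rainbowReach.2
    ⟨hz, insert c W₀, insert_subset_insert c hW₀, hwalk.snoc (fun h ↦ hc (hW₀ h)) hyz⟩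

/-- The logarithmic deficit `log |X| - log |Y|` of the set `Y` of vertices of `X` reached from `u`
by rainbow walks with all colours in `W`. -/
noncomputable def reachDeficit (G : T → SimpleGraph V) (X : Finset V) (u : V) (W : Finset T) : ℝ :=
  Real.log #X - Real.log #(rainbowReach G X u W)

lemma card_rainbowReach_pos (hu : u ∈ X) : (0 : ℝ) < #(rainbowReach G X u W) :=
  Nat.cast_pos.2 (card_pos.2 ⟨u, self_mem_rainbowReach hu⟩)

lemma log_card_rainbowReach_mono (hu : u ∈ X) {W' : Finset T} (h : W ⊆ W') :
    Real.log #(rainbowReach G X u W) ≤ Real.log #(rainbowReach G X u W') :=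
  Real.log_le_log (card_rainbowReach_pos hu)
    (Nat.cast_le.2 (card_le_card (rainbowReach_mono h)))

lemma reachDeficit_nonneg (hu : u ∈ X) : 0 ≤ reachDeficit G X u W :=
  sub_nonneg.2 (Real.log_le_log (card_rainbowReach_pos hu)
    (Nat.cast_le.2 (card_le_card rainbowReach_subset)))

lemma three_mul_card_lt_four_mul_card_rainbowReach (hu : u ∈ X)
    (h : reachDeficit G X u W < 1 / 4) : 3 * #X < 4 * #(rainbowReach G X u W) := by
  by_contra! hle
  have hpos : (0 : ℝ) < #(rainbowReach G X u W) := card_rainbowReach_pos hu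
  have hle' : 4 / 3 * (#(rainbowReach G X u W) : ℝ) ≤ #X := by
    have : (4 * #(rainbowReach G X u W) : ℝ) ≤ 3 * #X := by exact_mod_cast hle
    linarith
  have hlog : 1 / 3 * #(rainbowReach G X u W) / (4 / 3 * #(rainbowReach G X u W)) ≤
      Real.log #X - Real.log #(rainbowReach G X u W) :=
    div_le_log_sub_log hpos (by positivity) (by linarith) (by linarith)
  rw [mul_div_mul_right _ _ hpos.ne'] at hlog
  rw [reachDeficit] at h
  linarith

section BoundaryEdges

variable [DecidableEq V]

lemma card_image_fst_interedges {H : SimpleGraph V} [DecidableRel H.Adj]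
    (hH : Relator.RightUnique H.Adj) (Y Z : Finset V) :
    #((H.interedges Y Z).image Prod.fst) = #(H.interedges Y Z) := by
  refine card_image_of_injOn ?_
  rintro ⟨y, z⟩ h ⟨y', z'⟩ h' (rfl : y = y')
  rw [mem_coe, H.mem_interedges_iff] at h h'
  exact Prod.ext rfl (hH h.2.2 h'.2.2)

open scoped Classical in
lemma card_interedges_le_card_rainbowReach (hG : ∀ c, Relator.RightUnique (G c).Adj) :
    #((G c).interedges (rainbowReach G X u W) (X \ rainbowReach G X u W)) ≤
      #(rainbowReach G X u W) := by
  rw [← card_image_fst_interedges (hG c)]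
  refine card_le_card (image_subset_iff.2 fun p hp ↦ ?_)
  exact ((G c).mem_interedges_iff.1 hp).1

open scoped Classical in
lemma card_rainbowReach_add_card_interedges_le_insert (hG : ∀ c, Relator.RightUnique (G c).Adj)
    (hc : c ∉ W) :
    #(rainbowReach G X u W) +
        #((G c).interedges (rainbowReach G X u W) (X \ rainbowReach G X u W)) ≤
      #(rainbowReach G X u (insert c W)) := by
  rw [← card_interedges_comm, ← card_image_fst_interedges (hG c),
    ← card_union_of_disjoint]
  · refine card_le_card (union_subset (rainbowReach_mono (subset_insert c W))
      (image_subset_iff.2 fun p hp ↦ ?_))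
    obtain ⟨hz, hy, hadj⟩ := (G c).mem_interedges_iff.1 hp
    exact rainbowReach_step hy hc hadj.symm (mem_sdiff.1 hz).1
  · refine disjoint_right.2 fun z hz ↦ ?_
    obtain ⟨p, hp, rfl⟩ := mem_image.1 hz
    exact (mem_sdiff.1 ((G c).mem_interedges_iff.1 hp).1).2

open scoped Classical in
lemma card_rainbowReach_erase_add_card_interedges_le (hG : ∀ c, Relator.RightUnique (G c).Adj)
    (hc : c ∈ W) :
    #(rainbowReach G X u (W.erase c)) +
        #((G c).interedges (rainbowReach G X u W) (X \ rainbowReach G X u W)) ≤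
      #(rainbowReach G X u W) := by
  rw [← card_image_fst_interedges (hG c), ← card_union_of_disjoint]
  · refine card_le_card (union_subset (rainbowReach_mono (erase_subset c W))
      (image_subset_iff.2 fun p hp ↦ ((G c).mem_interedges_iff.1 hp).1))
  · refine disjoint_right.2 fun y hy hy' ↦ ?_
    obtain ⟨p, hp, rfl⟩ := mem_image.1 hy
    obtain ⟨-, hz, hadj⟩ := (G c).mem_interedges_iff.1 hp
    have hstep := rainbowReach_step hy' (notMem_erase c W) hadj (mem_sdiff.1 hz).1
    rw [insert_erase hc] at hstep
    exact (mem_sdiff.1 hz).2 hstep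

/- Every boundary edge of the reached set `Y W` whose colour is outside `W` enlarges `Y W` once that
colour is added; if its colour lies in `W`, its endpoint in `Y W` is lost once that colour is
removed. Edges of one colour have distinct endpoints, so no gain or loss is counted twice. -/
lemma half_mul_reachDeficit_le [Fintype T] (hG : ∀ c, Relator.RightUnique (G c).Adj) {φ : ℝ}
    (hu : u ∈ X) (hexp : ∀ U ⊆ X, U.Nonempty →
      φ * #U * (Real.log #X - Real.log #U) ≤ edgeCount G U (X \ U)) :
    φ / 2 * reachDeficit G X u W ≤
      ∑ c ∈ Wᶜ, (reachDeficit G X u W - reachDeficit G X u (insert c W)) +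
        ∑ c ∈ W, (reachDeficit G X u (W.erase c) - reachDeficit G X u W) := by
  classical
  set Y : Finset T → Finset V := rainbowReach G X u
  set b : T → ℕ := fun c ↦ #((G c).interedges (Y W) (X \ Y W))
  have hpos (W' : Finset T) : (0 : ℝ) < #(Y W') := card_rainbowReach_pos hu
  have hboundary : φ / 2 * reachDeficit G X u W ≤ ∑ c, (b c : ℝ) / (2 * #(Y W)) := by
    have h := hexp (Y W) rainbowReach_subset ⟨u, self_mem_rainbowReach hu⟩
    rw [edgeCount, Nat.cast_sum] at h
    rw [← sum_div, le_div_iff₀ (by linarith [hpos W])]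
    exact le_of_eq_of_le (by rw [reachDeficit]; ring) h
  refine hboundary.trans ?_
  rw [← sum_compl_add_sum W]
  simp only [reachDeficit, sub_sub_sub_cancel_left]
  refine add_le_add (sum_le_sum fun c hc ↦ ?_) (sum_le_sum fun c hc ↦ ?_)
  · have hle : (b c : ℝ) ≤ #(Y W) := Nat.cast_le.2 (card_interedges_le_card_rainbowReach hG)
    refine div_le_log_sub_log (hpos W) (Nat.cast_nonneg _) ?_ (by linarith)
    rw [← Nat.cast_add]
    exact Nat.cast_le.2 (card_rainbowReach_add_card_interedges_le_insert hG (mem_compl.1 hc))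
  · have hle : (#(Y (W.erase c)) : ℝ) + b c ≤ #(Y W) := by
      rw [← Nat.cast_add]
      exact Nat.cast_le.2 (card_rainbowReach_erase_add_card_interedges_le hG hc)
    exact div_le_log_sub_log (hpos _) (Nat.cast_nonneg _) hle (by linarith [hpos W])

end BoundaryEdges

/- For a uniformly random set `W` of half of the colours, the deficits of `W` and of `Wᶜ` are both
tiny on average, so some `W` makes both `W` and `Wᶜ` reach more than three quarters of `X`. -/
theorem exists_disjoint_rainbowWalk [Fintype T] [Fintype V]
    (hG : ∀ c, Relator.RightUnique (G c).Adj) {j : ℕ} (hT : Fintype.card T = 4 * j) {φ : ℝ}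
    (hφ : 0 ≤ φ)
    (hdense : 2 * φ * Fintype.card V * Real.log (Fintype.card V) < edgeCount G univ univ)
    (hV : 8 * Real.log (Fintype.card V) < (1 + φ / (8 * j)) ^ j) :
    ∃ u w, w ≠ u ∧ ∃ W₀ W₁, Disjoint W₀ W₁ ∧ RainbowWalk G u W₀ w ∧ RainbowWalk G u W₁ w := by
  classical
  obtain ⟨X, hX, hexp⟩ := exists_expanding_subset G hφ hdense
  have hX₂ : 2 ≤ #X := two_le_card_of_edgeCount_self_pos hX
  obtain ⟨u, hu⟩ := card_pos.1 (zero_lt_two.trans_le hX₂)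
  have hstart : reachDeficit G X u ∅ ≤ Real.log (Fintype.card V) := by
    have := Real.log_natCast_nonneg #(rainbowReach G X u ∅)
    have : Real.log #X ≤ Real.log (Fintype.card V) :=
      Real.log_le_log (by positivity) (Nat.cast_le.2 (card_le_univ X))
    rw [reachDeficit]
    linarith
  obtain ⟨W, hW⟩ := exists_add_compl_lt (A := reachDeficit G X u) (ε := 1 / 4) hT hφ
    (fun W c ↦ sub_le_sub_left (log_card_rainbowReach_mono hu (subset_insert c W)) _)
    (fun W ↦ half_mul_reachDeficit_le hG hu hexp) (by linarith)
  have hlarge : 3 * #X < 4 * #(rainbowReach G X u W) :=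
    three_mul_card_lt_four_mul_card_rainbowReach hu
      (by linarith [reachDeficit_nonneg (G := G) (W := Wᶜ) hu])
  have hlarge' : 3 * #X < 4 * #(rainbowReach G X u Wᶜ) :=
    three_mul_card_lt_four_mul_card_rainbowReach hu
      (by linarith [reachDeficit_nonneg (G := G) (W := W) hu])
  have hinter : 1 < #(rainbowReach G X u W ∩ rainbowReach G X u Wᶜ) := by
    have hunion : #(rainbowReach G X u W ∪ rainbowReach G X u Wᶜ) ≤ #X :=
      card_le_card (union_subset rainbowReach_subset rainbowReach_subset)
    have := card_union_add_card_inter (rainbowReach G X u W) (rainbowReach G X u Wᶜ)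
    lia
  obtain ⟨w, hw, hwu⟩ := exists_mem_ne hinter u
  obtain ⟨-, W₀, hW₀, hwalk₀⟩ := mem_rainbowReach.1 (mem_inter.1 hw).1
  obtain ⟨-, W₁, hW₁, hwalk₁⟩ := mem_rainbowReach.1 (mem_inter.1 hw).2
  exact ⟨u, w, hwu, W₀, W₁, disjoint_compl_right.mono hW₀ hW₁, hwalk₀, hwalk₁⟩

end RainbowWalk

section InvolutionGraph

variable {κ F : Type*}

/-- `μ i` restricts to a fixed-point-free involution of the finite set `P i`, for every `i`. The
values of `μ i` outside `P i` are irrelevant. -/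
structure IsInvolutionFamily (P : κ → Finset F) (μ : κ → F → F) : Prop where
  map_mem {i : κ} {y : F} : y ∈ P i → μ i y ∈ P i
  map_map {i : κ} {y : F} : y ∈ P i → μ i (μ i y) = y
  map_ne {i : κ} {y : F} : y ∈ P i → μ i y ≠ y

open scoped Classical in
/-- The points `y` of `P i` such that neither `y` nor `μ i y` lies in `P k` for any `k ≠ i`. -/
noncomputable def isolatedPoints (P : κ → Finset F) (μ : κ → F → F) (i : κ) : Finset F :=
  {y ∈ P i | ∀ i' ≠ i, y ∉ P i' ∧ μ i y ∉ P i'}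

variable {P : κ → Finset F} {μ : κ → F → F}

lemma mem_isolatedPoints {i : κ} {y : F} :
    y ∈ isolatedPoints P μ i ↔ y ∈ P i ∧ ∀ i' ≠ i, y ∉ P i' ∧ μ i y ∉ P i' := by
  classical exact mem_filter

lemma eq_of_mem_isolatedPoints {i i' : κ} {y : F} (hy : y ∈ isolatedPoints P μ i)
    (hy' : y ∈ P i') : i' = i := by
  by_contra hne
  exact ((mem_isolatedPoints.1 hy).2 i' hne).1 hy'

namespace IsInvolutionFamily

variable (h : IsInvolutionFamily P μ)

/-- The partial matching that joins `y` and `μ i y` for every isolated point `y` of `P i`. Points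
lying in several of the sets `P i` are discarded so that no vertex gets two neighbours. -/
def graph : SimpleGraph F where
  Adj y z := ∃ i, y ∈ isolatedPoints P μ i ∧ μ i y = z
  symm := ⟨by
    rintro y _ ⟨i, hy, rfl⟩
    obtain ⟨hyP, hiso⟩ := mem_isolatedPoints.1 hy
    refine ⟨i, mem_isolatedPoints.2 ⟨h.map_mem hyP, fun i' hi' ↦ ?_⟩, h.map_map hyP⟩
    rw [h.map_map hyP]
    exact (hiso i' hi').symm⟩
  loopless := ⟨by
    rintro y ⟨i, hy, hyy⟩
    exact h.map_ne (mem_isolatedPoints.1 hy).1 hyy⟩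

lemma graph_adj {y z : F} : h.graph.Adj y z ↔ ∃ i, y ∈ isolatedPoints P μ i ∧ μ i y = z := Iff.rfl

lemma rightUnique_graph_adj : Relator.RightUnique h.graph.Adj := by
  rintro y _ _ ⟨i, hy, rfl⟩ ⟨i', hy', rfl⟩
  rw [eq_of_mem_isolatedPoints hy (mem_isolatedPoints.1 hy').1]

open scoped Classical in
lemma card_interedges_graph [Fintype κ] [Fintype F] :
    #(h.graph.interedges univ univ) = ∑ i, #(isolatedPoints P μ i) := by
  rw [← card_image_fst_interedges h.rightUnique_graph_adj, ← card_biUnion]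
  · congr 1
    ext y
    simp [SimpleGraph.mem_interedges_iff, graph_adj]
  · exact fun i _ i' _ hne ↦ disjoint_left.2 fun y hy hy' ↦
      hne (eq_of_mem_isolatedPoints hy' (mem_isolatedPoints.1 hy).1)

open scoped Classical in
lemma card_le_card_isolatedPoints_add [Fintype κ] [DecidableEq F] (h : IsInvolutionFamily P μ)
    (i : κ) :
    #(P i) ≤ #(isolatedPoints P μ i) + 2 * ∑ i' ∈ univ.erase i, #(P i ∩ P i') := by
  set B : Finset F := (univ.erase i).biUnion fun i' ↦ P i ∩ P i'
  have hcover : P i ⊆ isolatedPoints P μ i ∪ (B ∪ B.image (μ i)) := by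
    intro y hy
    have hmem {z : F} (hz : z ∈ P i) {i' : κ} (hi' : i' ≠ i) (hz' : z ∈ P i') : z ∈ B :=
      mem_biUnion.2 ⟨i', mem_erase.2 ⟨hi', mem_univ i'⟩, mem_inter.2 ⟨hz, hz'⟩⟩
    by_cases hB : y ∈ B
    · exact mem_union_right _ (mem_union_left _ hB)
    by_cases hB' : μ i y ∈ B
    · exact mem_union_right _ (mem_union_right _ (mem_image.2 ⟨μ i y, hB', h.map_map hy⟩))
    exact mem_union_left _ (mem_isolatedPoints.2 ⟨hy, fun i' hi' ↦
      ⟨fun hyi' ↦ hB (hmem hy hi' hyi'), fun hyi' ↦ hB' (hmem (h.map_mem hy) hi' hyi')⟩⟩)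
  calc #(P i) ≤ #(isolatedPoints P μ i) + (#B + #(B.image (μ i))) :=
        (card_le_card hcover).trans ((card_union_le _ _).trans
          (Nat.add_le_add_left (card_union_le _ _) _))
    _ ≤ #(isolatedPoints P μ i) + (#B + #B) := by grw [card_image_le]
    _ ≤ #(isolatedPoints P μ i) + 2 * ∑ i' ∈ univ.erase i, #(P i ∩ P i') := by
        rw [← two_mul]
        gcongr
        exact card_biUnion_le

open scoped Classical in
lemma mul_sub_le_card_interedges_graph [Fintype κ] [Fintype F] [DecidableEq F] {a b : ℝ}
    (ha : ∀ i, a ≤ #(P i)) (hb₀ : 0 ≤ b) (hb : ∀ i i', i ≠ i' → #(P i ∩ P i') ≤ b) :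
    Fintype.card κ * (a - 2 * Fintype.card κ * b) ≤ #(h.graph.interedges univ univ) := by
  rw [h.card_interedges_graph, Nat.cast_sum, ← nsmul_eq_mul, ← card_univ]
  refine card_nsmul_le_sum _ _ _ fun i _ ↦ ?_
  have hover : ∑ i' ∈ univ.erase i, (#(P i ∩ P i') : ℝ) ≤ #(univ : Finset κ) * b :=
    calc ∑ i' ∈ univ.erase i, (#(P i ∩ P i') : ℝ) ≤ #(univ.erase i) • b :=
          sum_le_card_nsmul _ _ _ fun i' hi' ↦ hb i i' (mem_erase.1 hi').1.symm
      _ ≤ #(univ : Finset κ) * b := by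
          rw [nsmul_eq_mul]
          gcongr
          exact erase_subset _ _
  have hcard : (#(P i) : ℝ) ≤
      #(isolatedPoints P μ i) + 2 * ∑ i' ∈ univ.erase i, (#(P i ∩ P i') : ℝ) := by
    exact_mod_cast h.card_le_card_isolatedPoints_add i
  linarith [ha i]

end IsInvolutionFamily

end InvolutionGraph

section Slice

variable {ι : Type*} {g : ℕ}

section Counting

variable [Fintype ι]

open scoped Classical in
lemma card_superset_mul_choose (t : Finset ι) :
    #{S : Set.powersetCard ι g | t ⊆ S.1} * (Fintype.card ι).choose #t =
      (Fintype.card ι).choose g * g.choose #t := by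
  have hval : #{S : Set.powersetCard ι g | t ⊆ S.1} = #{S ∈ powersetCard g univ | t ⊆ S} := by
    refine card_bij (fun S _ ↦ S.1) (fun S hS ↦ ?_) (fun S _ S' _ h ↦ Subtype.ext h) fun S hS ↦ ?_
    · exact mem_filter.2 ⟨mem_powersetCard_univ.2 S.2, (mem_filter.1 hS).2⟩
    · obtain ⟨hcard, htS⟩ := mem_filter.1 hS
      exact ⟨⟨S, mem_powersetCard_univ.1 hcard⟩, mem_filter.2 ⟨mem_univ _, htS⟩, rfl⟩
  rw [hval]
  obtain htg | htg := le_or_gt #t g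
  · rw [card_filter_powersetCard_subset _ _ _ (subset_univ t) htg, card_univ, Nat.choose_mul htg,
      mul_comm]
  · have hempty : {S ∈ powersetCard g (univ : Finset ι) | t ⊆ S} = ∅ :=
      filter_eq_empty_iff.2 fun S hS htS ↦
        (card_le_card htS).not_gt ((mem_powersetCard_univ.1 hS).trans_lt htg)
    rw [hempty, Nat.choose_eq_zero_of_lt htg, card_empty, zero_mul, mul_zero]

open scoped Classical in
lemma card_filter_mem (a : ι) :
    (#{S : Set.powersetCard ι g | a ∈ S} : ℝ) =
      (Fintype.card ι).choose g * (g / Fintype.card ι) := by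
  have hn : (Fintype.card ι : ℝ) ≠ 0 := Nat.cast_ne_zero.2 (Fintype.card_pos_iff.2 ⟨a⟩).ne'
  have h := card_superset_mul_choose (g := g) {a}
  simp only [singleton_subset_iff, Set.powersetCard.mem_coe_iff, card_singleton,
    Nat.choose_one_right] at h
  rw [mul_div_assoc', eq_div_iff hn]
  exact_mod_cast h

open scoped Classical in
lemma card_filter_mem_and_mem_le (hg : g ≤ Fintype.card ι) {a b : ι} (hab : a ≠ b) :
    (#{S : Set.powersetCard ι g | a ∈ S ∧ b ∈ S} : ℝ) ≤
      (Fintype.card ι).choose g * (g / Fintype.card ι) ^ 2 := by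
  set n := Fintype.card ι
  have hn : (1 : ℝ) < n := Nat.one_lt_cast.2 (Fintype.one_lt_card_iff.2 ⟨a, b, hab⟩)
  have hgn : (g : ℝ) ≤ n := Nat.cast_le.2 hg
  have h := congrArg (Nat.cast : ℕ → ℝ) (card_superset_mul_choose (g := g) {a, b})
  simp only [insert_subset_iff, singleton_subset_iff, Set.powersetCard.mem_coe_iff, card_pair hab,
    Nat.cast_mul, Nat.cast_choose_two] at h
  set N := ((#{S : Set.powersetCard ι g | a ∈ S ∧ b ∈ S} : ℕ) : ℝ)
  have hmul : N * (n * (n - 1)) = n.choose g * (g * (g - 1)) := by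
    linarith [(h : N * ((n : ℝ) * (n - 1) / 2) = n.choose g * ((g : ℝ) * (g - 1) / 2))]
  have hratio : (g : ℝ) * (g - 1) / (n * (n - 1)) ≤ (g / n) ^ 2 := by
    have : (0 : ℝ) ≤ g := g.cast_nonneg
    rw [div_pow, div_le_div_iff₀ (by nlinarith) (by positivity)]
    nlinarith [mul_nonneg (mul_nonneg this (by linarith : (0 : ℝ) ≤ n)) (sub_nonneg.2 hgn)]
  rw [eq_comm, ← div_eq_iff (by nlinarith), mul_div_assoc] at hmul
  rw [← hmul]
  gcongr

open scoped Classical in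
lemma le_card_filter_mem_iff_notMem (hg : g ≤ Fintype.card ι) {a b : ι} (hab : a ≠ b) :
    (Fintype.card ι).choose g * (2 * g / Fintype.card ι * (1 - g / Fintype.card ι)) ≤
      (#{S : Set.powersetCard ι g | a ∈ S ↔ b ∉ S} : ℝ) := by
  have hcard : #{S : Set.powersetCard ι g | a ∈ S} + #{S : Set.powersetCard ι g | b ∈ S} ≤
      #{S : Set.powersetCard ι g | a ∈ S ↔ b ∉ S} +
        2 * #{S : Set.powersetCard ι g | a ∈ S ∧ b ∈ S} := by
    simp only [card_filter, mul_sum, ← sum_add_distrib]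
    exact sum_le_sum fun S _ ↦ by by_cases a ∈ S <;> by_cases b ∈ S <;> simp [*]
  have hcard' := (Nat.cast_le (α := ℝ)).2 hcard
  push_cast [card_filter_mem] at hcard'
  rw [mul_div_assoc]
  linarith [card_filter_mem_and_mem_le hg hab]

open scoped Classical in
lemma card_filter_two_mem_iff_notMem_le (hg : g ≤ Fintype.card ι) {a b a' b' : ι} (haa : a ≠ a')
    (hab : a ≠ b') (hba : b ≠ a') (hbb : b ≠ b') :
    (#{S : Set.powersetCard ι g | (a ∈ S ↔ b ∉ S) ∧ (a' ∈ S ↔ b' ∉ S)} : ℝ) ≤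
      (Fintype.card ι).choose g * (2 * g / Fintype.card ι) ^ 2 := by
  have hcard : #{S : Set.powersetCard ι g | (a ∈ S ↔ b ∉ S) ∧ (a' ∈ S ↔ b' ∉ S)} ≤
      #{S : Set.powersetCard ι g | a ∈ S ∧ a' ∈ S} + #{S : Set.powersetCard ι g | a ∈ S ∧ b' ∈ S} +
        (#{S : Set.powersetCard ι g | b ∈ S ∧ a' ∈ S} +
          #{S : Set.powersetCard ι g | b ∈ S ∧ b' ∈ S}) := by
    simp only [card_filter, ← sum_add_distrib]
    exact sum_le_sum fun S _ ↦ by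
      by_cases a ∈ S <;> by_cases b ∈ S <;> by_cases a' ∈ S <;> by_cases b' ∈ S <;> simp [*]
  have hcard' := (Nat.cast_le (α := ℝ)).2 hcard
  push_cast at hcard'
  have := card_filter_mem_and_mem_le hg haa
  have := card_filter_mem_and_mem_le hg hab
  have := card_filter_mem_and_mem_le hg hba
  have := card_filter_mem_and_mem_le hg hbb
  rw [mul_div_assoc, mul_pow]
  linarith

end Counting

section Swap

variable [DecidableEq ι] {a b : ι}

/-- The image of a `g`-element set under the transposition of `a` and `b`. -/
def swapPoints (a b : ι) (S : Set.powersetCard ι g) : Set.powersetCard ι g :=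
  Set.powersetCard.map g (Equiv.swap a b).toEmbedding S

lemma mem_swapPoints {S : Set.powersetCard ι g} {x : ι} :
    x ∈ swapPoints a b S ↔ Equiv.swap a b x ∈ S := by
  rw [← Set.powersetCard.mem_coe_iff, ← Set.powersetCard.mem_coe_iff, swapPoints,
    Set.powersetCard.val_map, mem_map_equiv, Equiv.symm_swap]

lemma swapPoints_swapPoints (S : Set.powersetCard ι g) :
    swapPoints a b (swapPoints a b S) = S :=
  SetLike.ext fun x ↦ by rw [mem_swapPoints, mem_swapPoints, Equiv.swap_apply_self]

lemma mem_swapPoints_iff_notMem {S : Set.powersetCard ι g} (hS : a ∈ S ↔ b ∉ S) :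
    a ∈ swapPoints a b S ↔ b ∉ swapPoints a b S := by
  rw [mem_swapPoints, mem_swapPoints, Equiv.swap_apply_left, Equiv.swap_apply_right]
  tauto

lemma swapPoints_ne {S : Set.powersetCard ι g} (hS : a ∈ S ↔ b ∉ S) : swapPoints a b S ≠ S := by
  intro h
  have : a ∈ swapPoints a b S ↔ a ∈ S := by rw [h]
  rw [mem_swapPoints, Equiv.swap_apply_left] at this
  tauto

lemma sum_add_sum_swapPoints {M : Type*} [AddCommGroup M] [Module (ZMod 2) M] (v : ι → M)
    {S : Set.powersetCard ι g} (hS : a ∈ S ↔ b ∉ S) :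
    ∑ x ∈ S.1, v x + ∑ x ∈ (swapPoints a b S).1, v x = v a + v b := by
  have hfix (x : ι) (hxa : x ≠ a) (hxb : x ≠ b) : v x + v (Equiv.swap a b x) = 0 := by
    rw [Equiv.swap_apply_of_ne_of_ne hxa hxb, ZModModule.add_self]
  rw [swapPoints, Set.powersetCard.val_map, sum_map, ← sum_add_distrib]
  simp only [Equiv.coe_toEmbedding]
  by_cases ha : a ∈ S
  · have hb : b ∉ S := hS.1 ha
    rw [sum_eq_single_of_mem a ha fun x hx hxa ↦ hfix x hxa fun hxb ↦ hb (hxb ▸ hx)]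
    simp
  · have hb : b ∈ S := by tauto
    rw [sum_eq_single_of_mem b hb fun x hx hxb ↦ hfix x (fun hxa ↦ ha (hxa ▸ hx)) hxb]
    simp [add_comm]

end Swap

end Slice

section Kikuchi

variable {ι κ J : Type*} {g : ℕ}

/-- The edge labelled `i` of the Kikuchi graph on `J`-tuples of `g`-element sets: it moves
the `j`-th set across the `j`-th pair `p (i, j, false)`, `p (i, j, true)` of `i`, for all `j` at
once. -/
def kikuchiSwap [DecidableEq ι] (p : κ × J × Bool ↪ ι) (i : κ) (y : J → Set.powersetCard ι g)
    (j : J) : Set.powersetCard ι g :=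
  swapPoints (p (i, j, false)) (p (i, j, true)) (y j)

variable [Fintype ι] [Fintype J] [DecidableEq J]

open scoped Classical in
/-- The vertices of the Kikuchi graph that carry an edge labelled `i`: for every `j`, the `j`-th set
contains exactly one point of the `j`-th pair of `i`. -/
noncomputable def kikuchiSet (p : κ × J × Bool ↪ ι) (i : κ) :
    Finset (J → Set.powersetCard ι g) :=
  Fintype.piFinset fun j ↦ {S | p (i, j, false) ∈ S ↔ p (i, j, true) ∉ S}

lemma mem_kikuchiSet {p : κ × J × Bool ↪ ι} {i : κ} {y : J → Set.powersetCard ι g} :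
    y ∈ kikuchiSet p i ↔ ∀ j, p (i, j, false) ∈ y j ↔ p (i, j, true) ∉ y j := by
  simp only [kikuchiSet, Fintype.mem_piFinset, mem_filter_univ]

variable (p : κ × J × Bool ↪ ι)

lemma isInvolutionFamily_kikuchi [DecidableEq ι] [Nonempty J] :
    IsInvolutionFamily (kikuchiSet (g := g) p) (kikuchiSwap p) where
  map_mem hy := mem_kikuchiSet.2 fun j ↦ mem_swapPoints_iff_notMem (mem_kikuchiSet.1 hy j)
  map_map _ := funext fun _ ↦ swapPoints_swapPoints _
  map_ne hy hfix := swapPoints_ne (mem_kikuchiSet.1 hy (Classical.arbitrary J)) (congrFun hfix _)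

lemma le_card_kikuchiSet [Nonempty J] (hg : 2 * Fintype.card J * g ≤ Fintype.card ι) (i : κ) :
    (Fintype.card ι).choose g ^ Fintype.card J *
      ((2 * g / Fintype.card ι) ^ Fintype.card J / 2) ≤ (#(kikuchiSet (g := g) p i) : ℝ) := by
  classical
  set q := Fintype.card J
  set n := Fintype.card ι
  have hq : 1 ≤ q := Fintype.card_pos
  have hn : 0 < n := Fintype.card_pos_iff.2 ⟨p (i, Classical.arbitrary J, true)⟩
  have hgn : g ≤ n := by nlinarith
  have hqg : q * (g / n : ℝ) ≤ 1 / 2 := by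
    rw [← mul_div_assoc, div_le_div_iff₀ (by positivity) two_pos]
    exact_mod_cast (by linarith : q * g * 2 ≤ 1 * n)
  have hgn' : 0 ≤ (1 - g / n : ℝ) :=
    sub_nonneg.2 (div_le_one_of_le₀ (Nat.cast_le.2 hgn) n.cast_nonneg)
  have hbern : 1 / 2 ≤ (1 - g / n : ℝ) ^ q := by
    have := one_add_mul_le_pow (a := -(g / n : ℝ)) (by linarith) q
    rw [← sub_eq_add_neg] at this
    linarith
  calc (n.choose g : ℝ) ^ q * ((2 * g / n) ^ q / 2)
      ≤ n.choose g ^ q * ((2 * g / n) ^ q * (1 - g / n) ^ q) := by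
        rw [div_eq_mul_one_div]
        gcongr
    _ = ∏ _j : J, (n.choose g : ℝ) * (2 * g / n * (1 - g / n)) := by
        rw [prod_const, card_univ, mul_pow, mul_pow]
    _ ≤ _ := by
        rw [kikuchiSet, Fintype.card_piFinset, Nat.cast_prod]
        exact prod_le_prod (fun j _ ↦ by positivity) fun j _ ↦
          le_card_filter_mem_iff_notMem hgn (p.injective.ne (by simp))

lemma card_kikuchiSet_inter_le [DecidableEq ι] (hg : g ≤ Fintype.card ι) {i i' : κ} (hi : i ≠ i') :
    (#(kikuchiSet (g := g) p i ∩ kikuchiSet p i') : ℝ) ≤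
      (Fintype.card ι).choose g ^ Fintype.card J *
        ((2 * g / Fintype.card ι) ^ Fintype.card J) ^ 2 := by
  classical
  have hinter : kikuchiSet (g := g) p i ∩ kikuchiSet p i' = Fintype.piFinset fun j ↦
      {S | (p (i, j, false) ∈ S ↔ p (i, j, true) ∉ S) ∧
        (p (i', j, false) ∈ S ↔ p (i', j, true) ∉ S)} := by
    ext y
    simp only [mem_inter, mem_kikuchiSet, Fintype.mem_piFinset, mem_filter_univ, forall_and]
  rw [hinter, Fintype.card_piFinset, Nat.cast_prod, ← pow_mul, mul_comm (Fintype.card J), pow_mul,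
    ← mul_pow, ← card_univ (α := J), ← prod_const]
  have hne (j : J) (s s' : Bool) : p (i, j, s) ≠ p (i', j, s') := p.injective.ne (by simp [hi])
  exact prod_le_prod (fun _ _ ↦ Nat.cast_nonneg _) fun j _ ↦
    card_filter_two_mem_iff_notMem_le hg (hne j _ _) (hne j _ _) (hne j _ _) (hne j _ _)

open scoped Classical in
lemma choose_pow_div_le_card_interedges_kikuchi [Fintype κ] [Nonempty J]
    (hg : 2 * Fintype.card J * g ≤ Fintype.card ι)
    (hlo : 1 / 16 ≤ Fintype.card κ * (2 * g / Fintype.card ι : ℝ) ^ Fintype.card J)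
    (hhi : Fintype.card κ * (2 * g / Fintype.card ι : ℝ) ^ Fintype.card J ≤ 1 / 8) :
    ((Fintype.card ι).choose g ^ Fintype.card J / 64 : ℝ) ≤
      #((isInvolutionFamily_kikuchi (g := g) p).graph.interedges univ univ) := by
  have hgn : g ≤ Fintype.card ι := by nlinarith [Fintype.card_pos (α := J)]
  refine ((isInvolutionFamily_kikuchi (g := g) p).mul_sub_le_card_interedges_graph
    (le_card_kikuchiSet p hg) (by positivity)
    fun _ _ hi ↦ card_kikuchiSet_inter_le p hgn hi).trans' ?_
  have hN : 0 ≤ ((Fintype.card ι).choose g : ℝ) ^ Fintype.card J := by positivity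
  generalize ((Fintype.card ι).choose g : ℝ) ^ Fintype.card J = N at hN ⊢
  generalize (2 * g / Fintype.card ι : ℝ) ^ Fintype.card J = π at hlo hhi ⊢
  generalize (Fintype.card κ : ℝ) = m at hlo hhi ⊢
  calc N / 64 ≤ N * (m * π * (1 / 2 - 2 * (m * π))) := by
        rw [div_eq_mul_one_div]
        gcongr
        nlinarith
    _ = m * (N * (π / 2) - 2 * m * (N * π ^ 2)) := by ring

lemma sum_add_sum_kikuchiSwap [DecidableEq ι] {M : Type*} [AddCommGroup M] [Module (ZMod 2) M]
    (v : ι → M) {i : κ} {y : J → Set.powersetCard ι g} (hy : y ∈ kikuchiSet p i) :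
    ∑ j, ∑ a ∈ (y j).1, v a + ∑ j, ∑ a ∈ (kikuchiSwap p i y j).1, v a =
      ∑ j, (v (p (i, j, false)) + v (p (i, j, true))) := by
  rw [← sum_add_distrib]
  exact sum_congr rfl fun j _ ↦ sum_add_sum_swapPoints v (mem_kikuchiSet.1 hy j)

end Kikuchi

section RecoveryMatching

variable {ι M : Type*} [AddCommGroup M] {r : ℕ} {v : ι → M} {w : M} {H : Finset (Finset ι)}

/-- `H` is an `r`-uniform matching each of whose hyperedges recovers the symbol `w` from the rows
`v`. -/
structure IsRecoveryMatching (r : ℕ) (v : ι → M) (w : M) (H : Finset (Finset ι)) : Prop where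
  card_eq {e : Finset ι} : e ∈ H → #e = r
  pairwiseDisjoint : (H : Set (Finset ι)).PairwiseDisjoint id
  sum_eq {e : Finset ι} : e ∈ H → ∑ a ∈ e, v a = w

namespace IsRecoveryMatching

lemma mono (hH : IsRecoveryMatching r v w H) {H' : Finset (Finset ι)} (h : H' ⊆ H) :
    IsRecoveryMatching r v w H' where
  card_eq he := hH.card_eq (h he)
  pairwiseDisjoint := hH.pairwiseDisjoint.subset h
  sum_eq he := hH.sum_eq (h he)

lemma card_mul_le [Fintype ι] (hH : IsRecoveryMatching r v w H) : #H * r ≤ Fintype.card ι := by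
  classical
  calc #H * r = ∑ e ∈ H, #e := (sum_const_nat fun e he ↦ hH.card_eq he).symm
    _ = #(H.biUnion id) := (card_biUnion hH.pairwiseDisjoint).symm
    _ ≤ Fintype.card ι := card_le_univ _

lemma mul_le_one [Fintype ι] [Nonempty ι] {δ : ℝ} (hH : IsRecoveryMatching r v w H)
    (hδ : δ * Fintype.card ι ≤ #H) : r * δ ≤ 1 := by
  have hcard : (#H * r : ℝ) ≤ Fintype.card ι := by exact_mod_cast hH.card_mul_le
  refine le_of_mul_le_mul_right ?_ (Nat.cast_pos.2 (Fintype.card_pos (α := ι)))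
  nlinarith [mul_le_mul_of_nonneg_right hδ r.cast_nonneg (α := ℝ)]

lemma exists_subset_disjoint (hH : IsRecoveryMatching r v w H) {m : ℕ} {Bad : Finset ι}
    (hm : m + #Bad ≤ #H) : ∃ H' ⊆ H, #H' = m ∧ ∀ e ∈ H', Disjoint e Bad := by
  classical
  set B : Finset (Finset ι) := {e ∈ H | ¬ Disjoint e Bad}
  have hBBad : #B ≤ #Bad := by
    have hdisj : (B : Set (Finset ι)).PairwiseDisjoint fun e ↦ e ∩ Bad := fun e he e' he' hne ↦
      (hH.pairwiseDisjoint (mem_of_mem_filter e he) (mem_of_mem_filter e' he') hne).mono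
        inter_subset_left inter_subset_left
    refine (card_le_card_biUnion hdisj fun e he ↦ ?_).trans
      (card_le_card (biUnion_subset.2 fun _ _ ↦ inter_subset_right))
    exact not_disjoint_iff_nonempty_inter.1 (mem_filter.1 he).2
  have hcard : #{e ∈ H | Disjoint e Bad} + #B = #H := card_filter_add_card_filter_not _
  obtain ⟨H', hH', rfl⟩ := exists_subset_card_eq (n := m) (s := {e ∈ H | Disjoint e Bad}) (by omega)
  exact ⟨H', hH'.trans (filter_subset _ _), rfl, fun e he ↦ (mem_filter.1 (hH' he)).2⟩

lemma exists_pairing [Module (ZMod 2) M] {q : ℕ} (hH : IsRecoveryMatching (2 * q + 1) v w H) :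
    ∃ (p : H × Fin q × Bool ↪ ι) (c : H → ι), (∀ e, c e ∈ e.1) ∧
      ∀ e, ∑ j, (v (p (e, j, false)) + v (p (e, j, true))) = w + v (c e) := by
  have hcard (e : H) : Fintype.card (Option (Fin q × Bool)) = Fintype.card e.1 := by
    simp [hH.card_eq e.2, mul_comm]
  let E (e : H) : Option (Fin q × Bool) ≃ e.1 := Fintype.equivOfCardEq (hcard e)
  have hinj : Function.Injective fun x : H × Fin q × Bool ↦ (E x.1 (some x.2)).1 := by
    rintro ⟨e, x⟩ ⟨e', x'⟩ (h : (E e (some x)).1 = (E e' (some x')).1)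
    obtain rfl : e = e' := Subtype.ext <| hH.pairwiseDisjoint.elim_finset e.2 e'.2 _
      (E e (some x)).2 (h ▸ (E e' (some x')).2)
    obtain rfl : x = x' := Option.some_injective _ ((E e).injective (Subtype.ext h))
    rfl
  refine ⟨⟨_, hinj⟩, fun e ↦ E e none, fun e ↦ (E e none).2, fun e ↦ ?_⟩
  have hsum : w = v (E e none) + ∑ j, (v (E e (some (j, true))) + v (E e (some (j, false)))) := by
    rw [← hH.sum_eq e.2, ← sum_coe_sort, ← (E e).sum_comp, Fintype.sum_option,
      Fintype.sum_prod_type]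
    simp only [Fintype.sum_bool]
  rw [hsum, add_right_comm, ZModModule.add_self, zero_add]
  exact sum_congr rfl fun j _ ↦ add_comm _ _

end IsRecoveryMatching

end RecoveryMatching

section Replacement

variable {ι T V M : Type*} [AddCommGroup M] [Module (ZMod 2) M] {v : ι → M}

lemma RainbowWalk.nonempty_of_ne [DecidableEq T] {G : T → SimpleGraph V} {u w : V} {W : Finset T}
    (h : RainbowWalk G u W w) (hne : w ≠ u) : W.Nonempty := by
  cases h with
  | nil => exact absurd rfl hne
  | snoc => exact insert_nonempty _ _

lemma exists_sum_eq_of_disjoint_rainbowWalk [Fintype T] [DecidableEq T] {G : T → SimpleGraph V}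
    {x : V → M} {e : T → ι} {Bad : Finset ι}
    (hedge : ∀ c y z, (G c).Adj y z → ∃ d ∉ Bad, x y + x z = v (e c) + v d) {u w : V}
    (hne : w ≠ u) {W₀ W₁ : Finset T} (hW : Disjoint W₀ W₁) (h₀ : RainbowWalk G u W₀ w)
    (h₁ : RainbowWalk G u W₁ w) :
    ∃ f : T → ι, ∑ c, v (f c) = ∑ c, v (e c) ∧ ∃ c, f c ∉ Bad := by
  obtain ⟨f₀, hf₀, hsum₀⟩ := h₀.exists_replacement hedge
  obtain ⟨f₁, -, hsum₁⟩ := h₁.exists_replacement hedge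
  obtain ⟨c, hc⟩ := h₀.nonempty_of_ne hne
  let f (c : T) : ι := if c ∈ W₀ then f₀ c else if c ∈ W₁ then f₁ c else e c
  have hfW₀ {c : T} (hc : c ∈ W₀) : f c = f₀ c := if_pos hc
  have hfW₁ {c : T} (hc : c ∈ W₁) : f c = f₁ c := by
    simp only [f, if_neg (disjoint_right.1 hW hc), if_pos hc]
  have hf {c : T} (hc : c ∉ W₀ ∪ W₁) : f c = e c := by
    rw [mem_union, not_or] at hc
    simp only [f, if_neg hc.1, if_neg hc.2]
  have hsum : ∑ c, (v (e c) + v (f c)) = 0 :=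
    calc ∑ c, (v (e c) + v (f c)) = ∑ c ∈ W₀ ∪ W₁, (v (e c) + v (f c)) :=
          (sum_subset (subset_univ _) fun c _ hc ↦ by rw [hf hc, ZModModule.add_self]).symm
      _ = ∑ c ∈ W₀, (v (e c) + v (f₀ c)) + ∑ c ∈ W₁, (v (e c) + v (f₁ c)) := by
          rw [sum_union hW]
          exact congrArg₂ _ (sum_congr rfl fun c hc ↦ by rw [hfW₀ hc])
            (sum_congr rfl fun c hc ↦ by rw [hfW₁ hc])
      _ = 0 := by rw [← hsum₀, ← hsum₁, ZModModule.add_self]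
  refine ⟨f, ?_, c, by rw [hfW₀ hc]; exact hf₀ c hc⟩
  rw [sum_add_distrib, add_eq_zero_iff_eq_neg, ZModModule.neg_eq_self] at hsum
  exact hsum.symm

variable [Fintype ι] {q g m D : ℕ}

open scoped Classical in
lemma IsRecoveryMatching.exists_kikuchi_graph {w : M} {H : Finset (Finset ι)}
    (hH : IsRecoveryMatching (2 * q + 1) v w H) (hq : 0 < q) (hg : 2 * q * g ≤ Fintype.card ι)
    (hlo : 1 / 16 ≤ m * (2 * g / Fintype.card ι : ℝ) ^ q)
    (hhi : m * (2 * g / Fintype.card ι : ℝ) ^ q ≤ 1 / 8) {Bad : Finset ι} (hm : m + #Bad ≤ #H) :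
    ∃ G : SimpleGraph (Fin q → Set.powersetCard ι g), Relator.RightUnique G.Adj ∧
      ((Fintype.card ι).choose g ^ q / 64 : ℝ) ≤ #(G.interedges univ univ) ∧
      ∀ y z, G.Adj y z → ∃ d ∉ Bad,
        ∑ j, ∑ a ∈ (y j).1, v a + ∑ j, ∑ a ∈ (z j).1, v a = w + v d := by
  have : Nonempty (Fin q) := ⟨⟨0, hq⟩⟩
  obtain ⟨H', hsub, rfl, hBad⟩ := hH.exists_subset_disjoint hm
  obtain ⟨p, c, hc, hp⟩ := (hH.mono hsub).exists_pairing
  have hinv := isInvolutionFamily_kikuchi (g := g) p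
  refine ⟨hinv.graph, hinv.rightUnique_graph_adj, ?_, ?_⟩
  · have hcount := choose_pow_div_le_card_interedges_kikuchi (g := g) p
    simp only [Fintype.card_fin, Fintype.card_coe] at hcount
    exact hcount hg hlo hhi
  · rintro y _ ⟨i, hy, rfl⟩
    refine ⟨c i, disjoint_left.1 (hBad i i.2) (hc i), ?_⟩
    rw [sum_add_sum_kikuchiSwap p v (mem_isolatedPoints.1 hy).1, hp]

lemma card_pi_powersetCard :
    Fintype.card (Fin q → Set.powersetCard ι g) = (Fintype.card ι).choose g ^ q := by
  rw [Fintype.card_fun, Fintype.card_fin, ← Nat.card_eq_fintype_card (α := Set.powersetCard ι g),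
    Set.powersetCard.card, Nat.card_eq_fintype_card]

theorem exists_sum_eq_of_isRecoveryMatching {H : ι → Finset (Finset ι)}
    (hH : ∀ i, IsRecoveryMatching (2 * q + 1) v (v i) (H i)) (hm : ∀ i, m + D ≤ #(H i))
    (hq : 0 < q) (hg : 2 * q * g ≤ Fintype.card ι)
    (hlo : 1 / 16 ≤ m * (2 * g / Fintype.card ι : ℝ) ^ q)
    (hhi : m * (2 * g / Fintype.card ι : ℝ) ^ q ≤ 1 / 8)
    [Fintype T] {j : ℕ} (hT : Fintype.card T = 4 * j) {φ : ℝ} (hφ : 0 ≤ φ)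
    (hdense : 32 * φ * Real.log ((Fintype.card ι).choose g ^ q) < j)
    (hV : 8 * Real.log ((Fintype.card ι).choose g ^ q) < (1 + φ / (8 * j)) ^ j)
    (e : T → ι) {Bad : Finset ι} (hBad : #Bad ≤ D) :
    ∃ f : T → ι, ∑ c, v (f c) = ∑ c, v (e c) ∧ ∃ c, f c ∉ Bad := by
  classical
  choose G hG hedges hrow using fun c ↦ (hH (e c)).exists_kikuchi_graph hq hg hlo hhi
    ((Nat.add_le_add_left hBad m).trans (hm (e c)))
  have hchoose : (0 : ℝ) < (Fintype.card ι).choose g ^ q := by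
    have : 0 < (Fintype.card ι).choose g := Nat.choose_pos (by nlinarith)
    positivity
  have hdensity : 4 * j * ((Fintype.card ι).choose g ^ q / 64 : ℝ) ≤ edgeCount G univ univ := by
    rw [edgeCount, Nat.cast_sum]
    calc 4 * j * ((Fintype.card ι).choose g ^ q / 64 : ℝ)
        = #(univ : Finset T) • ((Fintype.card ι).choose g ^ q / 64 : ℝ) := by
          rw [card_univ, hT, nsmul_eq_mul]
          push_cast
          rfl
      _ ≤ _ := card_nsmul_le_sum _ _ _ fun c _ ↦ hedges c
  obtain ⟨u, w, hne, W₀, W₁, hW, h₀, h₁⟩ := exists_disjoint_rainbowWalk hG hT hφ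
    (by
      rw [card_pi_powersetCard, Nat.cast_pow]
      nlinarith)
    (by rwa [card_pi_powersetCard, Nat.cast_pow])
  exact exists_sum_eq_of_disjoint_rainbowWalk hrow hne hW h₀ h₁

end Replacement

section Counting

open scoped Pointwise

variable {ι M : Type*} [AddCommGroup M] {v : ι → M}

lemma mem_nsmul_range_iff {R : ℕ} {x : M} :
    x ∈ R • Set.range v ↔ ∃ e : Fin R → ι, ∑ c, v (e c) = x := by
  simp only [Set.mem_nsmul, List.sum_ofFn]
  constructor
  · rintro ⟨f, rfl⟩
    choose e he using fun c ↦ (f c).2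
    exact ⟨e, sum_congr rfl fun c _ ↦ he c⟩
  · rintro ⟨e, rfl⟩
    exact ⟨fun c ↦ ⟨v (e c), e c, rfl⟩, rfl⟩

lemma exists_mem_nsmul_range_of_mem_span [Module (ZMod 2) M] {x : M}
    (hx : x ∈ Submodule.span (ZMod 2) (Set.range v)) : ∃ R : ℕ, x ∈ R • Set.range v := by
  induction hx using Submodule.span_induction with
  | mem x hx => exact ⟨1, by rwa [one_nsmul]⟩
  | zero => exact ⟨0, by rw [zero_nsmul]; exact Set.zero_mem_zero⟩
  | add x y _ _ hx hy =>
    obtain ⟨R, hx⟩ := hx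
    obtain ⟨R', hy⟩ := hy
    exact ⟨R + R', add_nsmul (Set.range v) R R' ▸ Set.add_mem_add hx hy⟩
  | smul a x _ hx =>
    obtain rfl | rfl := (by decide : ∀ a : ZMod 2, a = 0 ∨ a = 1) a
    · exact ⟨0, by rw [zero_smul (ZMod 2) x, zero_nsmul]; exact Set.zero_mem_zero⟩
    · rwa [one_smul]

variable [Fintype ι]

lemma card_le_geomSum_of_forall_mem_nsmul_range [Fintype M] {L : ℕ}
    (h : ∀ x, ∃ R < L, x ∈ R • Set.range v) :
    Fintype.card M ≤ ∑ R ∈ range L, Fintype.card ι ^ R := by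
  classical
  calc Fintype.card M ≤ #((range L).biUnion fun R ↦ R • univ.image v) := by
        refine card_le_card fun x _ ↦ ?_
        obtain ⟨R, hR, hx⟩ := h x
        refine mem_biUnion.2 ⟨R, mem_range.2 hR, ?_⟩
        rwa [← mem_coe, coe_nsmul, coe_image, coe_univ, Set.image_univ]
    _ ≤ ∑ R ∈ range L, #(R • univ.image v) := card_biUnion_le
    _ ≤ ∑ R ∈ range L, Fintype.card ι ^ R := by
        refine sum_le_sum fun R _ ↦ card_nsmul_le.trans ?_
        gcongr
        exact card_image_le

variable [Module (ZMod 2) M] {s b D : ℕ}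

open scoped Classical in
lemma lt_card_add_mem_nsmul_range
    (h : ∀ (e : Fin (s + 1) → ι) (Bad : Finset ι), #Bad ≤ D →
      ∃ f : Fin (s + 1) → ι, ∑ c, v (f c) = ∑ c, v (e c) ∧ ∃ c, f c ∉ Bad)
    {y : M} (hy : y ∈ (s + 1) • Set.range v) : D < #{a | y + v a ∈ s • Set.range v} := by
  by_contra! hcard
  obtain ⟨e, rfl⟩ := mem_nsmul_range_iff.1 hy
  obtain ⟨f, hsum, c, hc⟩ := h e _ hcard
  refine hc (mem_filter.2 ⟨mem_univ _, mem_nsmul_range_iff.2 ⟨fun i ↦ f (c.succAbove i), ?_⟩⟩)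
  rw [← hsum, Fin.sum_univ_succAbove _ c, add_right_comm, ZModModule.add_self, zero_add]

-- Among `b` blocks of length `s + 1` two can be completed by the same row, which then cancels.
open scoped Classical in
lemma exists_lt_mem_nsmul_range
    (h : ∀ y ∈ (s + 1) • Set.range v, D < #{a | y + v a ∈ s • Set.range v})
    (hb : Fintype.card ι < b * (D + 1)) {x : M} (hx : x ∈ (b * (s + 1)) • Set.range v) :
    ∃ R < b * (s + 1), x ∈ R • Set.range v := by
  rw [mul_nsmul', ← card_fin b, ← sum_const] at hx
  obtain ⟨y, hy, rfl⟩ := (Set.mem_finsetSum _ _ _).1 hx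
  have hpigeon : #(univ : Finset ι) <
      #(univ.sigma fun i ↦ {a | y i + v a ∈ s • Set.range v} : Finset ((_ : Fin b) × ι)) := by
    rw [card_univ, card_sigma]
    refine hb.trans_le ?_
    simpa using card_nsmul_le_sum univ _ (D + 1) fun i _ ↦ h _ (hy (mem_univ i))
  obtain ⟨⟨i, a⟩, hi, ⟨i', a'⟩, hi', hne, rfl : a = a'⟩ :=
    exists_ne_map_eq_of_card_lt_of_maps_to hpigeon (f := Sigma.snd) fun _ _ ↦ mem_univ _
  have hii : i' ≠ i := by rintro rfl; exact hne rfl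
  simp only [mem_sigma, mem_filter_univ, mem_univ, true_and] at hi hi'
  set J := (univ.erase i).erase i'
  have hi'mem : i' ∈ univ.erase i := mem_erase.2 ⟨hii, mem_univ i'⟩
  have hJ : #J + 2 = b := by
    have hJ : #J + 1 = #(univ.erase i) := card_erase_add_one hi'mem
    have hi : #(univ.erase i) + 1 = b := (card_erase_add_one (mem_univ i)).trans (card_fin b)
    omega
  refine ⟨(s + s) + #J * (s + 1), by nlinarith, ?_⟩
  have hx : ∑ i, y i = (y i + v a) + (y i' + v a) + ∑ l ∈ J, y l := by
    rw [← add_sum_erase _ y (mem_univ i), ← add_sum_erase _ y hi'mem]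
    have := ZModModule.add_self (v a)
    grind
  rw [hx, add_nsmul, add_nsmul, mul_nsmul', ← sum_const]
  exact Set.add_mem_add (Set.add_mem_add hi hi')
    (Set.finsetSum_mem_finsetSum _ _ _ fun l _ ↦ hy (mem_univ l))

theorem card_lt_pow_of_span_range_eq_top [Fintype M] (hι : 2 ≤ Fintype.card ι)
    (hv : Submodule.span (ZMod 2) (Set.range v) = ⊤)
    (h : ∀ (e : Fin (s + 1) → ι) (Bad : Finset ι), #Bad ≤ D →
      ∃ f : Fin (s + 1) → ι, ∑ c, v (f c) = ∑ c, v (e c) ∧ ∃ c, f c ∉ Bad)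
    (hb : Fintype.card ι < b * (D + 1)) :
    Fintype.card M < Fintype.card ι ^ (b * (s + 1)) := by
  classical
  refine (card_le_geomSum_of_forall_mem_nsmul_range (v := v) fun x ↦ ?_).trans_lt
    (Nat.geomSum_lt hι fun R hR ↦ mem_range.1 hR)
  have hex : ∃ R : ℕ, x ∈ R • Set.range v :=
    exists_mem_nsmul_range_of_mem_span (hv ▸ Submodule.mem_top)
  refine ⟨Nat.find hex, ?_, Nat.find_spec hex⟩
  by_contra! hle
  obtain ⟨R', hR'⟩ := Nat.exists_eq_add_of_le hle
  obtain ⟨y, hy, z, hz, hyz⟩ := Set.mem_add.1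
    (add_nsmul (Set.range v) _ R' ▸ hR' ▸ Nat.find_spec hex)
  obtain ⟨R, hR, hyR⟩ := exists_lt_mem_nsmul_range
    (fun _ hy ↦ lt_card_add_mem_nsmul_range h hy) hb hy
  refine Nat.find_min hex (m := R + R') (by omega) ?_
  rw [← hyz, add_nsmul]
  exact Set.add_mem_add hyR hz

end Counting

section Parameters

lemma exp_half_le_one_add {x : ℝ} (hx₀ : 0 ≤ x) (hx₁ : x ≤ 1) : Real.exp (x / 2) ≤ 1 + x :=
  calc Real.exp (x / 2) ≤ 1 / (1 - x / 2) :=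
        Real.exp_bound_div_one_sub_of_interval (by linarith) (by linarith)
    _ ≤ 1 + x := by
        rw [div_le_iff₀ (by linarith)]
        nlinarith

lemma exp_le_one_add_div_pow {φ : ℝ} {j : ℕ} (hφ : 0 ≤ φ) (hj : φ ≤ 8 * j) :
    Real.exp (φ / 16) ≤ (1 + φ / (8 * j)) ^ j := by
  obtain rfl | hj₀ := j.eq_zero_or_pos
  · rw [pow_zero, Real.exp_le_one_iff]
    rw [Nat.cast_zero] at hj
    linarith
  calc Real.exp (φ / 16) = Real.exp (φ / (8 * j) / 2) ^ j := by
        rw [← Real.exp_nat_mul]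
        congr 1
        field_simp
        ring
    _ ≤ (1 + φ / (8 * j)) ^ j := by
        gcongr
        exact exp_half_le_one_add (by positivity) (div_le_one_of_le₀ hj (by positivity))

lemma exists_nat_mul_mem_Icc {x : ℝ} (hx₀ : 0 < x) (hx : x ≤ 1 / 8) :
    ∃ m : ℕ, m * x ∈ Set.Icc (1 / 16) (1 / 8) := by
  have hy : 1 ≤ 1 / 8 / x := by rwa [le_div_iff₀ hx₀, one_mul]
  refine ⟨⌊1 / 8 / x⌋₊, ?_, (le_div_iff₀ hx₀).1 (Nat.floor_le (by positivity))⟩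
  rw [← div_le_iff₀ hx₀]
  calc 1 / 16 / x = 1 / 8 / x / 2 := by ring
    _ ≤ ⌊1 / 8 / x⌋₊ := (Nat.div_two_lt_floor hy).le

lemma mul_pow_le_self {q : ℕ} {δ : ℝ} (hq : 0 < q) (hδ : 0 ≤ δ) (h : 2 * q * δ ≤ 1) :
    (q * δ) ^ q ≤ δ := by
  obtain ⟨s, rfl⟩ := Nat.exists_eq_succ_of_ne_zero hq.ne'
  have hs : ((s + 1 : ℕ) : ℝ) ≤ 2 ^ s := by exact_mod_cast Nat.succ_le_of_lt s.lt_two_pow_self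
  calc (((s + 1 : ℕ) : ℝ) * δ) ^ (s + 1)
      = (((s + 1 : ℕ) : ℝ) * δ) ^ s * ((s + 1 : ℕ) : ℝ) * δ := by ring
    _ ≤ (1 / 2) ^ s * 2 ^ s * δ := by
        gcongr
        linarith
    _ = δ := by rw [← mul_pow]; norm_num

lemma log_choose_le (n g : ℕ) : Real.log (n.choose g) ≤ g * Real.log n := by
  obtain h | h := (n.choose g).eq_zero_or_pos
  · rw [h, Nat.cast_zero, Real.log_zero]
    exact mul_nonneg g.cast_nonneg (Real.log_natCast_nonneg n)
  · rw [← Real.log_pow]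
    exact Real.log_le_log (by positivity) (by exact_mod_cast Nat.choose_le_pow n g)

lemma one_le_log_natCast {n : ℕ} (hn : 3 ≤ n) : 1 ≤ Real.log n := by
  rw [Real.le_log_iff_exp_le (by positivity)]
  have : (3 : ℝ) ≤ n := Nat.ofNat_le_cast.2 hn
  linarith [Real.exp_one_lt_three]

-- The factor `64 log n` is the expansion of the Kikuchi graph: it makes the right-hand side of the
-- last inequality at least `exp (4 log n) = n ^ 4`.
lemma exists_walk_length {n q g : ℕ} (hn : 3 ≤ n) (hqg : 0 < q * g) (hg : 2 * q * g ≤ n) :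
    ∃ j : ℕ, j ≤ 2049 * (q * g : ℝ) * Real.log n ^ 2 ∧
      32 * (64 * Real.log n) * Real.log (n.choose g ^ q) < j ∧
      8 * Real.log (n.choose g ^ q) < (1 + 64 * Real.log n / (8 * j)) ^ j := by
  have hL : 1 ≤ Real.log n := one_le_log_natCast hn
  have hqg₁ : (1 : ℝ) ≤ q * g := by exact_mod_cast hqg
  have hvertex : Real.log (n.choose g ^ q) ≤ q * g * Real.log n := by
    rw [Real.log_pow, mul_assoc]
    exact mul_le_mul_of_nonneg_left (log_choose_le n g) q.cast_nonneg
  set L := Real.log n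
  set X := 2048 * (q * g : ℝ) * L ^ 2
  have hone : 1 ≤ q * g * L ^ 2 := one_le_mul_of_one_le_of_one_le hqg₁ (one_le_pow₀ hL)
  have hXj : X < (⌊X⌋₊ + 1 : ℕ) := by exact_mod_cast Nat.lt_floor_add_one X
  refine ⟨⌊X⌋₊ + 1, ?_, ?_, ?_⟩
  · have := Nat.floor_le (by positivity : 0 ≤ X)
    push_cast
    linarith
  · refine lt_of_le_of_lt ?_ hXj
    calc 32 * (64 * L) * Real.log (n.choose g ^ q) ≤ 32 * (64 * L) * (q * g * L) := by gcongr
      _ = X := by ring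
  · refine lt_of_lt_of_le ?_ (exp_le_one_add_div_pow (by positivity) ?_)
    · have hn' : (3 : ℝ) ≤ n := Nat.ofNat_le_cast.2 hn
      have hn₀ : (0 : ℝ) < n := by linarith
      have hg' : (2 * q * g : ℝ) ≤ n := by exact_mod_cast hg
      have hLn : L ≤ n := by linarith [Real.log_le_sub_one_of_pos hn₀]
      calc 8 * Real.log (n.choose g ^ q) ≤ 4 * (2 * q * g) * L := by linarith
        _ ≤ 4 * n * n := by gcongr
        _ < n ^ 4 := by nlinarith [mul_pos (pow_pos hn₀ 2) (by nlinarith : (0 : ℝ) < n ^ 2 - 4)]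
        _ = Real.exp (64 * L / 16) := by
            rw [show 64 * L / 16 = (4 : ℕ) * L by push_cast; ring, Real.exp_nat_mul,
              Real.exp_log hn₀]
    · nlinarith

end Parameters

section DimensionBound

lemma rpow_one_sub_inv_div_pow {n : ℝ} (hn : 0 < n) {q : ℕ} (hq : 0 < q) :
    (n ^ (1 - 1 / q : ℝ) / n) ^ q = 1 / n := by
  have hq' : (q : ℝ) ≠ 0 := Nat.cast_ne_zero.2 hq.ne'
  rw [← Real.rpow_sub_one hn.ne', ← Real.rpow_mul_natCast hn.le, one_div n, ← Real.rpow_neg_one]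
  congr 1
  field_simp
  ring

lemma mul_lt_floor_add_one_mul {x y : ℝ} (hx : 0 ≤ x) (hy : 0 ≤ y) :
    x * y < ((⌊x⌋₊ + 1) * (⌊y⌋₊ + 1) : ℕ) := by
  push_cast
  exact mul_lt_mul'' (Nat.lt_floor_add_one x) (Nat.lt_floor_add_one y) hx hy

lemma floor_two_div_add_one_le {δ : ℝ} (hδ : 0 < δ) (hδ₁ : δ ≤ 1) :
    (⌊2 / δ⌋₊ + 1 : ℝ) ≤ 3 / δ := by
  have := Nat.floor_le (by positivity : 0 ≤ 2 / δ)
  have : 1 ≤ 1 / δ := by rwa [le_div_iff₀ hδ, one_mul]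
  have : 3 / δ = 2 / δ + 1 / δ := by ring
  linarith

lemma log_natCast_le_logb_two (n : ℕ) : Real.log n ≤ Real.logb 2 n := by
  rw [Real.logb, le_div_iff₀ (Real.log_pos one_lt_two)]
  exact mul_le_of_le_one_right (Real.log_natCast_nonneg n) (by linarith [Real.log_two_lt_d9])

lemma exists_kikuchi_set_size {n q : ℕ} {δ : ℝ} (hn : 0 < n) (hq : 0 < q) (hδ : 0 < δ)
    (hqδ : 2 * q * δ ≤ 1) (hlarge : 32 * ((n : ℝ) ^ (1 - 1 / q : ℝ) / δ) ≤ n) :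
    ∃ g : ℕ, 0 < g ∧ (q * g : ℝ) ≤ 2 * ((n : ℝ) ^ (1 - 1 / q : ℝ) / δ) ∧ 2 * q * g ≤ n ∧
      1 / (n * δ) ≤ (2 * g / n : ℝ) ^ q ∧ (2 * g / n : ℝ) ^ q ≤ 1 / 8 := by
  have hn' : (1 : ℝ) ≤ n := Nat.one_le_cast.2 hn
  have hq' : (1 : ℝ) ≤ q := Nat.one_le_cast.2 hq
  set B := (n : ℝ) ^ (1 - 1 / q : ℝ)
  have hB₁ : 1 ≤ B := Real.one_le_rpow hn' (sub_nonneg.2 (div_le_one_of_le₀ hq' (by positivity)))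
  set A := B / (q * δ) with hA
  have hA₁ : 1 ≤ A := by
    rw [hA, one_le_div (by positivity)]
    linarith
  have hqA : q * A = B / δ := by
    rw [hA]
    field_simp
  have hgA : (⌈A⌉₊ : ℝ) ≤ 2 * A := by linarith [Nat.ceil_lt_add_one (zero_le_one.trans hA₁)]
  have hqg : q * (⌈A⌉₊ : ℝ) ≤ 2 * (B / δ) := by
    rw [← hqA]
    nlinarith
  refine ⟨⌈A⌉₊, Nat.ceil_pos.2 (by linarith), hqg, ?_, ?_, ?_⟩
  · have : (2 * q * ⌈A⌉₊ : ℝ) ≤ n := by nlinarith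
    exact_mod_cast this
  · calc 1 / (n * δ) = 1 / n / δ := by rw [div_div]
      _ ≤ 1 / n / (q * δ) ^ q := by
          gcongr
          exact mul_pow_le_self hq hδ.le hqδ
      _ = (A / n) ^ q := by
          rw [← rpow_one_sub_inv_div_pow (by linarith) hq, ← div_pow, hA, div_right_comm]
      _ ≤ (2 * ⌈A⌉₊ / n) ^ q := by
          gcongr
          linarith [Nat.le_ceil A]
  · have hbase : (2 * ⌈A⌉₊ / n : ℝ) ≤ 1 / 8 := by
      rw [div_le_iff₀ (by linarith)]
      nlinarith [Nat.le_ceil A]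
    exact (pow_le_of_le_one (by positivity) (by linarith) hq.ne').trans hbase

lemma finrank_le_mul_logb_of_card_le_pow {M : Type*} [AddCommGroup M] [Module (ZMod 2) M]
    [Fintype M] {n L : ℕ} (hn : 0 < n) (h : Fintype.card M ≤ n ^ L) :
    (Module.finrank (ZMod 2) M : ℝ) ≤ L * Real.logb 2 n := by
  rw [Module.card_eq_pow_finrank (K := ZMod 2), ZMod.card] at h
  rw [← Real.logb_pow, Real.le_logb_iff_rpow_le one_lt_two (by positivity), Real.rpow_natCast]
  exact_mod_cast h

variable {ι M : Type*} [Fintype ι] [AddCommGroup M] [Module (ZMod 2) M] {v : ι → M}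
  {H : ι → Finset (Finset ι)} {q : ℕ} {δ : ℝ}

theorem card_lt_pow_of_isRecoveryMatching [Fintype M] {g m D b j : ℕ} {φ : ℝ}
    (hv : Submodule.span (ZMod 2) (Set.range v) = ⊤)
    (hH : ∀ i, IsRecoveryMatching (2 * q + 1) v (v i) (H i)) (hm : ∀ i, m + D ≤ #(H i))
    (hι : 2 ≤ Fintype.card ι) (hb : Fintype.card ι < b * (D + 1))
    (hq : 0 < q) (hg : 2 * q * g ≤ Fintype.card ι)
    (hlo : 1 / 16 ≤ m * (2 * g / Fintype.card ι : ℝ) ^ q)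
    (hhi : m * (2 * g / Fintype.card ι : ℝ) ^ q ≤ 1 / 8) (hφ : 0 ≤ φ)
    (hdense : 32 * φ * Real.log ((Fintype.card ι).choose g ^ q) < j)
    (hV : 8 * Real.log ((Fintype.card ι).choose g ^ q) < (1 + φ / (8 * j)) ^ j) :
    Fintype.card M < Fintype.card ι ^ (b * (4 * j)) := by
  have hj : 0 < j := by
    have hlog : 0 ≤ Real.log ((Fintype.card ι).choose g ^ q) := by
      exact_mod_cast Real.log_natCast_nonneg ((Fintype.card ι).choose g ^ q)
    exact Nat.cast_pos.1 (lt_of_le_of_lt (by positivity) hdense)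
  obtain ⟨s, hs⟩ := Nat.exists_eq_add_of_le' (by omega : 1 ≤ 4 * j)
  rw [hs]
  exact card_lt_pow_of_span_range_eq_top hι hv (fun e Bad hBad ↦
    exists_sum_eq_of_isRecoveryMatching hH hm hq hg hlo hhi (by rw [Fintype.card_fin, hs]) hφ
      hdense hV e hBad) hb

lemma exists_card_lt_pow_of_isRecoveryMatching [Fintype M]
    (hv : Submodule.span (ZMod 2) (Set.range v) = ⊤)
    (hH : ∀ i, IsRecoveryMatching (2 * q + 1) v (v i) (H i))
    (hδH : ∀ i, δ * Fintype.card ι ≤ #(H i)) (hδ : 0 < δ) (hq : 0 < q) (hqδ : 2 * q * δ ≤ 1)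
    (hn : 3 ≤ Fintype.card ι)
    (hlarge : 32 * ((Fintype.card ι : ℝ) ^ (1 - 1 / q : ℝ) / δ) ≤ Fintype.card ι) :
    ∃ L : ℕ, Fintype.card M < Fintype.card ι ^ L ∧
      L ≤ 50000 * δ⁻¹ ^ 2 * (Fintype.card ι : ℝ) ^ (1 - 1 / q : ℝ) *
        Real.log (Fintype.card ι) ^ 2 := by
  set n := Fintype.card ι
  set B := (n : ℝ) ^ (1 - 1 / q : ℝ)
  have hn₀ : (0 : ℝ) < n := Nat.cast_pos.2 (by omega)
  have hδ₁ : δ ≤ 1 := by nlinarith [Nat.one_le_cast (α := ℝ).2 hq]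
  obtain ⟨g, hg, hqgB, hqgn, hlo, hhi⟩ := exists_kikuchi_set_size (by omega) hq hδ hqδ hlarge
  obtain ⟨m, hmlo, hmhi⟩ := exists_nat_mul_mem_Icc (lt_of_lt_of_le (by positivity) hlo) hhi
  obtain ⟨j, hjle, hdense, hV⟩ := exists_walk_length hn (Nat.mul_pos hq hg) hqgn
  have hm : (m : ℝ) ≤ δ * n / 8 := by
    have := (mul_le_mul_of_nonneg_left hlo m.cast_nonneg).trans hmhi
    rw [mul_one_div, div_le_iff₀ (by positivity)] at this
    linarith
  have hmD (i : ι) : m + ⌊δ * n / 2⌋₊ ≤ #(H i) := by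
    have := Nat.floor_le (by positivity : 0 ≤ δ * n / 2)
    have : (m + ⌊δ * n / 2⌋₊ : ℝ) ≤ #(H i) := by linarith [hδH i, mul_pos hδ hn₀]
    exact_mod_cast this
  have hb : n < (⌊2 / δ⌋₊ + 1) * (⌊δ * n / 2⌋₊ + 1) := by
    have : (n : ℝ) < ((⌊2 / δ⌋₊ + 1) * (⌊δ * n / 2⌋₊ + 1) : ℕ) := by
      refine lt_of_eq_of_lt ?_ (mul_lt_floor_add_one_mul (by positivity) (by positivity))
      field_simp
    exact_mod_cast this
  refine ⟨_, card_lt_pow_of_isRecoveryMatching hv hH hmD (by omega) hb hq hqgn hmlo hmhi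
    (by positivity) hdense hV, ?_⟩
  have hblocks : (⌊2 / δ⌋₊ + 1 : ℝ) ≤ 3 / δ := floor_two_div_add_one_le hδ hδ₁
  calc (((⌊2 / δ⌋₊ + 1) * (4 * j) : ℕ) : ℝ)
      ≤ 3 / δ * (4 * (2049 * (2 * (B / δ)) * Real.log n ^ 2)) := by
        push_cast
        gcongr
        exact hjle.trans (by gcongr)
    _ = 49176 * δ⁻¹ ^ 2 * B * Real.log n ^ 2 := by ring
    _ ≤ 50000 * δ⁻¹ ^ 2 * B * Real.log n ^ 2 := by gcongr; norm_num

theorem finrank_le_of_isRecoveryMatching (hv : Submodule.span (ZMod 2) (Set.range v) = ⊤)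
    (hH : ∀ i, IsRecoveryMatching (2 * q + 1) v (v i) (H i))
    (hδH : ∀ i, δ * Fintype.card ι ≤ #(H i)) (hδ : 0 < δ) (hq : 0 < q)
    (hn : 3 ≤ Fintype.card ι) :
    (Module.finrank (ZMod 2) M : ℝ) ≤ 50000 * δ⁻¹ ^ 2 *
      (Fintype.card ι : ℝ) ^ (1 - 1 / q : ℝ) * Real.logb 2 (Fintype.card ι) ^ 3 := by
  set n := Fintype.card ι
  set B := (n : ℝ) ^ (1 - 1 / q : ℝ)
  have : Nonempty ι := Fintype.card_pos_iff.1 (by omega)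
  have hqδ : 2 * q * δ ≤ 1 := by
    have := (hH (Classical.arbitrary ι)).mul_le_one (hδH _)
    push_cast at this
    linarith
  have hδ₁ : 1 ≤ δ⁻¹ := (one_le_inv₀ hδ).2 (by nlinarith [Nat.one_le_cast (α := ℝ).2 hq])
  have hlog : 1 ≤ Real.log n := one_le_log_natCast hn
  have hlogb : Real.log n ≤ Real.logb 2 n := log_natCast_le_logb_two n
  have hlogb₀ : 0 ≤ Real.logb 2 n := by linarith
  obtain hsmall | hlarge := lt_or_ge (n : ℝ) (32 * (B / δ))
  · have hfinrank : (Module.finrank (ZMod 2) M : ℝ) ≤ n := by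
      rw [← finrank_top, ← hv]
      exact_mod_cast finrank_range_le_card v
    calc (Module.finrank (ZMod 2) M : ℝ) ≤ 32 * (δ⁻¹ ^ 1 * B * 1 ^ 3) := by
          rw [div_eq_inv_mul] at hsmall
          linarith
      _ ≤ 50000 * (δ⁻¹ ^ 2 * B * Real.logb 2 n ^ 3) := by
          gcongr <;> linarith
      _ = 50000 * δ⁻¹ ^ 2 * B * Real.logb 2 n ^ 3 := by ring
  · have : Module.Finite (ZMod 2) M := ⟨hv ▸ Submodule.fg_span (Set.finite_range v)⟩
    have : Finite M := Module.finite_of_finite (ZMod 2)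
    have : Fintype M := Fintype.ofFinite M
    obtain ⟨L, hcard, hL⟩ :=
      exists_card_lt_pow_of_isRecoveryMatching hv hH hδH hδ hq hqδ hn hlarge
    calc (Module.finrank (ZMod 2) M : ℝ) ≤ L * Real.logb 2 n :=
          finrank_le_mul_logb_of_card_le_pow (by omega) hcard.le
      _ ≤ 50000 * δ⁻¹ ^ 2 * B * Real.logb 2 n ^ 2 * Real.logb 2 n := by
          gcongr
          exact hL.trans (by gcongr)
      _ = 50000 * δ⁻¹ ^ 2 * B * Real.logb 2 n ^ 3 := by ring

end DimensionBound

theorem stmt3_general {r n k : ℕ} {δ : ℝ} (hr : Odd r) (hr₃ : 3 ≤ r) (hn : 3 ≤ n) (hδ : 0 < δ)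
    {v : Fin n → Fin k → ZMod 2} {H : Fin n → Finset (Finset (Fin n))}
    (h : IsBinaryLCC r δ v H) :
    (k : ℝ) ≤ 50000 * δ⁻¹ ^ 2 * (n : ℝ) ^ ((1 : ℝ) - 2 / ((r : ℝ) - 1)) * Real.logb 2 n ^ 3 := by
  obtain ⟨q, rfl⟩ := hr
  obtain ⟨hspan, hcard, hdisj, hδH, hsum⟩ := h
  have hH (i : Fin n) : IsRecoveryMatching (2 * q + 1) v (v i) (H i) :=
    ⟨hcard i _, fun e he e' he' hne ↦ hdisj i e he e' he' hne, fun he ↦ (hsum i _ he).symm⟩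
  have hexp : (1 : ℝ) - 2 / (((2 * q + 1 : ℕ) : ℝ) - 1) = 1 - 1 / q := by
    push_cast
    rw [add_sub_cancel_right, div_mul_cancel_left₀ two_ne_zero, one_div]
  have hdim := finrank_le_of_isRecoveryMatching hspan hH (by rwa [Fintype.card_fin]) hδ (by omega)
    (by rwa [Fintype.card_fin])
  rwa [Module.finrank_fin_fun, Fintype.card_fin, ← hexp] at hdim

/-- There is an absolute constant `C > 0` such that for every odd `r ≥ 5`,
any binary linear `(r,δ)`-LCC of block length `n ≥ 3` and dimension `k ≥ 1`
satisfies `k ≤ C · δ⁻² · n^{1 - 2/(r-1)} · (log₂ n)³`. -/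
theorem stmt3 :
    ∃ C : ℝ, 0 < C ∧
      ∀ (r n k : ℕ) (δ : ℝ), Odd r → 5 ≤ r → 3 ≤ n → 1 ≤ k → 0 < δ → δ < 1 →
        (∃ (v : Fin n → Fin k → ZMod 2) (H : Fin n → Finset (Finset (Fin n))),
          IsBinaryLCC r δ v H) →
        (k : ℝ) ≤ C * δ⁻¹ ^ 2 * (n : ℝ) ^ ((1 : ℝ) - 2 / ((r : ℝ) - 1)) *
          (Real.logb 2 n) ^ 3 :=
  ⟨50000, by norm_num, fun _ _ _ _ hr hr₅ hn _ hδ _ ⟨_, _, h⟩ ↦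
    stmt3_general hr (by omega) hn hδ h⟩
end

section
/- There exists an absolute constant C > 0 such that the following holds. Let r ≥ 3 be an integer, δ ∈ (0,1), n ≥ 3, and let K be a natural number with the property that for every m ≥ K and every family G_1,…,G_m of (r−1)-uniform matchings over [n] with |G_i| ≥ (δ/2)·n for all i ∈ [m], there exists a rainbow even cover of G_1,…,G_m. Then every binary linear (r,δ)-LCC of block length n and dimension k satisfies k ≤ C · δ^{-1} · log₂ n · K. -/
/-- A rainbow even cover of hypergraphs `G 1, …, G m` over `[n]`: a nonempty
set `S` of indices together with a choice of one hyperedge `E i ∈ G i` for each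
`i ∈ S` whose symmetric difference is empty, i.e. every point of `[n]` lies in
an even number of the chosen hyperedges. -/
def HasRainbowEvenCover {n m : ℕ} (G : Fin m → Finset (Finset (Fin n))) : Prop :=
  ∃ S : Finset (Fin m), S.Nonempty ∧ ∃ E : Fin m → Finset (Fin n),
    (∀ i ∈ S, E i ∈ G i) ∧ ∀ x : Fin n, Even ((S.filter fun i => x ∈ E i).card)

/-!
Call `u` a shortener of a sum `x` of `K` rows if `x + v u` is a sum of `K - 1` rows. Every such
`x = v j₁ + ⋯ + v j_K` has at least `δn/2` shorteners: otherwise more than `δn/2` edges of each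
`H jᵢ` leave the set of shorteners, and deleting from each of them a point which is not a shortener
gives `K` matchings of `(r-1)`-sets. Along a rainbow even cover of these the decoding equations add
up to `∑ v jᵢ = ∑ v uᵢ` with `uᵢ` the deleted points, which makes every `uᵢ` a shortener after all.

If a vector is a sum of at least `mK` rows with `m > 2/δ`, two of its `m` disjoint blocks of `K`
rows therefore have a common shortener, and adding it to both saves two rows. So every vector is a
sum of at most `mK` rows, and there are at most `(n+1)^(mK)` such sums.
-/

open Finset

section UniformMatching

variable {ι : Type*} {r : ℕ} {M : Finset (Finset ι)}

/-- An `r`-uniform matching: a family of pairwise disjoint `r`-element sets. -/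
structure IsUniformMatching (r : ℕ) (M : Finset (Finset ι)) : Prop where
  card_eq : ∀ e ∈ M, #e = r
  pairwiseDisjoint : (M : Set (Finset ι)).PairwiseDisjoint id

namespace IsUniformMatching

theorem mono {N : Finset (Finset ι)} (hM : IsUniformMatching r M) (hN : N ⊆ M) :
    IsUniformMatching r N :=
  ⟨fun e he => hM.card_eq e (hN he), hM.pairwiseDisjoint.subset (coe_subset.2 hN)⟩

theorem card_filter_subset_le [DecidableEq ι] (hM : IsUniformMatching r M) (hr : 0 < r)
    (D : Finset ι) : #{e ∈ M | e ⊆ D} ≤ #D := by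
  have hF := hM.mono (filter_subset (· ⊆ D) M)
  calc #{e ∈ M | e ⊆ D}
      ≤ #({e ∈ M | e ⊆ D}.biUnion id) :=
        card_le_card_biUnion hF.pairwiseDisjoint fun e he => card_pos.1 (by
          rwa [id, hF.card_eq e he])
    _ ≤ #D := card_le_card (biUnion_subset.2 fun e he => (mem_filter.1 he).2)

theorem image_of_subset [DecidableEq ι] {q : ℕ} {f : Finset ι → Finset ι}
    (hM : IsUniformMatching r M) (hf : ∀ e ∈ M, f e ⊆ e) (hq : ∀ e ∈ M, #(f e) = q) :
    IsUniformMatching q (M.image f) where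
  card_eq := forall_mem_image.2 hq
  pairwiseDisjoint := by
    rw [coe_image]
    rintro _ ⟨e, he, rfl⟩ _ ⟨e', he', rfl⟩ hne
    exact (hM.pairwiseDisjoint he he' fun h => hne (h ▸ rfl)).mono (hf e he) (hf e' he')

theorem injOn_of_subset {q : ℕ} {f : Finset ι → Finset ι} (hM : IsUniformMatching r M)
    (hf : ∀ e ∈ M, f e ⊆ e) (hq : ∀ e ∈ M, #(f e) = q) (hq0 : 0 < q) : Set.InjOn f M := by
  intro e he e' he' heq
  by_contra hne
  have hdisj : Disjoint (f e) (f e') :=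
    (hM.pairwiseDisjoint he he' hne).mono (hf e he) (hf e' he')
  rw [← heq, disjoint_self_iff_empty, ← card_eq_zero, hq e he] at hdisj
  exact hq0.ne' hdisj

theorem exists_erase_notMem [DecidableEq ι] (hM : IsUniformMatching r M) (hr : 2 ≤ r)
    (D : Finset ι) :
    ∃ G, IsUniformMatching (r - 1) G ∧ #M ≤ #G + #D ∧
      ∀ e ∈ G, ∃ f ∈ M, ∃ u ∈ f, u ∉ D ∧ f.erase u = e := by
  have hF := hM.mono (filter_subset (¬ · ⊆ D) M)
  have hout : ∀ f ∈ {f ∈ M | ¬ f ⊆ D}, ∃ e, ∃ u ∈ f, u ∉ D ∧ f.erase u = e := fun f hf =>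
    let ⟨u, huf, huD⟩ := not_subset.1 (mem_filter.1 hf).2
    ⟨_, u, huf, huD, rfl⟩
  choose! T hT using hout
  have hsub : ∀ f ∈ {f ∈ M | ¬ f ⊆ D}, T f ⊆ f := by
    intro f hf
    obtain ⟨u, -, -, hu⟩ := hT f hf
    exact hu ▸ erase_subset u f
  have hcard : ∀ f ∈ {f ∈ M | ¬ f ⊆ D}, #(T f) = r - 1 := by
    intro f hf
    obtain ⟨u, huf, -, hu⟩ := hT f hf
    rw [← hu, card_erase_of_mem huf, hF.card_eq f hf]
  refine ⟨_, hF.image_of_subset hsub hcard, ?_,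
    forall_mem_image.2 fun f hf => ⟨f, (mem_filter.1 hf).1, hT f hf⟩⟩
  have hinside := hM.card_filter_subset_le (by omega) D
  have hsplit := card_filter_add_card_filter_not (s := M) (· ⊆ D)
  rw [card_image_of_injOn (hF.injOn_of_subset hsub hcard (by omega))]
  omega

end IsUniformMatching

end UniformMatching

theorem exists_ne_not_disjoint_of_card_lt_sum {κ ι : Type*} [Fintype κ] [Fintype ι]
    {D : κ → Finset ι} (h : Fintype.card ι < ∑ a, #(D a)) :
    ∃ a b, a ≠ b ∧ ¬ Disjoint (D a) (D b) := by
  classical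
  by_contra! hdisj
  refine h.not_ge ?_
  rw [← card_biUnion fun a _ b _ hab => hdisj a b hab]
  exact card_le_univ _

/-- Every `K` many `q`-uniform matchings over `[n]` of size at least `c` have a rainbow even
cover. -/
def ForcesRainbowEvenCover (n q K : ℕ) (c : ℝ) : Prop :=
  ∀ G : Fin K → Finset (Finset (Fin n)), (∀ i, IsUniformMatching q (G i)) →
    (∀ i, c ≤ #(G i)) → HasRainbowEvenCover G

theorem ForcesRainbowEvenCover.pos {n q K : ℕ} {c : ℝ} (hK : ForcesRainbowEvenCover n q K c) :
    0 < K := by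
  refine Nat.pos_of_ne_zero ?_
  rintro rfl
  obtain ⟨-, ⟨i, -⟩, -⟩ := hK (fun _ => ∅) (fun i => i.elim0) (fun i => i.elim0)
  exact i.elim0

section SumOfLength

variable {ι κ V : Type*} [AddCommMonoid V] {v : ι → V} {s t : ℕ} {x y : V}

/-- `x` is a sum of exactly `t` of the vectors `v i`, with repetitions allowed: replacing some of
the summands of a shortest representation may create repetitions. -/
def IsSumOfLength (v : ι → V) (t : ℕ) (x : V) : Prop :=
  ∃ f : Fin t → ι, ∑ i, v (f i) = x

theorem isSumOfLength_sum (v : ι → V) (A : Finset κ) (f : κ → ι) :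
    IsSumOfLength v #A (∑ i ∈ A, v (f i)) :=
  ⟨fun j => f (A.equivFin.symm j), by
    rw [Equiv.sum_comp A.equivFin.symm fun j : A => v (f j), sum_coe_sort A fun j => v (f j)]⟩

namespace IsSumOfLength

theorem zero (v : ι → V) : IsSumOfLength v 0 0 :=
  ⟨Fin.elim0, sum_empty⟩

theorem add (hx : IsSumOfLength v s x) (hy : IsSumOfLength v t y) :
    IsSumOfLength v (s + t) (x + y) := by
  obtain ⟨f, rfl⟩ := hx
  obtain ⟨g, rfl⟩ := hy
  exact ⟨Fin.append f g, by simp [Fin.sum_univ_add]⟩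

theorem sum {z : κ → V} {A : Finset κ} (hz : ∀ a ∈ A, IsSumOfLength v t (z a)) :
    IsSumOfLength v (#A * t) (∑ a ∈ A, z a) := by
  classical
  induction A using Finset.induction_on with
  | empty => simpa using zero v
  | insert a A ha ih =>
    rw [sum_insert ha, card_insert_of_notMem ha, add_one_mul, add_comm (#A * t)]
    exact (hz a (mem_insert_self a A)).add (ih fun b hb => hz b (mem_insert_of_mem hb))

theorem exists_blocks {m q : ℕ} (hx : IsSumOfLength v (m * t + q) x) :
    ∃ (z : Fin m → V) (y : V),
      (∀ a, IsSumOfLength v t (z a)) ∧ IsSumOfLength v q y ∧ ∑ a, z a + y = x := by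
  obtain ⟨f, rfl⟩ := hx
  refine ⟨fun a => ∑ b, v (f (Fin.castAdd q (finProdFinEquiv (a, b)))), _,
    fun a => ⟨_, rfl⟩, ⟨fun i => f (Fin.natAdd (m * t) i), rfl⟩, ?_⟩
  rw [Fin.sum_univ_add, ← Equiv.sum_comp finProdFinEquiv, Fintype.sum_prod_type]

end IsSumOfLength

theorem natCard_le_of_isSumOfLength [Fintype ι] {W : Set V}
    (hW : ∀ w ∈ W, ∃ t ≤ s, IsSumOfLength v t w) : Nat.card W ≤ (Fintype.card ι + 1) ^ s := by
  -- Padding with zero vectors turns sums of at most `s` vectors into sums of exactly `s`.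
  let padded : (Fin s → Option ι) → V := fun g => ∑ i, (g i).elim 0 v
  have hsub : W ⊆ Set.range padded := by
    intro w hw
    obtain ⟨t, ht, f, rfl⟩ := hW w hw
    obtain ⟨d, rfl⟩ := Nat.exists_eq_add_of_le ht
    exact ⟨Fin.append (fun i => some (f i)) fun _ => none, by simp [padded, Fin.sum_univ_add]⟩
  calc Nat.card W ≤ Nat.card (Set.range padded) := Nat.card_mono (Set.finite_range padded) hsub
    _ ≤ Nat.card (Fin s → Option ι) := Finite.card_range_le padded
    _ = (Fintype.card ι + 1) ^ s := by simp

/-- `u` is a shortener of `x`, viewed as a sum of `t ≥ 1` vectors of the family, if `x + v u` is a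
sum of only `t - 1` of them. -/
def IsShortener (v : ι → V) (t : ℕ) (x : V) (u : ι) : Prop :=
  IsSumOfLength v (t - 1) (x + v u)

end SumOfLength

section CharTwo

variable {ι κ V : Type*} [AddCommGroup V] [Module (ZMod 2) V] {v : ι → V}

theorem sum_sum_eq_zero_of_even [DecidableEq ι] {S : Finset κ} {E : κ → Finset ι}
    (hE : ∀ a, Even #{i ∈ S | a ∈ E i}) (v : ι → V) : ∑ i ∈ S, ∑ a ∈ E i, v a = 0 := by
  rw [sum_comm' (t' := S.biUnion E) (s' := fun a => {i ∈ S | a ∈ E i})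
    (by simp only [mem_filter, mem_biUnion]; tauto)]
  refine sum_eq_zero fun a _ => ?_
  obtain ⟨c, hc⟩ := hE a
  rw [sum_const, hc, add_nsmul, ZModModule.add_self]

theorem isSumOfLength_sum_add_of_sum_eq_sum [Fintype κ] {f g : κ → ι} {S : Finset κ}
    (hS : ∑ i ∈ S, v (f i) = ∑ i ∈ S, v (g i)) {j : κ} (hj : j ∈ S) :
    IsSumOfLength v (Fintype.card κ - 1) (∑ i, v (f i) + v (g j)) := by
  classical
  let h : κ → ι := S.piecewise g f
  have hfh : ∑ i, v (f i) = ∑ i, v (h i) := by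
    rw [← sum_add_sum_compl S, ← sum_add_sum_compl S fun i => v (h i), hS]
    congr 1 <;> refine sum_congr rfl fun i hi => ?_
    · simp only [h, piecewise_eq_of_mem _ _ _ hi]
    · simp only [h, piecewise_eq_of_notMem _ _ _ (mem_compl.1 hi)]
  have hhj : h j = g j := piecewise_eq_of_mem _ _ _ hj
  have hcancel : ∑ i, v (f i) + v (g j) = ∑ i ∈ univ.erase j, v (h i) := by
    rw [hfh, ← add_sum_erase _ _ (mem_univ j), hhj, add_right_comm, ZModModule.add_self, zero_add]
  rw [hcancel, ← card_univ, ← card_erase_of_mem (mem_univ j)]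
  exact isSumOfLength_sum v _ h

theorem exists_isSumOfLength_of_mem_span {w : V}
    (hw : w ∈ Submodule.span (ZMod 2) (Set.range v)) : ∃ t, IsSumOfLength v t w := by
  induction hw using Submodule.span_induction with
  | mem x hx =>
    obtain ⟨i, rfl⟩ := hx
    exact ⟨_, by simpa using isSumOfLength_sum v {i} id⟩
  | zero => exact ⟨0, .zero v⟩
  | add x y _ _ hx hy =>
    obtain ⟨s, hs⟩ := hx
    obtain ⟨t, ht⟩ := hy
    exact ⟨s + t, hs.add ht⟩
  | smul a x _ hx =>
    obtain rfl | rfl : a = 0 ∨ a = 1 := by decide +revert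
    · exact ⟨0, by simpa using IsSumOfLength.zero v⟩
    · simpa using hx

theorem two_pow_finrank_range_le [Fintype ι] {s : ℕ}
    (hs : ∀ w ∈ Submodule.span (ZMod 2) (Set.range v), ∃ t ≤ s, IsSumOfLength v t w) :
    2 ^ Set.finrank (ZMod 2) (Set.range v) ≤ (Fintype.card ι + 1) ^ s := by
  have := FiniteDimensional.span_of_finite (ZMod 2) (Set.finite_range v)
  calc 2 ^ Set.finrank (ZMod 2) (Set.range v)
      = Nat.card (Submodule.span (ZMod 2) (Set.range v)) := by
        rw [Module.natCard_eq_pow_finrank (K := ZMod 2), Nat.card_zmod, Set.finrank]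
    _ ≤ (Fintype.card ι + 1) ^ s := natCard_le_of_isSumOfLength hs

theorem exists_isSumOfLength_lt_of_common_shortener [Fintype κ] {t q : ℕ} (ht : 0 < t)
    {z : κ → V} {y : V} (hz : ∀ a, IsSumOfLength v t (z a)) (hy : IsSumOfLength v q y) {a b : κ}
    (hab : a ≠ b) {u : ι} (ha : IsShortener v t (z a) u) (hb : IsShortener v t (z b) u) :
    ∃ l < Fintype.card κ * t + q, IsSumOfLength v l (∑ a, z a + y) := by
  classical
  have hmem : b ∈ univ.erase a := mem_erase.2 ⟨hab.symm, mem_univ b⟩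
  have hcard : #((univ.erase a).erase b) + 1 + 1 = Fintype.card κ := by
    rw [card_erase_add_one hmem, card_erase_add_one (mem_univ a), card_univ]
  have hsum : ∑ a, z a + y
      = z a + v u + (z b + v u) + ∑ c ∈ (univ.erase a).erase b, z c + y := by
    rw [← add_sum_erase _ _ (mem_univ a), ← add_sum_erase _ _ hmem, add_add_add_comm (z a),
      ZModModule.add_self, add_zero, ← add_assoc (z a)]
  refine ⟨_, ?_, hsum ▸ ((IsSumOfLength.add ha hb).add (.sum fun c _ => hz c)).add hy⟩
  rw [← hcard, add_one_mul, add_one_mul]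
  omega

end CharTwo

/-- Local correctability of a family of vectors: each `v i` is the sum of the `v a` along every edge
of an `r`-uniform matching `H i` of size at least `s`. This is `IsBinaryLCC` for vectors of an
arbitrary space, with the absolute size `s` in place of `δn` and without the spanning condition. -/
structure IsLocallyCorrectable {ι V : Type*} [AddCommMonoid V] (r : ℕ) (s : ℝ) (v : ι → V)
    (H : ι → Finset (Finset ι)) : Prop where
  isUniformMatching : ∀ i, IsUniformMatching r (H i)
  le_card : ∀ i, s ≤ #(H i)
  eq_sum : ∀ i, ∀ e ∈ H i, v i = ∑ a ∈ e, v a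

namespace IsLocallyCorrectable

variable {V : Type*} [AddCommGroup V] [Module (ZMod 2) V] {n r K : ℕ} {c : ℝ} {v : Fin n → V}
  {H : Fin n → Finset (Finset (Fin n))}

open Classical in
theorem le_card_isShortener (hv : IsLocallyCorrectable r (2 * c) v H) (hr : 2 ≤ r)
    (hK : ForcesRainbowEvenCover n (r - 1) K c) {x : V} (hx : IsSumOfLength v K x) :
    c ≤ #{u | IsShortener v K x u} := by
  obtain ⟨j, rfl⟩ := hx
  set D : Finset (Fin n) := {u | IsShortener v K (∑ i, v (j i)) u}
  by_contra! hD
  choose G hG hcard herase using fun i =>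
    (hv.isUniformMatching (j i)).exists_erase_notMem hr D
  have hGsize : ∀ i, c ≤ #(G i) := fun i => by
    have hle : (#(H (j i)) : ℝ) ≤ #(G i) + #D := by exact_mod_cast hcard i
    linarith [hv.le_card (j i)]
  obtain ⟨S, ⟨i₀, hi₀⟩, E, hE, heven⟩ := hK G hG hGsize
  have hdecode : ∀ i ∈ S, ∃ u ∉ D, v (j i) = v u + ∑ a ∈ E i, v a := fun i hi => by
    obtain ⟨f, hf, u, huf, huD, hfE⟩ := herase i (E i) (hE i hi)
    exact ⟨u, huD, by rw [hv.eq_sum (j i) f hf, ← hfE, add_sum_erase _ _ huf]⟩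
  have : Nonempty (Fin n) := ⟨j i₀⟩
  choose! u huD hu using hdecode
  have hS : ∑ i ∈ S, v (j i) = ∑ i ∈ S, v (u i) := by
    rw [sum_congr rfl hu, sum_add_distrib, sum_sum_eq_zero_of_even heven, add_zero]
  refine huD i₀ hi₀ (mem_filter.2 ⟨mem_univ _, ?_⟩)
  simpa only [IsShortener, Fintype.card_fin] using isSumOfLength_sum_add_of_sum_eq_sum hS hi₀

theorem exists_isSumOfLength_lt (hv : IsLocallyCorrectable r (2 * c) v H) (hr : 2 ≤ r)
    (hK : ForcesRainbowEvenCover n (r - 1) K c) {m l : ℕ} (hm : n < m * c) (hl : m * K ≤ l) {w : V}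
    (hw : IsSumOfLength v l w) : ∃ t < l, IsSumOfLength v t w := by
  classical
  obtain ⟨q, rfl⟩ := Nat.exists_eq_add_of_le hl
  obtain ⟨z, y, hz, hy, rfl⟩ := hw.exists_blocks
  have hoverlap : Fintype.card (Fin n) < ∑ a, #{u | IsShortener v K (z a) u} := by
    have hsum : m * c ≤ ∑ a, (#{u | IsShortener v K (z a) u} : ℝ) := by
      simpa using card_nsmul_le_sum univ _ c fun a _ => hv.le_card_isShortener hr hK (hz a)
    rw [Fintype.card_fin]
    exact_mod_cast hm.trans_le hsum
  obtain ⟨a, b, hab, hnd⟩ := exists_ne_not_disjoint_of_card_lt_sum hoverlap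
  obtain ⟨u, ha, hb⟩ := not_disjoint_iff.1 hnd
  simpa only [Fintype.card_fin] using exists_isSumOfLength_lt_of_common_shortener hK.pos hz hy hab
    (mem_filter.1 ha).2 (mem_filter.1 hb).2

theorem exists_isSumOfLength_le (hv : IsLocallyCorrectable r (2 * c) v H) (hr : 2 ≤ r)
    (hK : ForcesRainbowEvenCover n (r - 1) K c) {m : ℕ} (hm : n < m * c) {w : V}
    (hw : w ∈ Submodule.span (ZMod 2) (Set.range v)) : ∃ t ≤ m * K, IsSumOfLength v t w := by
  classical
  have hex := exists_isSumOfLength_of_mem_span hw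
  refine ⟨Nat.find hex, ?_, Nat.find_spec hex⟩
  by_contra! hlt
  obtain ⟨t, ht, htw⟩ := hv.exists_isSumOfLength_lt hr hK hm hlt.le (Nat.find_spec hex)
  exact Nat.find_min hex ht htw

end IsLocallyCorrectable

namespace IsBinaryLCC

variable {r n k : ℕ} {δ : ℝ} {v : Fin n → Fin k → ZMod 2} {H : Fin n → Finset (Finset (Fin n))}

theorem isLocallyCorrectable (hL : IsBinaryLCC r δ v H) : IsLocallyCorrectable r (δ * n) v H :=
  let ⟨_, hcard, hdisj, hsize, hsum⟩ := hL
  ⟨fun i => ⟨hcard i, hdisj i⟩, hsize, hsum⟩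

theorem finrank_range (hL : IsBinaryLCC r δ v H) : Set.finrank (ZMod 2) (Set.range v) = k := by
  rw [Set.finrank, hL.1, finrank_top, Module.finrank_fin_fun]

end IsBinaryLCC

theorem le_mul_logb_of_two_pow_le {d n s : ℕ} (hn : 2 ≤ n) (h : 2 ^ d ≤ (n + 1) ^ s) :
    (d : ℝ) ≤ 2 * Real.logb 2 n * s := by
  have hpow : 2 ^ d ≤ n ^ (2 * s) := by
    rw [pow_mul]
    exact h.trans (Nat.pow_le_pow_left (by nlinarith) s)
  have hlog : Real.logb 2 (2 ^ d) ≤ Real.logb 2 ((n : ℝ) ^ (2 * s)) :=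
    Real.logb_le_logb_of_le one_lt_two (by positivity) (by exact_mod_cast hpow)
  rw [Real.logb_pow, Real.logb_pow, Real.logb_self_eq_one one_lt_two] at hlog
  push_cast at hlog
  linarith

theorem stmt4_general {V : Type*} [AddCommGroup V] [Module (ZMod 2) V] {r n K : ℕ} {δ : ℝ}
    (hr : 2 ≤ r) (hδ : 0 < δ) (hδ1 : δ ≤ 1) (hn : 2 ≤ n)
    (hK : ForcesRainbowEvenCover n (r - 1) K (δ / 2 * n)) {v : Fin n → V}
    {H : Fin n → Finset (Finset (Fin n))} (hv : IsLocallyCorrectable r (δ * n) v H) :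
    (Set.finrank (ZMod 2) (Set.range v) : ℝ) ≤ 6 * δ⁻¹ * Real.logb 2 n * K := by
  obtain ⟨m, hm, hm'⟩ : ∃ m : ℕ, 2 / δ < m ∧ m ≤ 3 / δ := by
    refine ⟨⌊2 / δ⌋₊ + 1, by exact_mod_cast Nat.lt_floor_add_one (2 / δ), ?_⟩
    calc ((⌊2 / δ⌋₊ + 1 : ℕ) : ℝ) ≤ 2 / δ + 1 / δ := by
          push_cast
          exact add_le_add (Nat.floor_le (by positivity)) ((one_le_div hδ).2 hδ1)
      _ = 3 / δ := by ring
  have hmn : (n : ℝ) < m * (δ / 2 * n) := by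
    have hn0 : (0 : ℝ) < n := by positivity
    rw [div_lt_iff₀ hδ] at hm
    nlinarith
  rw [show δ * n = 2 * (δ / 2 * n) by ring] at hv
  have hcount := two_pow_finrank_range_le fun w hw => hv.exists_isSumOfLength_le hr hK hmn hw
  rw [Fintype.card_fin] at hcount
  have hlog : 0 ≤ Real.logb 2 n :=
    Real.logb_nonneg one_lt_two (by exact_mod_cast one_le_two.trans hn)
  calc (Set.finrank (ZMod 2) (Set.range v) : ℝ)
      ≤ 2 * Real.logb 2 n * (m * K : ℕ) := le_mul_logb_of_two_pow_le hn hcount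
    _ = 2 * Real.logb 2 n * K * m := by push_cast; ring
    _ ≤ 2 * Real.logb 2 n * K * (3 / δ) := by gcongr
    _ = 6 * δ⁻¹ * Real.logb 2 n * K := by ring

/-- There is an absolute constant `C > 0` such that: if `K` is such that every
family of at least `K` many `(r-1)`-uniform matchings over `[n]`, each of size
at least `(δ/2)·n`, admits a rainbow even cover, then every binary linear
`(r,δ)`-LCC of block length `n` and dimension `k` satisfies
`k ≤ C · δ⁻¹ · log₂ n · K`. -/
theorem stmt4 :
    ∃ C : ℝ, 0 < C ∧
      ∀ (r n k K : ℕ) (δ : ℝ), 3 ≤ r → 0 < δ → δ < 1 → 3 ≤ n →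
        (∀ m : ℕ, K ≤ m → ∀ G : Fin m → Finset (Finset (Fin n)),
          (∀ i, ∀ e ∈ G i, e.card = r - 1) →
          (∀ i, ∀ e ∈ G i, ∀ e' ∈ G i, e ≠ e' → Disjoint e e') →
          (∀ i, δ / 2 * n ≤ ((G i).card : ℝ)) →
          HasRainbowEvenCover G) →
        ∀ (v : Fin n → Fin k → ZMod 2) (H : Fin n → Finset (Finset (Fin n))),
          IsBinaryLCC r δ v H →
          (k : ℝ) ≤ C * δ⁻¹ * Real.logb 2 n * K := by
  refine ⟨6, by norm_num, fun r n k K δ hr hδ hδ1 hn hK v H hL => hL.finrank_range ▸ ?_⟩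
  exact stmt4_general (by omega) hδ hδ1.le (by omega) (fun G hG =>
    hK K le_rfl G (fun i => (hG i).card_eq) fun i => (hG i).pairwiseDisjoint)
    hL.isLocallyCorrectable
end

section
/- Let c₀ > 0 be a rainbow-cycle constant and let B ≥ 2·c₀·δ^{-1}·log₂ n·log₂log₂ n. Let n ≥ 3, δ ∈ (0,1), and let M ∈ F_2^{n×k} with rows v_1,…,v_n be (together with matchings H_1,…,H_n) a binary linear (3,δ)-LCC of block length n and dimension k. Suppose that for every set T ⊆ [n] with |T| ≥ B, the set W_T of indices j ∈ [n] for which there exists a finite multiset T' of elements of [n] containing j with |T'| ≤ |T| and Σ_{t∈T} v_t = Σ_{t∈T'} v_t satisfies |W_T| ≥ (δ/2)·n. Then for every x ∈ F_2^k there exists a subset I ⊆ [n] with |I| < ⌈4/δ⌉·(B+1) and x = Σ_{i∈I} v_i. -/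
/-- `c₀ > 0` is a rainbow-cycle constant: for every `N ≥ 3`, every finite index
set (modeled as `Fin τ`), every `N`-element vertex set `V`, and every assignment
of a matching `M t` of `2`-element subsets of `V` to each index `t`, if
`Σ_t |M t| ≥ c₀·N·log₂ N·log₂ log₂ N` then some nonempty subfamily, with one
edge chosen per index, has empty symmetric difference (equivalently, every
vertex lies in an even number of the chosen edges): a rainbow cycle. -/
def IsRainbowCycleConst (c₀ : ℝ) : Prop :=
  ∀ (N : ℕ), 3 ≤ N →
    ∀ (τ : ℕ) (V : Type) [Fintype V] [DecidableEq V], Fintype.card V = N →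
      ∀ M : Fin τ → Finset (Finset V),
        (∀ t, ∀ e ∈ M t, e.card = 2) →
        (∀ t, ∀ e ∈ M t, ∀ e' ∈ M t, e ≠ e' → Disjoint e e') →
        c₀ * N * Real.logb 2 N * Real.logb 2 (Real.logb 2 N) ≤
          ((∑ t : Fin τ, (M t).card : ℕ) : ℝ) →
        ∃ S : Finset (Fin τ), S.Nonempty ∧ ∃ e : Fin τ → Finset V,
          (∀ t ∈ S, e t ∈ M t) ∧
          ∀ x : V, Even ((S.filter fun t => x ∈ e t).card)

/-!
Every `x` in the span has a shortest representation `S` as a multiset sum of the `v i`. Such an `S`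
repeats no index, and all its submultisets are shortest representations of their own sums. If
`T, T' ⊆ S` are disjoint, then their shift sets are disjoint: were `j` in both, rewriting `∑ T` and
`∑ T'` as no longer sums through `j` would let the two copies of `v j` cancel and shorten `T + T'`.
Hence `S` does not contain `m` disjoint blocks of size `b` whose shift sets all have density
exceeding `1 / m`.
-/

section ShortestSum

variable {ι M : Type*} [AddCommMonoid M] {v : ι → M}

/-- A multiset `S` of indices is a shortest representation of the vector `∑_{i ∈ S} v i`: no
multiset with the same sum is shorter. Comparing with multisets, not only with sets, lets sums be
added and subsums be replaced without first cancelling repeated indices. -/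
def IsShortestSum (v : ι → M) (S : Multiset ι) : Prop :=
  ∀ S' : Multiset ι, (S'.map v).sum = (S.map v).sum → S.card ≤ S'.card

/-- The shift set `W_T`: the indices that occur in some representation of `∑_{t ∈ T} v t` that is
no longer than `T`. -/
def shiftSet (v : ι → M) (T : Finset ι) : Set ι :=
  {j | ∃ T' : Multiset ι, j ∈ T' ∧ T'.card ≤ T.card ∧ ∑ t ∈ T, v t = (T'.map v).sum}

theorem shiftSet_empty (v : ι → M) : shiftSet v ∅ = ∅ := by
  refine Set.eq_empty_of_forall_notMem ?_
  rintro j ⟨T', hj, hcard, -⟩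
  have hT' : T' = 0 := by simpa using hcard
  simp [hT'] at hj

theorem pos_of_forall_le_ncard_shiftSet [Fintype ι] [Nonempty ι] {γ B : ℝ} (hγ : 0 < γ)
    (hW : ∀ T : Finset ι, B ≤ T.card → γ * Fintype.card ι ≤ (shiftSet v T).ncard) : 0 < B := by
  by_contra! hB
  have hle : γ * Fintype.card ι ≤ 0 := by
    simpa [shiftSet_empty] using hW ∅ (by simpa using hB)
  have hcard : (0 : ℝ) < Fintype.card ι := by exact_mod_cast Fintype.card_pos
  exact hle.not_gt (mul_pos hγ hcard)

theorem IsShortestSum.mono {S T : Multiset ι} (hS : IsShortestSum v S) (hTS : T ≤ S) :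
    IsShortestSum v T := by
  obtain ⟨U, rfl⟩ := Multiset.le_iff_exists_add.1 hTS
  intro T' hT'
  have hcard : (T + U).card ≤ (T' + U).card := hS (T' + U) (by simp [hT'])
  simpa using hcard

end ShortestSum

section ZModTwo

variable {ι V : Type*} [AddCommGroup V] [Module (ZMod 2) V] {v : ι → V}

theorem exists_multiset_sum_eq_of_mem_span {x : V}
    (hx : x ∈ Submodule.span (ZMod 2) (Set.range v)) : ∃ S : Multiset ι, (S.map v).sum = x := by
  obtain ⟨c, rfl⟩ := Finsupp.mem_span_range_iff_exists_finsupp.1 hx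
  refine ⟨c.support.val, Finset.sum_congr rfl fun i hi => ?_⟩
  have hci : c i = 1 := Fin.eq_one_of_ne_zero (c i) (Finsupp.mem_support_iff.1 hi)
  simp only [hci, one_smul]

theorem exists_isShortestSum_of_mem_span {x : V}
    (hx : x ∈ Submodule.span (ZMod 2) (Set.range v)) :
    ∃ S : Multiset ι, IsShortestSum v S ∧ (S.map v).sum = x := by
  obtain ⟨S, rfl, hmin⟩ := exists_minimalFor_of_wellFoundedLT
    (fun S : Multiset ι => (S.map v).sum = x) Multiset.card (exists_multiset_sum_eq_of_mem_span hx)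
  exact ⟨S, fun S' hS' => (le_total S.card S'.card).elim id (hmin hS'), rfl⟩

theorem IsShortestSum.nodup {S : Multiset ι} (hS : IsShortestSum v S) : S.Nodup := by
  refine Multiset.nodup_iff_le.2 fun a ha => ?_
  have hcard : (a ::ₘ a ::ₘ 0).card ≤ 0 := hS.mono ha 0 (by simp [ZModModule.add_self])
  simp at hcard

theorem sum_map_cons_add_sum_map_cons (v : ι → V) (j : ι) (P Q : Multiset ι) :
    ((j ::ₘ P).map v).sum + ((j ::ₘ Q).map v).sum = ((P + Q).map v).sum := by
  simp only [Multiset.map_cons, Multiset.sum_cons, Multiset.map_add, Multiset.sum_add]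
  rw [add_add_add_comm, ZModModule.add_self, zero_add]

theorem IsShortestSum.disjoint_shiftSet {T T' : Finset ι}
    (h : IsShortestSum v (T.val + T'.val)) : Disjoint (shiftSet v T) (shiftSet v T') := by
  refine Set.disjoint_left.2 ?_
  rintro j ⟨P', hjP, hPcard, hPsum⟩ ⟨Q', hjQ, hQcard, hQsum⟩
  obtain ⟨P, rfl⟩ := Multiset.exists_cons_of_mem hjP
  obtain ⟨Q, rfl⟩ := Multiset.exists_cons_of_mem hjQ
  have hsum : ((P + Q).map v).sum = ((T.val + T'.val).map v).sum := by
    rw [← sum_map_cons_add_sum_map_cons v j, ← hPsum, ← hQsum, Multiset.map_add, Multiset.sum_add]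
    rfl
  have hcard := h (P + Q) hsum
  simp only [Multiset.card_add, Multiset.card_cons, Finset.card_val] at hcard hPcard hQcard
  omega

end ZModTwo

theorem exists_pairwise_disjoint_card_eq {ι : Type*} {I : Finset ι} {m b : ℕ}
    (h : m * b ≤ I.card) :
    ∃ T : Fin m → Finset ι, (∀ i, T i ⊆ I) ∧ (∀ i, (T i).card = b) ∧
      Pairwise (Function.onFun Disjoint T) := by
  obtain ⟨f⟩ : Nonempty (Fin m × Fin b ↪ I) :=
    Function.Embedding.nonempty_of_card_le (by simpa using h)
  let block (i : Fin m) : Fin b ↪ ι :=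
    (Function.Embedding.sectR i (Fin b)).trans (f.trans (Function.Embedding.subtype _))
  refine ⟨fun i => Finset.univ.map (block i), fun i => ?_, fun i => by simp, fun i i' hne => ?_⟩
  · simp [Finset.subset_iff, block]
  · simp [Function.onFun, Finset.disjoint_left, block, hne.symm]

theorem card_mul_le_one_of_pairwise_disjoint {ι κ : Type*} [Fintype ι] [Nonempty ι] [Fintype κ]
    {γ : ℝ} {W : κ → Set ι} (hdisj : Pairwise (Function.onFun Disjoint W))
    (hW : ∀ i, γ * Fintype.card ι ≤ (W i).ncard) : Fintype.card κ * γ ≤ 1 := by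
  have hcard : (0 : ℝ) < Fintype.card ι := by exact_mod_cast Fintype.card_pos
  have hunion : ∑ i, (W i).ncard ≤ Fintype.card ι := by
    rw [← finsum_eq_sum_of_fintype, ← Set.ncard_iUnion_of_finite (fun i => (W i).toFinite) hdisj,
      ← Nat.card_eq_fintype_card]
    exact Set.ncard_le_card _
  refine le_of_mul_le_mul_right ?_ hcard
  calc Fintype.card κ * γ * Fintype.card ι = ∑ _i : κ, γ * Fintype.card ι := by simp [mul_assoc]
    _ ≤ ∑ i, ((W i).ncard : ℝ) := Finset.sum_le_sum fun i _ => hW i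
    _ ≤ 1 * Fintype.card ι := by rw [one_mul]; exact_mod_cast hunion

section Bound

variable {ι V : Type*} [Fintype ι] [Nonempty ι] [AddCommGroup V] [Module (ZMod 2) V] {v : ι → V}

theorem IsShortestSum.card_lt {I : Finset ι} (hI : IsShortestSum v I.val) {γ : ℝ} {m b : ℕ}
    (hm : 1 < m * γ)
    (hW : ∀ T : Finset ι, T.card = b → γ * Fintype.card ι ≤ (shiftSet v T).ncard) :
    I.card < m * b := by
  by_contra! hcard
  obtain ⟨T, hTI, hTcard, hTdisj⟩ := exists_pairwise_disjoint_card_eq hcard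
  have hshift : Pairwise (Function.onFun Disjoint fun i => shiftSet v (T i)) := by
    intro i i' hne
    have hle : (T i).val + (T i').val ≤ I.val := by
      rw [← Finset.disjUnion_val _ _ (hTdisj hne)]
      exact Finset.val_le_iff.2 fun j hj =>
        (Finset.mem_disjUnion.1 hj).elim (fun h => hTI i h) fun h => hTI i' h
    exact (hI.mono hle).disjoint_shiftSet
  have hle : m * γ ≤ 1 := by
    simpa using card_mul_le_one_of_pairwise_disjoint hshift fun i => hW _ (hTcard i)
  exact hm.not_ge hle

theorem stmt7_general {δ B : ℝ} (hδ : 0 < δ)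
    (hW : ∀ T : Finset ι, B ≤ T.card → δ / 2 * Fintype.card ι ≤ (shiftSet v T).ncard)
    {x : V} (hx : x ∈ Submodule.span (ZMod 2) (Set.range v)) :
    ∃ I : Finset ι, (I.card : ℝ) < (⌈4 / δ⌉ : ℝ) * (B + 1) ∧ x = ∑ i ∈ I, v i := by
  obtain ⟨S, hS, rfl⟩ := exists_isShortestSum_of_mem_span hx
  refine ⟨⟨S, hS.nodup⟩, ?_, rfl⟩
  have hB : 0 < B := pos_of_forall_le_ncard_shiftSet (half_pos hδ) hW
  have hblocks : 1 < (⌈4 / δ⌉₊ : ℝ) * (δ / 2) := by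
    have hceil : 4 ≤ ⌈4 / δ⌉₊ * δ := (div_le_iff₀ hδ).1 (Nat.le_ceil _)
    linarith
  have hcard := IsShortestSum.card_lt (I := ⟨S, hS.nodup⟩) (b := ⌈B⌉₊) hS hblocks
    fun T hT => hW T (hT ▸ Nat.le_ceil B)
  calc (S.card : ℝ) < ⌈4 / δ⌉₊ * ⌈B⌉₊ := by exact_mod_cast hcard
    _ ≤ ⌈4 / δ⌉₊ * (B + 1) := by gcongr; exact (Nat.ceil_lt_add_one hB.le).le
    _ = ⌈4 / δ⌉ * (B + 1) := by rw [natCast_ceil_eq_intCast_ceil (by positivity)]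

end Bound

/-- If, for a binary linear `(3,δ)`-LCC with rows `v i` and for a parameter
`B ≥ 2·c₀·δ⁻¹·log₂ n·log₂ log₂ n`, every set `T ⊆ [n]` with `|T| ≥ B` has its
"shift set" `W_T` of size at least `(δ/2)·n`, then every `x ∈ F₂ᵏ` is a sum of
fewer than `⌈4/δ⌉·(B+1)` of the rows `v i`. -/
theorem stmt7 (c₀ : ℝ) (hc₀ : 0 < c₀) (hrc : IsRainbowCycleConst c₀)
    (n k : ℕ) (δ : ℝ) (hn : 3 ≤ n) (hδ0 : 0 < δ) (hδ1 : δ < 1)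
    (B : ℝ) (hB : 2 * c₀ * δ⁻¹ * Real.logb 2 n * Real.logb 2 (Real.logb 2 n) ≤ B)
    (v : Fin n → Fin k → ZMod 2) (H : Fin n → Finset (Finset (Fin n)))
    (hlcc : IsBinaryLCC 3 δ v H)
    (hW : ∀ T : Finset (Fin n), B ≤ (T.card : ℝ) →
      δ / 2 * n ≤
        (({j : Fin n | ∃ T' : Multiset (Fin n), j ∈ T' ∧ Multiset.card T' ≤ T.card ∧
            ∑ t ∈ T, v t = (T'.map v).sum}).ncard : ℝ)) :
    ∀ x : Fin k → ZMod 2, ∃ I : Finset (Fin n),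
      (I.card : ℝ) < (⌈4 / δ⌉ : ℝ) * (B + 1) ∧ x = ∑ i ∈ I, v i := by
  have : NeZero n := ⟨by omega⟩
  exact fun x => stmt7_general hδ0 (by simpa [shiftSet] using hW) (hlcc.1 ▸ Submodule.mem_top)
end

section
/- Let q be a prime power, δ ∈ (0,1), and let M ∈ F_q^{n×k} with rows v_1,…,v_n be (together with matchings H_1,…,H_k) a linear (2,δ)-LDC over F_q of block length n and dimension k. Then for every x ∈ F_q^k there exist indices a_1, a_2 ∈ [n] and nonzero scalars γ_1, γ_2 ∈ F_q such that wt(x + γ_1·v_{a_1} + γ_2·v_{a_2}) ≤ (1 − 2δ/q)·wt(x), where wt denotes Hamming weight (number of nonzero coordinates). -/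
/-- A linear `(2, δ)`-LDC over a finite field `F` of block length `n` and
dimension `k`: a matrix with rows `v 1, …, v n ∈ Fᵏ` together with `2`-uniform
matchings `H i` over `[n]` of size at least `δ·n`, for `i ∈ [k]`, such that for
every pair `{a,b} ∈ H i` there are nonzero `α, β ∈ F` with
`e_i = α·v a + β·v b`, where `e_i` is the `i`-th standard basis vector. -/
def IsLinearLDC2 (F : Type) [Field F] {n k : ℕ} (δ : ℝ)
    (v : Fin n → Fin k → F) (H : Fin k → Finset (Finset (Fin n))) : Prop :=
  (∀ i : Fin k, ∀ e ∈ H i, e.card = 2) ∧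
  (∀ i : Fin k, ∀ e ∈ H i, ∀ e' ∈ H i, e ≠ e' → Disjoint e e') ∧
  (∀ i : Fin k, δ * n ≤ ((H i).card : ℝ)) ∧
  (∀ i : Fin k, ∀ e ∈ H i, ∀ a ∈ e, ∀ b ∈ e, a ≠ b →
    ∃ α β : F, α ≠ 0 ∧ β ≠ 0 ∧
      (Pi.single i (1 : F) : Fin k → F) = α • v a + β • v b)

/-! Walk on the scaled rows `γ • v a`, indexed by pairs `(a, γ)` with `γ ≠ 0`. A pair `{a, b} ∈ H i`
lets one replace a scaled row at `a` by a scaled row at `b` while changing only coordinate `i`;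
doing this along the whole matching (and staying put elsewhere) is a permutation `σ i` of the
`n (q - 1)` states. For each matched `a` and each `y ≠ 0` there is exactly one `γ` for which
`σ i` lowers coordinate `i` of `γ • v a` by `y`. Compose the `σ i` over the support of `x`.
Permutations preserve the uniform distribution, so the composite `π` still lowers coordinate `i`
by `x i` on at least `2δn` states, for each `i` in the support. The average weight of
`x + w (π t) - w t` over the states `t`, where `w t` is the scaled row at `t`, is therefore at
most `(1 - 2δ/(q - 1))` times the weight of `x`. -/

open Finset

section CoordinatewisePermutations

variable {Ω κ : Type*} {β : κ → Type*} {w : Ω → ∀ i, β i} {σ : κ → Equiv.Perm Ω}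

theorem exists_perm_coord_eq_comp_perm
    (hσ : ∀ i t, ∀ j ≠ i, w (σ i t) j = w t j) (s : Finset κ) :
    ∃ π : Equiv.Perm Ω, (∀ t, ∀ j ∉ s, w (π t) j = w t j) ∧
      ∀ i ∈ s, ∃ ρ : Equiv.Perm Ω, ∀ t, w (ρ t) i = w t i ∧ w (π t) i = w (σ i (ρ t)) i := by
  classical
  induction s using Finset.induction_on with
  | empty => exact ⟨1, by simp, by simp⟩
  | insert i s his ih =>
    obtain ⟨π, hπ_off, hπ_on⟩ := ih
    refine ⟨π.trans (σ i), fun t j hj => ?_, fun j hj => ?_⟩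
    · rw [mem_insert, not_or] at hj
      rw [Equiv.trans_apply, hσ i _ j hj.1, hπ_off t j hj.2]
    · rcases eq_or_ne j i with rfl | hji
      · exact ⟨π, fun t => ⟨hπ_off t j his, rfl⟩⟩
      · obtain ⟨ρ, hρ⟩ := hπ_on j (mem_of_mem_insert_of_ne hj hji)
        exact ⟨ρ, fun t => ⟨(hρ t).1, (hσ i _ j hji).trans (hρ t).2⟩⟩

variable [Fintype Ω] [Fintype κ] [∀ i, AddGroup (β i)] [∀ i, DecidableEq (β i)]

theorem exists_perm_sum_hammingNorm_eq
    (hσ : ∀ i t, ∀ j ≠ i, w (σ i t) j = w t j) (x : ∀ i, β i) :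
    ∃ π : Equiv.Perm Ω, ∑ t, hammingNorm (x + w (π t) - w t) =
      ∑ i with x i ≠ 0, #{t | x i + w (σ i t) i - w t i ≠ 0} := by
  obtain ⟨π, hπ_off, hπ_on⟩ := exists_perm_coord_eq_comp_perm hσ {i | x i ≠ 0}
  refine ⟨π, ?_⟩
  calc ∑ t, hammingNorm (x + w (π t) - w t)
      = ∑ i, #{t | x i + w (π t) i - w t i ≠ 0} :=
        sum_card_bipartiteAbove_eq_sum_card_bipartiteBelow
          fun t i => x i + w (π t) i - w t i ≠ 0
    _ = ∑ i with x i ≠ 0, #{t | x i + w (π t) i - w t i ≠ 0} := by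
        symm
        refine sum_filter_of_ne fun i _ h_ne hx => h_ne ?_
        simp [hx, hπ_off _ i (by simpa using hx)]
    _ = ∑ i with x i ≠ 0, #{t | x i + w (σ i t) i - w t i ≠ 0} := by
        refine sum_congr rfl fun i hi => ?_
        obtain ⟨ρ, hρ⟩ := hπ_on i hi
        exact card_equiv ρ fun t => by simp [hρ t]

theorem exists_hammingNorm_add_sub_le [Nonempty Ω]
    (hσ : ∀ i t, ∀ j ≠ i, w (σ i t) j = w t j) {x : ∀ i, β i} {m : ℝ}
    (hm : ∀ i, x i ≠ 0 → m ≤ #{t | x i + w (σ i t) i - w t i = 0}) :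
    ∃ t t' : Ω, (hammingNorm (x + w t' - w t) : ℝ) ≤
      (1 - m / Fintype.card Ω) * hammingNorm x := by
  obtain ⟨π, hπ⟩ := exists_perm_sum_hammingNorm_eq hσ x
  have card_bad (i : κ) (hi : x i ≠ 0) :
      (#{t | x i + w (σ i t) i - w t i ≠ 0} : ℝ) ≤ Fintype.card Ω - m := by
    have h_compl : (#{t | x i + w (σ i t) i - w t i = 0} : ℝ) +
        #{t | x i + w (σ i t) i - w t i ≠ 0} = Fintype.card Ω := by
      exact_mod_cast card_filter_add_card_filter_not (s := univ) _
    linarith [hm i hi]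
  have h_sum : ∑ t, (hammingNorm (x + w (π t) - w t) : ℝ) ≤
      ∑ _t : Ω, (1 - m / Fintype.card Ω) * (hammingNorm x : ℝ) :=
    calc ∑ t, (hammingNorm (x + w (π t) - w t) : ℝ)
        = ∑ i with x i ≠ 0, (#{t | x i + w (σ i t) i - w t i ≠ 0} : ℝ) := by exact_mod_cast hπ
      _ ≤ hammingNorm x • (Fintype.card Ω - m) :=
          sum_le_card_nsmul _ _ _ fun i hi => card_bad i (mem_filter.1 hi).2
      _ = ∑ _t : Ω, (1 - m / Fintype.card Ω) * (hammingNorm x : ℝ) := by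
          rw [sum_const, card_univ, nsmul_eq_mul, nsmul_eq_mul]
          field_simp
  obtain ⟨t, -, ht⟩ := exists_le_of_sum_le univ_nonempty h_sum
  exact ⟨t, π t, ht⟩

end CoordinatewisePermutations

section Matchings

variable {ι : Type*}

theorem exists_involutive_of_sized_two {M : Set (Finset ι)} (hM : M.Sized 2)
    (hd : M.PairwiseDisjoint id) :
    ∃ τ : ι → ι, τ.Involutive ∧ (∀ e ∈ M, ∀ a ∈ e, τ a ∈ e ∧ τ a ≠ a) ∧
      ∀ a, (∀ e ∈ M, a ∉ e) → τ a = a := by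
  have h_partner (a : ι) : ∃ b, (∀ e ∈ M, a ∈ e → b ∈ e ∧ b ≠ a) ∧
      ((∀ e ∈ M, a ∉ e) → b = a) := by
    by_cases ha : ∃ e ∈ M, a ∈ e
    · obtain ⟨e, he, hae⟩ := ha
      obtain ⟨b, hbe, hba⟩ := exists_mem_ne (by rw [hM he]; exact one_lt_two) a
      refine ⟨b, fun e' he' hae' => ?_, fun h => absurd hae (h e he)⟩
      rw [← hd.elim_finset he he' a hae hae']
      exact ⟨hbe, hba⟩
    · push Not at ha
      exact ⟨a, fun e he hae => absurd hae (ha e he), fun _ => rfl⟩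
  choose τ hτ hτ_off using h_partner
  refine ⟨τ, fun a => ?_, fun e he a => hτ a e he, hτ_off⟩
  by_cases ha : ∃ e ∈ M, a ∈ e
  · obtain ⟨e, he, hae⟩ := ha
    obtain ⟨hτe, hτa⟩ := hτ a e he hae
    obtain ⟨hττe, hττa⟩ := hτ (τ a) e he hτe
    by_contra h_ne
    have h_card : 2 < #e := two_lt_card.2
      ⟨a, hae, τ a, hτe, τ (τ a), hττe, hτa.symm, Ne.symm h_ne, hττa.symm⟩
    exact h_card.ne' (hM he)
  · push Not at ha
    rw [hτ_off a ha, hτ_off a ha]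

theorem two_mul_card_le_card_of_sized_two {M : Finset (Finset ι)}
    (hM : (M : Set (Finset ι)).Sized 2) (hd : (M : Set (Finset ι)).PairwiseDisjoint id)
    {s : Finset ι} (hs : ∀ e ∈ M, e ⊆ s) : 2 * #M ≤ #s :=
  calc 2 * #M = #(M.disjiUnion id hd) := by
        rw [card_disjiUnion, mul_comm]
        exact (sum_const_nat fun e he => hM he).symm
    _ ≤ #s := card_le_card fun a ha => by
        obtain ⟨e, he, hae⟩ := mem_disjiUnion.1 ha
        exact hs e he hae

end Matchings

theorem card_filter_units_mul_eq {ι G₀ : Type*} [Fintype ι] [GroupWithZero G₀] [Fintype G₀]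
    [DecidableEq G₀] (c : ι → G₀) {y : G₀} (hy : y ≠ 0) :
    #{t : ι × G₀ˣ | (t.2 : G₀) * c t.1 = y} = #{a | c a ≠ 0} := by
  refine card_bij (fun t _ => t.1) ?_ ?_ ?_
  · rintro ⟨a, γ⟩ ht
    simp only [mem_filter, mem_univ, true_and] at ht ⊢
    exact right_ne_zero_of_mul (ht ▸ hy)
  · rintro ⟨a, γ⟩ ht ⟨_, γ'⟩ ht' rfl
    simp only [mem_filter, mem_univ, true_and] at ht ht'
    have hc : c a ≠ 0 := right_ne_zero_of_mul (ht ▸ hy)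
    rw [Units.ext (mul_right_cancel₀ hc (ht.trans ht'.symm))]
  · intro a ha
    have hc : c a ≠ 0 := (mem_filter.1 ha).2
    exact ⟨(a, Units.mk0 (y / c a) (div_ne_zero hy hc)), by simp [hc], rfl⟩

section ScaledRows

variable {F ι V : Type*} [Field F] [AddCommGroup V] [Module F V]

theorem exists_eq_unit_smul_add_smul {α β : F} (hα : α ≠ 0) (hβ : β ≠ 0) {u x y : V}
    (h : u = α • x + β • y) : ∃ (g : Fˣ) (c : F), c ≠ 0 ∧ x = g • y + c • u := by
  refine ⟨Units.mk0 (-(α⁻¹ * β)) (by simp [hα, hβ]), α⁻¹, inv_ne_zero hα, ?_⟩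
  rw [h, Units.smul_def, Units.val_mk0]
  match_scalars
  · field_simp
  · ring

/-- The vector `γ • v a` attached to a state `(a, γ)` of the walk. -/
def scaledRow (v : ι → V) (t : ι × Fˣ) : V := (t.2 : F) • v t.1

theorem exists_perm_scaledRow_eq_sub {v : ι → V} {u : V} {M : Set (Finset ι)} (hM : M.Sized 2)
    (hd : M.PairwiseDisjoint id)
    (hu : ∀ e ∈ M, ∀ a ∈ e, ∀ b ∈ e, a ≠ b →
      ∃ α β : F, α ≠ 0 ∧ β ≠ 0 ∧ u = α • v a + β • v b) :
    ∃ (σ : Equiv.Perm (ι × Fˣ)) (c : ι → F),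
      (∀ t, scaledRow v (σ t) = scaledRow v t - (t.2 * c t.1) • u) ∧
      ∀ e ∈ M, ∀ a ∈ e, c a ≠ 0 := by
  obtain ⟨τ, hτ_inv, hτ, hτ_off⟩ := exists_involutive_of_sized_two hM hd
  have h_decomp (a : ι) : ∃ (g : Fˣ) (c : F), v a = g • v (τ a) + c • u ∧
      ∀ e ∈ M, a ∈ e → c ≠ 0 := by
    by_cases ha : ∃ e ∈ M, a ∈ e
    · obtain ⟨e, he, hae⟩ := ha
      obtain ⟨hτe, hτa⟩ := hτ e he a hae
      obtain ⟨α, β, hα, hβ, h⟩ := hu e he a hae (τ a) hτe hτa.symm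
      obtain ⟨g, c, hc, hv⟩ := exists_eq_unit_smul_add_smul hα hβ h
      exact ⟨g, c, hv, fun _ _ _ => hc⟩
    · push Not at ha
      exact ⟨1, 0, by simp [hτ_off a ha], fun e he hae => absurd hae (ha e he)⟩
  choose g c hv hc using h_decomp
  refine ⟨(hτ_inv.toPerm).prodShear fun a => Equiv.mulRight (g a), c, fun t => ?_,
    fun e he a => hc a e he⟩
  change (((t.2 * g t.1 : Fˣ) : F)) • v (τ t.1) = (t.2 : F) • v t.1 - (t.2 * c t.1) • u
  rw [hv t.1, Units.smul_def, Units.val_mul]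
  module

theorem exists_perm_scaledRow_lowering {κ : Type*} [DecidableEq κ] [Fintype ι] [Fintype F]
    [DecidableEq F] {v : ι → κ → F} {i : κ} {M : Finset (Finset ι)}
    (hM : (M : Set (Finset ι)).Sized 2) (hd : (M : Set (Finset ι)).PairwiseDisjoint id)
    (hi : ∀ e ∈ M, ∀ a ∈ e, ∀ b ∈ e, a ≠ b →
      ∃ α β : F, α ≠ 0 ∧ β ≠ 0 ∧ Pi.single i 1 = α • v a + β • v b) :
    ∃ σ : Equiv.Perm (ι × Fˣ), (∀ t, ∀ j ≠ i, scaledRow v (σ t) j = scaledRow v t j) ∧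
      ∀ y ≠ 0, 2 * #M ≤ #{t | y + scaledRow v (σ t) i - scaledRow v t i = 0} := by
  obtain ⟨σ, c, hσ, hc⟩ := exists_perm_scaledRow_eq_sub hM hd hi
  refine ⟨σ, fun t j hj => by simp [hσ, hj], fun y hy => ?_⟩
  have h_lowers (t : ι × Fˣ) : y + scaledRow v (σ t) i - scaledRow v t i = 0 ↔
      (t.2 : F) * c t.1 = y := by
    simp only [hσ, Pi.sub_apply, Pi.smul_apply, Pi.single_eq_same, smul_eq_mul, mul_one]
    grind
  simp_rw [h_lowers, card_filter_units_mul_eq c hy]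
  exact two_mul_card_le_card_of_sized_two hM hd fun e he a hae => by simpa using hc e he a hae

end ScaledRows

theorem stmt8_general {F ι κ : Type*} [Field F] [Fintype F] [DecidableEq F] [Fintype ι]
    [Nonempty ι] [Fintype κ] [DecidableEq κ] {δ : ℝ} {v : ι → κ → F}
    {H : κ → Finset (Finset ι)} (h_sized : ∀ i, (H i : Set (Finset ι)).Sized 2)
    (h_disj : ∀ i, (H i : Set (Finset ι)).PairwiseDisjoint id)
    (h_card : ∀ i, δ * Fintype.card ι ≤ #(H i))
    (h_decode : ∀ i, ∀ e ∈ H i, ∀ a ∈ e, ∀ b ∈ e, a ≠ b →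
      ∃ α β : F, α ≠ 0 ∧ β ≠ 0 ∧ Pi.single i 1 = α • v a + β • v b) (x : κ → F) :
    ∃ (a₁ a₂ : ι) (γ₁ γ₂ : F), γ₁ ≠ 0 ∧ γ₂ ≠ 0 ∧
      (hammingNorm (x + γ₁ • v a₁ + γ₂ • v a₂) : ℝ) ≤
        (1 - 2 * δ / (Fintype.card F - 1)) * hammingNorm x := by
  choose σ h_off h_low using fun i =>
    exists_perm_scaledRow_lowering (h_sized i) (h_disj i) (h_decode i)
  have h_on (i : κ) (hi : x i ≠ 0) : 2 * δ * Fintype.card ι ≤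
      #{t | x i + scaledRow v (σ i t) i - scaledRow v t i = 0} :=
    calc 2 * δ * Fintype.card ι ≤ ((2 * #(H i) : ℕ) : ℝ) := by
          push_cast
          linarith [h_card i]
      _ ≤ #{t | x i + scaledRow v (σ i t) i - scaledRow v t i = 0} := by
          exact_mod_cast h_low i (x i) hi
  obtain ⟨t, t', h⟩ := exists_hammingNorm_add_sub_le h_off h_on
  have h_ratio : 2 * δ * Fintype.card ι / (Fintype.card (ι × Fˣ) : ℝ) =
      2 * δ / (Fintype.card F - 1) := by
    rw [Fintype.card_prod, Fintype.card_units, Nat.cast_mul, Nat.cast_pred Fintype.card_pos,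
      mul_comm (2 * δ), mul_div_mul_left _ _ (Nat.cast_ne_zero.2 Fintype.card_ne_zero)]
  refine ⟨t'.1, t.1, t'.2, -t.2, t'.2.ne_zero, neg_ne_zero.2 t.2.ne_zero, ?_⟩
  rwa [h_ratio, sub_eq_add_neg, scaledRow, scaledRow, ← neg_smul] at h

/-- Weight contraction for linear `(2,δ)`-LDCs over a finite field `F` of
cardinality `q`: for every `x ∈ F^k` there are indices `a₁, a₂` and nonzero
scalars `γ₁, γ₂` with `wt(x + γ₁·v a₁ + γ₂·v a₂) ≤ (1 - 2δ/q)·wt(x)`. -/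
theorem stmt8 (F : Type) [Field F] [Fintype F] [DecidableEq F]
    (n k : ℕ) (hn : 1 ≤ n) (δ : ℝ) (hδ0 : 0 < δ) (hδ1 : δ < 1)
    (v : Fin n → Fin k → F) (H : Fin k → Finset (Finset (Fin n)))
    (hldc : IsLinearLDC2 F δ v H) :
    ∀ x : Fin k → F, ∃ (a₁ a₂ : Fin n) (γ₁ γ₂ : F), γ₁ ≠ 0 ∧ γ₂ ≠ 0 ∧
      (hammingNorm (x + γ₁ • v a₁ + γ₂ • v a₂) : ℝ) ≤
        (1 - 2 * δ / (Fintype.card F : ℝ)) * (hammingNorm x : ℝ) := by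
  intro x
  obtain ⟨h_sized, h_disj, h_card, h_decode⟩ := hldc
  have : NeZero n := ⟨by omega⟩
  have hq : (1 : ℝ) < Fintype.card F := by exact_mod_cast Fintype.one_lt_card
  obtain ⟨a₁, a₂, γ₁, γ₂, hγ₁, hγ₂, h⟩ :=
    stmt8_general h_sized h_disj (by simpa using h_card) h_decode x
  refine ⟨a₁, a₂, γ₁, γ₂, hγ₁, hγ₂, h.trans ?_⟩
  gcongr
  linarith
end

section
/- There exists an absolute constant c > 0 such that the following holds. Let q be a prime power, δ ∈ (0,1), and let M ∈ F_q^{n×k} with rows v_1,…,v_n be (together with matchings H_1,…,H_k) a linear (2,δ)-LDC over F_q of block length n and dimension k ≥ 2. Then for every x ∈ F_q^k there exists a subset I ⊆ [n] with |I| ≤ c·q·δ^{-1}·log₂ k such that x lies in the F_q-linear span of {v_i : i ∈ I}. -/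
/-!
The proof lowers the Hamming weight of `x` round by round, each round subtracting a combination of
two rows. Let `S` be the support of `x`, and call two rows equivalent if their restrictions to the
complement of `S` are proportional. Subtracting from every row the right multiple of a
representative of its class gives vectors supported in `S`; two rows that decode `e i` with `i ∈ S`
cancel outside `S`, hence lie in one class, and the reduced rows still decode `e i`. So for each
`i ∈ S` at least `δ n` reduced rows are nonzero at `i`, and by averaging some reduced row `w` has
weight at least `δ |S|`. By pigeonhole some multiple `s • w` agrees with `x` on at least a
`1 / q` fraction of the support of `w`, so `x - s • w` has weight at most `(1 - δ / q) |S|`. After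
`⌈(q / δ) log₂ k⌉` rounds the weight is below `1`.
-/

section Counting

open Finset

variable {α β : Type*}

lemma card_le_card_of_pairwiseDisjoint_of_exists_mem {M : Finset (Finset α)} {s : Finset α}
    (hM : (M : Set (Finset α)).PairwiseDisjoint id) (hs : ∀ e ∈ M, ∃ a ∈ e, a ∈ s) :
    #M ≤ #s := by
  classical
  have hdisj : (M : Set (Finset α)).PairwiseDisjoint (· ∩ s) :=
    hM.mono fun _ => inter_subset_left
  have hne : ∀ e ∈ M, (e ∩ s).Nonempty := fun e he =>
    let ⟨a, hae, has⟩ := hs e he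
    ⟨a, mem_inter.2 ⟨hae, has⟩⟩
  exact (card_le_card_biUnion hdisj hne).trans
    (card_le_card (biUnion_subset.2 fun _ _ => inter_subset_right))

lemma exists_mul_card_le_card_bipartiteBelow {R : Type*} [CommSemiring R] [LinearOrder R]
    [IsStrictOrderedRing R] (r : α → β → Prop) [∀ a b, Decidable (r a b)] {s : Finset α}
    {t : Finset β} (ht : t.Nonempty) {δ : R} (h : ∀ a ∈ s, δ * #t ≤ #(t.bipartiteAbove r a)) :
    ∃ b ∈ t, δ * #s ≤ #(s.bipartiteBelow r b) := by
  by_contra! hlt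
  have hcount := card_nsmul_lt_card_nsmul_of_le_of_lt r ht h hlt
  simp only [nsmul_eq_mul] at hcount
  exact hcount.ne (by ring)

lemma exists_hammingNorm_sub_smul_add_le {K : Type*} [Field K] [Fintype K] [DecidableEq K]
    [Fintype α] {x w : α → K} (h : ∀ i, x i = 0 → w i = 0) :
    ∃ s : K, (hammingNorm (x - s • w) + hammingNorm w / Fintype.card K : ℝ) ≤ hammingNorm x := by
  classical
  let D : Finset α := {i | w i ≠ 0}
  have hq : (Fintype.card K : ℝ) ≠ 0 := by exact_mod_cast Fintype.card_ne_zero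
  obtain ⟨s, -, hs⟩ : ∃ s ∈ (univ : Finset K),
      (hammingNorm w / Fintype.card K : ℝ) ≤ #{i ∈ D | x i / w i = s} := by
    refine exists_le_card_fiber_of_nsmul_le_card_of_maps_to (fun _ _ => mem_univ _)
      univ_nonempty ?_
    rw [card_univ, nsmul_eq_mul, mul_div_cancel₀ _ hq]
    rfl
  refine ⟨s, (add_le_add_right hs _).trans ?_⟩
  have hmul : ∀ i ∈ ({i ∈ D | x i / w i = s} : Finset α), w i ≠ 0 ∧ x i = s * w i := by
    intro i hi
    obtain ⟨hwi, hsi⟩ : w i ≠ 0 ∧ x i / w i = s := by simpa [D] using hi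
    exact ⟨hwi, (div_eq_iff hwi).1 hsi⟩
  have hdisj : Disjoint ({i | (x - s • w) i ≠ 0} : Finset α) {i ∈ D | x i / w i = s} := by
    refine disjoint_right.2 fun i hi hne => (mem_filter.1 hne).2 ?_
    simp [(hmul i hi).2]
  have hsub : ({i | (x - s • w) i ≠ 0} : Finset α) ∪ {i ∈ D | x i / w i = s} ⊆
      ({i | x i ≠ 0} : Finset α) := by
    intro i hi
    refine mem_filter.2 ⟨mem_univ i, fun hx => ?_⟩
    rcases mem_union.1 hi with hne | hfib
    · exact (mem_filter.1 hne).2 (by simp [hx, h i hx])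
    · exact (hmul i hfib).1 (h i hx)
  have hcard := card_le_card hsub
  rw [card_union_of_disjoint hdisj] at hcard
  exact_mod_cast hcard

end Counting

section LinearAlgebra

open Submodule

variable {K V W ι : Type*}

lemma exists_representative_of_proportional [DivisionRing K] [AddCommGroup W] [Module K W]
    (u : ι → W) :
    ∃ r : ι → ι, (∀ b, u b ∈ K ∙ u (r b)) ∧
      ∀ a b (α β : K), α ≠ 0 → β ≠ 0 → α • u a + β • u b = 0 → r a = r b := by
  let s : Setoid ι := (MulAction.orbitRel Kˣ W).comap u
  refine ⟨fun b => (Quotient.mk s b).out, fun b => ?_, fun a b α β hα hβ h => ?_⟩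
  · obtain ⟨g, hg⟩ : u b ∈ MulAction.orbit Kˣ (u (Quotient.mk s b).out) :=
      s.symm (Quotient.mk_out b)
    exact mem_span_singleton.2 ⟨g, hg⟩
  · have hγ : -(α⁻¹ * β) ≠ 0 := neg_ne_zero.2 (mul_ne_zero (inv_ne_zero hα) hβ)
    have hab : -(α⁻¹ * β) • u b = u a := by
      rw [neg_smul, mul_smul, ← smul_neg, ← eq_neg_of_add_eq_zero_left h, inv_smul_smul₀ hα]
    exact congrArg Quotient.out (Quotient.sound (s := s) ⟨Units.mk0 _ hγ, hab⟩)

section Field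

variable [Field K] [AddCommGroup V] [Module K V] [AddCommGroup W] [Module K W]

lemma exists_dual_smul_eq_of_mem_span_singleton (y₀ : W) :
    ∃ f : Module.Dual K W, ∀ y ∈ K ∙ y₀, f y • y₀ = y := by
  rcases eq_or_ne y₀ 0 with rfl | hy₀
  · exact ⟨0, fun y hy => by simp_all⟩
  · obtain ⟨f, hf⟩ := Module.Projective.exists_dual_eq_one K hy₀
    refine ⟨f, fun y hy => ?_⟩
    obtain ⟨c, rfl⟩ := mem_span_singleton.1 hy
    simp [hf]

lemma exists_reduction_mod (U : Submodule K V) (v : ι → V) :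
    ∃ w : ι → V, (∀ b, w b ∈ U) ∧ (∀ b, ∃ a, w b ∈ span K {v a, v b}) ∧
      ∀ a b (α β : K), α ≠ 0 → β ≠ 0 → α • v a + β • v b ∈ U →
        α • w a + β • w b = α • v a + β • v b := by
  obtain ⟨r, hr, hrel⟩ := exists_representative_of_proportional (K := K) fun b => U.mkQ (v b)
  choose f hf using exists_dual_smul_eq_of_mem_span_singleton (K := K) (W := V ⧸ U)
  -- The functional depends only on the class of `b`, so linear relations pass to the values `t b`.
  let t : ι → K := fun b => f (U.mkQ (v (r b))) (U.mkQ (v b))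
  refine ⟨fun b => v b - t b • v (r b), fun b => ?_, fun b => ⟨r b, ?_⟩,
    fun a b α β hα hβ h => ?_⟩
  · have hzero : U.mkQ (v b - t b • v (r b)) = 0 := by
      rw [map_sub, map_smul, hf _ _ (hr b), sub_self]
    exact (Quotient.mk_eq_zero U).1 hzero
  · exact sub_mem (subset_span (by simp)) (smul_mem _ _ (subset_span (by simp)))
  · have hzero : α • U.mkQ (v a) + β • U.mkQ (v b) = 0 := by
      rw [← map_smul, ← map_smul, ← map_add]
      exact (Quotient.mk_eq_zero U).2 h
    have hab : r a = r b := hrel a b α β hα hβ hzero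
    have ht : α * t a + β * t b = 0 := by
      simpa only [t, hab, map_add, map_smul, smul_eq_mul, map_zero] using
        congrArg (f (U.mkQ (v (r b)))) hzero
    calc α • (v a - t a • v (r a)) + β • (v b - t b • v (r b))
        = α • v a + β • v b - (α * t a + β * t b) • v (r b) := by rw [hab]; module
      _ = α • v a + β • v b := by rw [ht, zero_smul, sub_zero]

end Field

lemma exists_mem_span_le_pow_mul {R : Type*} [Semiring R] [PartialOrder R] [IsOrderedRing R]
    [Semiring K] [AddCommGroup V] [Module K V] {v : ι → V} {N : V → R} {ρ : R} {m : ℕ} (hρ : 0 ≤ ρ)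
    (h : ∀ x, ∃ I : Finset ι, I.card ≤ m ∧ ∃ y ∈ span K (v '' I), N (x - y) ≤ ρ * N x)
    (T : ℕ) (x : V) :
    ∃ I : Finset ι, I.card ≤ T * m ∧ ∃ y ∈ span K (v '' I), N (x - y) ≤ ρ ^ T * N x := by
  classical
  induction T with
  | zero => exact ⟨∅, by simp, 0, zero_mem _, by simp⟩
  | succ T ih =>
    obtain ⟨I, hI, y, hy, hxy⟩ := ih
    obtain ⟨J, hJ, z, hz, hyz⟩ := h (x - y)
    have hmono {A : Finset ι} (hA : A ⊆ I ∪ J) : span K (v '' A) ≤ span K (v '' (I ∪ J :)) :=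
      span_mono (Set.image_mono (Finset.coe_subset.2 hA))
    refine ⟨I ∪ J, (Finset.card_union_le I J).trans (by linarith), y + z,
      add_mem (hmono Finset.subset_union_left hy) (hmono Finset.subset_union_right hz), ?_⟩
    calc N (x - (y + z)) = N (x - y - z) := by rw [sub_sub]
      _ ≤ ρ * N (x - y) := hyz
      _ ≤ ρ * (ρ ^ T * N x) := by gcongr
      _ = ρ ^ (T + 1) * N x := by rw [pow_succ', mul_assoc]

end LinearAlgebra

section Estimates

lemma one_sub_pow_mul_lt_one {ε a : ℝ} {T : ℕ} (hε : ε ≤ 1) (ha : 0 < a)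
    (hT : Real.log a < ε * T) : (1 - ε) ^ T * a < 1 :=
  calc (1 - ε) ^ T * a ≤ Real.exp (-ε) ^ T * a :=
        mul_le_mul_of_nonneg_right
          (pow_le_pow_left₀ (sub_nonneg.2 hε) (Real.one_sub_le_exp_neg ε) T) ha.le
    _ = Real.exp (Real.log a - ε * T) := by
        rw [← Real.exp_nat_mul, Real.exp_sub, Real.exp_log ha, mul_neg, Real.exp_neg, mul_comm ε]
        ring
    _ < 1 := Real.exp_lt_one_iff.2 (by linarith)

lemma log_lt_logb_two {a : ℝ} (ha : 1 < a) : Real.log a < Real.logb 2 a := by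
  have hlog2 : Real.log 2 < 1 := by linarith [Real.log_two_lt_d9]
  exact (lt_div_iff₀ (Real.log_pos one_lt_two)).2 (mul_lt_of_lt_one_right (Real.log_pos ha) hlog2)

end Estimates

namespace IsLinearLDC2

variable {F : Type} [Field F] {n k : ℕ} {δ : ℝ} {v : Fin n → Fin k → F}
  {H : Fin k → Finset (Finset (Fin n))}

lemma exists_reduction_supported [DecidableEq F] (hL : IsLinearLDC2 F δ v H)
    (S : Finset (Fin k)) :
    ∃ w : Fin n → Fin k → F, (∀ b, ∀ i ∉ S, w b i = 0) ∧
      (∀ b, ∃ a, w b ∈ Submodule.span F {v a, v b}) ∧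
      ∀ i ∈ S, δ * n ≤ (Finset.univ.filter fun b => w b i ≠ 0).card := by
  obtain ⟨hpair, hdisj, hcard, hdecode⟩ := hL
  obtain ⟨w, hwU, hspan, hw⟩ :=
    exists_reduction_mod (Submodule.pi {i | i ∉ S} fun _ => (⊥ : Submodule F F)) v
  refine ⟨w, hwU, hspan, fun i hi => (hcard i).trans (Nat.cast_le.2 ?_)⟩
  refine card_le_card_of_pairwiseDisjoint_of_exists_mem (fun e he e' he' => hdisj i e he e' he')
    fun e he => ?_
  obtain ⟨a, b, hab, rfl⟩ := Finset.card_eq_two.1 (hpair i e he)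
  obtain ⟨α, β, hα, hβ, heq⟩ := hdecode i _ he a (by simp) b (by simp) hab
  have hmem : α • v a + β • v b ∈ Submodule.pi {i | i ∉ S} fun _ => (⊥ : Submodule F F) := by
    rw [← heq]
    intro j hj
    exact Pi.single_eq_of_ne (ne_of_mem_of_not_mem hi hj).symm 1
  have hone : α * w a i + β * w b i = 1 := by
    have hsum := hw a b α β hα hβ hmem
    rw [← heq] at hsum
    simpa using congrFun hsum i
  have hab_nonzero : w a i ≠ 0 ∨ w b i ≠ 0 := by
    by_contra! hzero
    simp [hzero.1, hzero.2] at hone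
  simpa using hab_nonzero

lemma exists_supported_mul_card_le_hammingNorm [DecidableEq F] (hL : IsLinearLDC2 F δ v H)
    (hn : 1 ≤ n) (S : Finset (Fin k)) :
    ∃ a b, ∃ w ∈ Submodule.span F {v a, v b}, (∀ i ∉ S, w i = 0) ∧ δ * S.card ≤ hammingNorm w := by
  obtain ⟨w, hsupp, hspan, hw⟩ := hL.exists_reduction_supported S
  have : NeZero n := ⟨by omega⟩
  obtain ⟨b, -, hb⟩ := exists_mul_card_le_card_bipartiteBelow (fun i b => w b i ≠ 0)
    Finset.univ_nonempty fun i hi => by rw [Finset.card_fin]; exact hw i hi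
  obtain ⟨a, ha⟩ := hspan b
  refine ⟨a, b, w b, ha, hsupp b, hb.trans (Nat.cast_le.2 (Finset.card_le_card ?_))⟩
  exact Finset.filter_subset_filter _ (Finset.subset_univ S)

variable [Fintype F]

lemma exists_hammingNorm_sub_le [DecidableEq F] (hL : IsLinearLDC2 F δ v H) (hn : 1 ≤ n)
    (x : Fin k → F) :
    ∃ I : Finset (Fin n), I.card ≤ 2 ∧ ∃ y ∈ Submodule.span F (v '' I),
      (hammingNorm (x - y) : ℝ) ≤ (1 - δ / Fintype.card F) * hammingNorm x := by
  obtain ⟨a, b, w, hw, hsupp, hδ⟩ := hL.exists_supported_mul_card_le_hammingNorm hn {i | x i ≠ 0}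
  obtain ⟨s, hs⟩ := exists_hammingNorm_sub_smul_add_le (x := x) (w := w)
    fun i hi => hsupp i (by simpa using hi)
  refine ⟨{a, b}, Finset.card_le_two, s • w, Submodule.smul_mem _ s ?_, ?_⟩
  · rwa [Finset.coe_pair, Set.image_pair]
  · have hdrop : δ * hammingNorm x / Fintype.card F ≤ (hammingNorm w / Fintype.card F : ℝ) := by
      gcongr
      exact hδ
    calc (hammingNorm (x - s • w) : ℝ)
        ≤ hammingNorm x - δ * hammingNorm x / Fintype.card F := by linarith
      _ = (1 - δ / Fintype.card F) * hammingNorm x := by ring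

lemma exists_mem_span_of_log_lt (hL : IsLinearLDC2 F δ v H) (hn : 1 ≤ n) (hk : 1 ≤ k)
    (hδ : δ ≤ Fintype.card F) {T : ℕ} (hT : Real.log k < δ / Fintype.card F * T)
    (x : Fin k → F) :
    ∃ I : Finset (Fin n), I.card ≤ T * 2 ∧ x ∈ Submodule.span F (v '' I) := by
  classical
  have hε : δ / Fintype.card F ≤ 1 := div_le_one_of_le₀ hδ (Nat.cast_nonneg _)
  obtain ⟨I, hI, y, hy, hxy⟩ := exists_mem_span_le_pow_mul (N := fun x => (hammingNorm x : ℝ))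
    (sub_nonneg.2 hε) (hL.exists_hammingNorm_sub_le hn) T x
  have hlt : (hammingNorm (x - y) : ℝ) < 1 :=
    calc (hammingNorm (x - y) : ℝ) ≤ (1 - δ / Fintype.card F) ^ T * hammingNorm x := hxy
      _ ≤ (1 - δ / Fintype.card F) ^ T * k := by
        have hweight : hammingNorm x ≤ k :=
          hammingNorm_le_card_fintype.trans_eq (Fintype.card_fin k)
        exact mul_le_mul_of_nonneg_left (Nat.cast_le.2 hweight) (pow_nonneg (sub_nonneg.2 hε) T)
      _ < 1 := one_sub_pow_mul_lt_one hε (Nat.cast_pos.2 hk) hT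
  have hxy_zero : x - y = 0 := hammingNorm_lt_one.1 (by exact_mod_cast hlt)
  exact ⟨I, hI, sub_eq_zero.1 hxy_zero ▸ hy⟩

end IsLinearLDC2

/-- There is an absolute constant `c > 0` such that for every linear
`(2,δ)`-LDC over a finite field `F` of cardinality `q`, with dimension `k ≥ 2`,
every `x ∈ Fᵏ` lies in the span of at most `c·q·δ⁻¹·log₂ k` of the rows. -/
theorem stmt9 :
    ∃ c : ℝ, 0 < c ∧
      ∀ (F : Type) [Field F] [Fintype F] [DecidableEq F],
        ∀ (n k : ℕ) (δ : ℝ), 1 ≤ n → 2 ≤ k → 0 < δ → δ < 1 →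
          ∀ (v : Fin n → Fin k → F) (H : Fin k → Finset (Finset (Fin n))),
            IsLinearLDC2 F δ v H →
            ∀ x : Fin k → F, ∃ I : Finset (Fin n),
              (I.card : ℝ) ≤ c * (Fintype.card F : ℝ) * δ⁻¹ * Real.logb 2 k ∧
              x ∈ Submodule.span F (v '' (I : Set (Fin n))) := by
  refine ⟨4, by norm_num, fun F _ _ _ n k δ hn hk hδ hδ1 v H hL x => ?_⟩
  have hk' : (2 : ℝ) ≤ k := by exact_mod_cast hk
  have hq : (1 : ℝ) ≤ Fintype.card F := by exact_mod_cast Fintype.card_pos (α := F)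
  set A : ℝ := Fintype.card F * δ⁻¹ * Real.logb 2 k with hA
  have hA1 : 1 ≤ A := by
    have hlogb : 1 ≤ Real.logb 2 k := by
      rwa [Real.le_logb_iff_rpow_le one_lt_two (by linarith), Real.rpow_one]
    exact one_le_mul_of_one_le_of_one_le
      (one_le_mul_of_one_le_of_one_le hq ((one_le_inv₀ hδ).2 hδ1.le)) hlogb
  have hlog : Real.log k < δ / Fintype.card F * ⌈A⌉₊ :=
    calc Real.log k < Real.logb 2 k := log_lt_logb_two (by linarith)
      _ = δ / Fintype.card F * A := by rw [hA]; field_simp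
      _ ≤ δ / Fintype.card F * ⌈A⌉₊ := by gcongr; exact Nat.le_ceil A
  obtain ⟨I, hI, hx⟩ :=
    hL.exists_mem_span_of_log_lt hn (one_le_two.trans hk) (hδ1.le.trans hq) hlog x
  refine ⟨I, ?_, hx⟩
  calc (I.card : ℝ) ≤ ⌈A⌉₊ * 2 := by exact_mod_cast hI
    _ ≤ 2 * A * 2 := by gcongr; exact Nat.ceil_le_two_mul (by linarith)
    _ = 4 * Fintype.card F * δ⁻¹ * Real.logb 2 k := by rw [hA]; ring
end

section
/- There exists an absolute constant c > 0 such that the following holds. Let q be a prime power, δ ∈ (0,1), and let M ∈ F_q^{n×k} with rows v_1,…,v_n be (together with matchings H_1,…,H_k) a linear (2,δ)-LDC over F_q of block length n and dimension k. Then for every x ∈ F_q^k there exist a subset J ⊆ [n] with |J| ≤ c·q·δ^{-1} and a vector y in the F_q-linear span of {v_j : j ∈ J} such that the Hamming distance between x and y is at most k/4. -/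
/-!
Write `z` for the current error and `S` for its support. Call two scaled rows `l • v a`, with `l` a
unit, equivalent if they agree off `S`. For `i ∈ S`, a pair in `H i` and a unit `l` give two
equivalent scaled rows differing by `l • eᵢ`, so a representative of their class disagrees with one
of them at `i`. Averaging over all scaled rows, some scaled row differs from its representative on
at least `δ|S|` coordinates of `S`, and on none outside. On average, a scalar multiple of this
difference equals `z` on a fraction `1/q` of those coordinates, so subtracting a suitable multiple
shrinks the support of `z` by a factor `1 - δ/q` at the cost of two rows. Iterate `O(q/δ)` times.
-/

open Finset

section Averaging

theorem exists_mul_card_le_card_filter {α β : Type*} {s : Finset α} {t : Finset β}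
    (hs : s.Nonempty) (r : α → β → Prop) [∀ a b, Decidable (r a b)] {δ : ℝ}
    (h : ∀ b ∈ t, δ * #s ≤ #{a ∈ s | r a b}) : ∃ a ∈ s, δ * #t ≤ #{b ∈ t | r a b} := by
  refine exists_le_of_sum_le hs ?_
  calc ∑ _a ∈ s, δ * (#t : ℝ) = ∑ _b ∈ t, δ * (#s : ℝ) := by
        simp only [sum_const, nsmul_eq_mul]
        ring
    _ ≤ ∑ b ∈ t, (#{a ∈ s | r a b} : ℝ) := sum_le_sum h
    _ = ∑ a ∈ s, (#{b ∈ t | r a b} : ℝ) :=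
        mod_cast (sum_card_bipartiteAbove_eq_sum_card_bipartiteBelow r).symm

-- The predictor of coordinate `i` to use in `h` reads it off a representative of the class of `w p`
-- modulo agreement outside `S`.
theorem exists_eqOn_compl_mul_card_le_hammingDist {P κ α : Type*} [Fintype P] [Nonempty P]
    [Fintype κ] [DecidableEq α] (w : P → κ → α) (S : Finset κ) {δ : ℝ}
    (h : ∀ i ∈ S, ∀ f : (κ → α) → α, DependsOn f (S : Set κ)ᶜ →
      δ * Fintype.card P ≤ #{p | f (w p) ≠ w p i}) :
    ∃ p p', Set.EqOn (w p) (w p') (S : Set κ)ᶜ ∧ δ * #S ≤ hammingDist (w p) (w p') := by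
  let restr : (κ → α) → ((S : Set κ)ᶜ : Set κ) → α := (S : Set κ)ᶜ.domRestrict
  let rep : (κ → α) → P := fun y ↦ Function.invFun (restr ∘ w) (restr y)
  have rep_dependsOn (i : κ) : DependsOn (fun y ↦ w (rep y) i) (S : Set κ)ᶜ := fun y z hyz ↦
    congrArg (fun t ↦ w (Function.invFun (restr ∘ w) t) i) (Set.dependsOn_domRestrict _ hyz)
  obtain ⟨p, -, hp⟩ := exists_mul_card_le_card_filter univ_nonempty
    (fun p i ↦ w (rep (w p)) i ≠ w p i) fun i hi ↦ h i hi _ (rep_dependsOn i)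
  have rep_eq : restr (w (rep (w p))) = restr (w p) := Function.invFun_eq (f := restr ∘ w) ⟨p, rfl⟩
  refine ⟨rep (w p), p, Set.domRestrict_eq_domRestrict_iff.1 rep_eq, hp.trans ?_⟩
  exact mod_cast card_le_card (filter_subset_filter _ (subset_univ S))

end Averaging

section Decodable

variable {R ι κ : Type*} [Ring R] [DecidableEq κ]

/-- Coordinate `i` is locally decodable from the rows `v`, with density `δ`: there are at least
`δ * |ι|` disjoint sets of row indices, each containing two rows with a combination by units equal
to `eᵢ`. The units are recorded as a rescaling `c` of all rows, and the sign is put on the second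
row, so that the two rescaled rows differ exactly at `i`. -/
def IsLocallyDecodable [Fintype ι] (δ : ℝ) (v : ι → κ → R) (i : κ) : Prop :=
  ∃ A : Finset (Finset ι), δ * Fintype.card ι ≤ #A ∧ (A : Set (Finset ι)).PairwiseDisjoint id ∧
    ∀ e ∈ A, ∃ c : ι → Rˣ, ∃ a ∈ e, ∃ b ∈ e, c a • v a - c b • v b = Pi.single i 1

variable {v : ι → κ → R} {i : κ} {δ : ℝ}

theorem exists_mem_ne_of_smul_sub_smul_eq_single [Nontrivial R] {e : Finset ι} {c : ι → Rˣ}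
    (hc : ∃ a ∈ e, ∃ b ∈ e, c a • v a - c b • v b = Pi.single i 1) (l : Rˣ)
    {f : (κ → R) → R} (hf : DependsOn f {i}ᶜ) :
    ∃ a ∈ e, f ((l * c a) • v a) ≠ ((l * c a) • v a) i := by
  obtain ⟨a, ha, b, hb, hab⟩ := hc
  have hsub (j : κ) : ((l * c a) • v a) j - ((l * c b) • v b) j =
      l • (Pi.single i 1 : κ → R) j := by
    rw [← Pi.sub_apply, mul_smul, mul_smul, ← smul_sub, hab, Pi.smul_apply]
  have hf_eq : f ((l * c a) • v a) = f ((l * c b) • v b) := by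
    refine hf fun j hj ↦ sub_eq_zero.1 ?_
    rw [hsub, Pi.single_eq_of_ne hj, smul_zero]
  by_contra! hcon
  have hzero : l • (1 : R) = 0 := by
    rw [← Pi.single_eq_same (M := fun _ ↦ R) i 1, ← hsub, ← hcon a ha, ← hcon b hb, hf_eq, sub_self]
  exact one_ne_zero ((smul_eq_zero_iff_eq l).1 hzero)

theorem IsLocallyDecodable.mul_card_le_card_ne [Nontrivial R] [Fintype Rˣ] [DecidableEq R]
    [Fintype ι] (h : IsLocallyDecodable δ v i) {f : (κ → R) → R} (hf : DependsOn f {i}ᶜ) :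
    δ * Fintype.card (ι × Rˣ) ≤ #{p : ι × Rˣ | f (p.2 • v p.1) ≠ (p.2 • v p.1) i} := by
  obtain ⟨A, hcard, hdisj, hdec⟩ := h
  choose! c hc using hdec
  have hle : #(A ×ˢ (univ : Finset Rˣ)) ≤
      #{p : ι × Rˣ | f (p.2 • v p.1) ≠ (p.2 • v p.1) i} := by
    refine card_le_card_of_forall_subsingleton
      (fun x p ↦ p.1 ∈ x.1 ∧ p.2 = x.2 * c x.1 p.1) ?_ ?_
    · rintro ⟨e, l⟩ he
      obtain ⟨a, ha, hne⟩ := exists_mem_ne_of_smul_sub_smul_eq_single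
        (hc e (mem_product.1 he).1) l hf
      exact ⟨(a, l * c e a), mem_filter.2 ⟨mem_univ _, hne⟩, ha, rfl⟩
    · rintro p - ⟨e, l⟩ ⟨he, hpe, hl⟩ ⟨e', l'⟩ ⟨he', hpe', hl'⟩
      obtain rfl : e = e' :=
        hdisj.elim_finset (mem_product.1 he).1 (mem_product.1 he').1 p.1 hpe hpe'
      exact congrArg (Prod.mk e) (mul_right_cancel (hl.symm.trans hl'))
  calc δ * Fintype.card (ι × Rˣ) = δ * Fintype.card ι * Fintype.card Rˣ := by
        rw [Fintype.card_prod, Nat.cast_mul, mul_assoc]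
    _ ≤ #A * Fintype.card Rˣ := by gcongr
    _ ≤ _ := by
        rw [card_product, card_univ] at hle
        exact mod_cast hle

theorem exists_eqOn_mul_hammingNorm_le_hammingDist [Nontrivial R] [Finite Rˣ] [DecidableEq R]
    [Fintype ι] [Nonempty ι] [Fintype κ] (h : ∀ i, IsLocallyDecodable δ v i) (z : κ → R) :
    ∃ p p' : ι × Rˣ, Set.EqOn (p.2 • v p.1) (p'.2 • v p'.1) {i | z i = 0} ∧
      δ * hammingNorm z ≤ hammingDist (p.2 • v p.1) (p'.2 • v p'.1) := by
  have := Fintype.ofFinite Rˣ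
  obtain ⟨p, p', heq, hle⟩ := exists_eqOn_compl_mul_card_le_hammingDist
    (fun p : ι × Rˣ ↦ p.2 • v p.1) {i | z i ≠ 0} fun i hi f hf ↦
      (h i).mul_card_le_card_ne (hf.mono (Set.compl_subset_compl.2 (by simpa using hi)))
  exact ⟨p, p', fun i hi ↦ heq (by simpa using hi), hle⟩

end Decodable

section Approximation

theorem hammingNorm_sub_add_card_le {κ : Type*} [Fintype κ] {G : κ → Type*}
    [∀ i, AddGroup (G i)] [∀ i, DecidableEq (G i)] {z y : ∀ i, G i} {T : Finset κ}
    (hy : ∀ i, z i = 0 → y i = 0) (hT : ∀ i ∈ T, z i = y i) (hz : ∀ i ∈ T, z i ≠ 0) :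
    hammingNorm (z - y) + #T ≤ hammingNorm z := by
  classical
  have hsupp : T ⊆ ({i | z i ≠ 0} : Finset κ) := fun i hi ↦ by simpa using hz i hi
  have hsub : ({i | (z - y) i ≠ 0} : Finset κ) ⊆ ({i | z i ≠ 0} : Finset κ) \ T := by
    intro i hi
    have hne : z i ≠ y i := by simpa [sub_eq_zero] using hi
    have hzi : z i ≠ 0 := fun h0 ↦ hne (h0.trans (hy i h0).symm)
    exact mem_sdiff.2 ⟨by simpa using hzi, mt (hT i) hne⟩
  calc hammingNorm (z - y) + #T ≤ #(({i | z i ≠ 0} : Finset κ) \ T) + #T := by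
        gcongr
        exact card_le_card hsub
    _ = hammingNorm z := card_sdiff_add_card_eq_card hsupp

theorem exists_hammingNorm_sub_smul_le {F κ : Type*} [Field F] [Fintype F] [DecidableEq F]
    [Fintype κ] {z d : κ → F} (hd : ∀ i, z i = 0 → d i = 0) :
    ∃ s : F, (hammingNorm (z - s • d) : ℝ) ≤ hammingNorm z - hammingNorm d / Fintype.card F := by
  obtain ⟨s, -, hs⟩ := exists_mul_card_le_card_filter (s := (univ : Finset F))
    (t := {i | d i ≠ 0}) (δ := (Fintype.card F : ℝ)⁻¹) univ_nonempty (fun s i ↦ z i = s * d i) <| by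
      intro i hi
      have hpos : 0 < #{s : F | z i = s * d i} :=
        card_pos.2 ⟨z i / d i, by simpa using (div_mul_cancel₀ (z i) (mem_filter.1 hi).2).symm⟩
      rw [card_univ, inv_mul_cancel₀ (Nat.cast_ne_zero.2 Fintype.card_ne_zero)]
      exact mod_cast hpos
  have hle : hammingNorm (z - s • d) + #{i ∈ ({i | d i ≠ 0} : Finset κ) | z i = s * d i} ≤
      hammingNorm z :=
    hammingNorm_sub_add_card_le (fun i hi ↦ by simp [hd i hi]) (fun i hi ↦ (mem_filter.1 hi).2)
      fun i hi ↦ mt (hd i) (mem_filter.1 (mem_filter.1 hi).1).2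
  refine ⟨s, le_sub_iff_add_le.2 (le_trans ?_ (Nat.cast_le (α := ℝ).2 hle))⟩
  rw [Nat.cast_add, div_eq_inv_mul]
  exact add_le_add_right hs _

theorem exists_mem_span_pow_mul_le {R M ι : Type*} [Semiring R] [AddCommGroup M] [Module R M]
    {v : ι → M} {N : M → ℝ} {r : ℝ} {t : ℕ} (hr : 0 ≤ r)
    (h : ∀ z, ∃ J : Finset ι, #J ≤ t ∧ ∃ y ∈ Submodule.span R (v '' J), N (z - y) ≤ r * N z)
    (m : ℕ) (z : M) :
    ∃ J : Finset ι, #J ≤ m * t ∧ ∃ y ∈ Submodule.span R (v '' J), N (z - y) ≤ r ^ m * N z := by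
  classical
  induction m with
  | zero => exact ⟨∅, by simp, 0, Submodule.zero_mem _, by simp⟩
  | succ m ih =>
    obtain ⟨J, hJ, y, hy, hNy⟩ := ih
    obtain ⟨J', hJ', y', hy', hNy'⟩ := h (z - y)
    refine ⟨J ∪ J', (card_union_le J J').trans (by rw [add_one_mul]; gcongr), y + y', ?_, ?_⟩
    · rw [coe_union, Set.image_union, Submodule.span_union]
      exact Submodule.add_mem_sup hy hy'
    · calc N (z - (y + y')) = N (z - y - y') := by rw [sub_add_eq_sub_sub]
        _ ≤ r * N (z - y) := hNy'
        _ ≤ r * (r ^ m * N z) := by gcongr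
        _ = r ^ (m + 1) * N z := by ring

theorem one_sub_pow_le_of_log_inv_le {u ε : ℝ} {m : ℕ} (hu : u ≤ 1) (hε : 0 < ε)
    (hm : Real.log ε⁻¹ ≤ m * u) : (1 - u) ^ m ≤ ε := by
  calc (1 - u) ^ m ≤ Real.exp (-u) ^ m :=
        pow_le_pow_left₀ (sub_nonneg.2 hu) (Real.one_sub_le_exp_neg u) m
    _ = Real.exp (-(m * u)) := by rw [← Real.exp_nat_mul, mul_neg]
    _ ≤ Real.exp (-Real.log ε⁻¹) := by gcongr
    _ = ε := by rw [Real.log_inv, neg_neg, Real.exp_log hε]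

variable {F ι κ : Type*} [Field F] [Fintype F] [DecidableEq F] [Fintype κ] [DecidableEq κ]
  [Fintype ι] [Nonempty ι] {v : ι → κ → F} {δ : ℝ}

theorem exists_mem_span_hammingNorm_sub_le (h : ∀ i, IsLocallyDecodable δ v i) (z : κ → F) :
    ∃ J : Finset ι, #J ≤ 2 ∧ ∃ y ∈ Submodule.span F (v '' J),
      (hammingNorm (z - y) : ℝ) ≤ (1 - δ / Fintype.card F) * hammingNorm z := by
  classical
  obtain ⟨⟨a, l⟩, ⟨b, m⟩, heq, hle⟩ := exists_eqOn_mul_hammingNorm_le_hammingDist h z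
  dsimp only at heq hle
  obtain ⟨s, hs⟩ := exists_hammingNorm_sub_smul_le (z := z) (d := -(l • v a) + m • v b)
    fun i hi ↦ by rw [Pi.add_apply, Pi.neg_apply, heq hi, neg_add_cancel]
  refine ⟨{a, b}, card_le_two, s • (-(l • v a) + m • v b), ?_, ?_⟩
  · have hmem {c : ι} (hc : c ∈ ({a, b} : Finset ι)) (u : Fˣ) :
        u • v c ∈ Submodule.span F (v '' ({a, b} : Finset ι)) :=
      Submodule.smul_mem _ (u : F) (Submodule.subset_span ⟨c, hc, rfl⟩)
    exact Submodule.smul_mem _ _ (Submodule.add_mem _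
      (Submodule.neg_mem _ (hmem (by simp) l)) (hmem (by simp) m))
  · rw [← hammingDist_eq_hammingNorm] at hs
    calc (hammingNorm (z - s • (-(l • v a) + m • v b)) : ℝ)
        ≤ hammingNorm z - hammingDist (l • v a) (m • v b) / Fintype.card F := hs
      _ ≤ hammingNorm z - δ * hammingNorm z / Fintype.card F := by gcongr
      _ = (1 - δ / Fintype.card F) * hammingNorm z := by ring

theorem stmt10_general (hδ : 0 < δ) (hδ1 : δ ≤ 1) (h : ∀ i, IsLocallyDecodable δ v i) {ε : ℝ}
    (hε : 0 < ε) (hε1 : ε ≤ 1) (x : κ → F) :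
    ∃ J : Finset ι, (#J : ℝ) ≤ 2 * (Real.log ε⁻¹ + 1) * Fintype.card F * δ⁻¹ ∧
      ∃ y ∈ Submodule.span F (v '' J), (hammingDist x y : ℝ) ≤ ε * Fintype.card κ := by
  set q : ℝ := (Fintype.card F : ℝ)
  have hq : 1 ≤ q := Nat.one_le_cast.2 Fintype.card_pos
  have hδq : δ / q ≤ 1 := div_le_one_of_le₀ (hδ1.trans hq) (by positivity)
  have hlog : 0 ≤ Real.log ε⁻¹ := Real.log_nonneg ((one_le_inv₀ hε).2 hε1)
  set m := ⌈Real.log ε⁻¹ / (δ / q)⌉₊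
  obtain ⟨J, hJ, y, hy, hle⟩ := exists_mem_span_pow_mul_le (N := fun z ↦ (hammingNorm z : ℝ))
    (sub_nonneg.2 hδq) (exists_mem_span_hammingNorm_sub_le h) m x
  refine ⟨J, ?_, y, hy, ?_⟩
  · have hm : (m : ℝ) ≤ Real.log ε⁻¹ / (δ / q) + 1 := (Nat.ceil_lt_add_one (by positivity)).le
    have hqδ : 1 ≤ 1 / (δ / q) := one_le_one_div (by positivity) hδq
    calc (#J : ℝ) ≤ m * 2 := mod_cast hJ
      _ ≤ (Real.log ε⁻¹ / (δ / q) + 1 / (δ / q)) * 2 := by gcongr; exact hm.trans (by gcongr)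
      _ = 2 * (Real.log ε⁻¹ + 1) * q * δ⁻¹ := by field_simp
  · have hpow : (1 - δ / q) ^ m ≤ ε :=
      one_sub_pow_le_of_log_inv_le hδq hε ((div_le_iff₀ (by positivity)).1 (Nat.le_ceil _))
    calc (hammingDist x y : ℝ) = hammingNorm (x - y) := by
          rw [hammingDist_comm, hammingDist_eq_hammingNorm, neg_add_eq_sub]
      _ ≤ (1 - δ / q) ^ m * hammingNorm x := hle
      _ ≤ ε * Fintype.card κ := by gcongr; exact hammingNorm_le_card_fintype

end Approximation

theorem IsLinearLDC2.isLocallyDecodable {F : Type} [Field F] {n k : ℕ} {δ : ℝ}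
    {v : Fin n → Fin k → F} {H : Fin k → Finset (Finset (Fin n))} (h : IsLinearLDC2 F δ v H)
    (i : Fin k) : IsLocallyDecodable δ v i := by
  obtain ⟨htwo, hdisj, hcard, hdec⟩ := h
  refine ⟨H i, by simpa using hcard i, fun e he e' he' hne ↦ hdisj i e he e' he' hne, ?_⟩
  intro e he
  obtain ⟨a, b, hab, rfl⟩ := card_eq_two.1 (htwo i e he)
  obtain ⟨α, β, hα, hβ, hsingle⟩ := hdec i _ he a (by simp) b (by simp) hab
  refine ⟨fun j ↦ if j = a then Units.mk0 α hα else -Units.mk0 β hβ,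
    a, by simp, b, by simp, ?_⟩
  simp [hab.symm, hsingle, Units.smul_def]

/-- There is an absolute constant `c > 0` such that for every linear
`(2,δ)`-LDC over a finite field `F` of cardinality `q`, every `x ∈ Fᵏ` is
within Hamming distance `k/4` of the span of at most `c·q·δ⁻¹` of the rows. -/
theorem stmt10 :
    ∃ c : ℝ, 0 < c ∧
      ∀ (F : Type) [Field F] [Fintype F] [DecidableEq F],
        ∀ (n k : ℕ) (δ : ℝ), 1 ≤ n → 0 < δ → δ < 1 →
          ∀ (v : Fin n → Fin k → F) (H : Fin k → Finset (Finset (Fin n))),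
            IsLinearLDC2 F δ v H →
            ∀ x : Fin k → F, ∃ J : Finset (Fin n),
              (J.card : ℝ) ≤ c * (Fintype.card F : ℝ) * δ⁻¹ ∧
              ∃ y ∈ Submodule.span F (v '' (J : Set (Fin n))),
                (hammingDist x y : ℝ) ≤ (k : ℝ) / 4 := by
  refine ⟨2 * (Real.log (1 / 4)⁻¹ + 1), by norm_num; positivity, ?_⟩
  intro F _ _ _ n k δ hn hδ hδ1 v H hL x
  have : NeZero n := ⟨Nat.one_le_iff_ne_zero.1 hn⟩
  simpa [div_eq_inv_mul] using
    stmt10_general hδ hδ1.le hL.isLocallyDecodable (ε := 1 / 4) (by norm_num) (by norm_num) x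
end

section
/- For every prime power q and every δ ∈ (0,1) there exists a constant C = C(q,δ) > 0 such that the following holds: if M ∈ F_q^{n×k} (together with matchings H_1,…,H_k) is a linear (2,δ)-LDC over F_q of block length n ≥ 2 and dimension k, then k ≤ C·log₂ n. -/
/-! Rescale every nonzero row so that its leading entry is `1`. If `e_i` lies in the span of `v a`
and `v b`, and neither of these rows has leading position `i`, then the rescaled rows differ by a
multiple of `e_i`. A row has only one leading position, so at most `n` of the pairs in all the
matchings together fail this condition. The other pairs are edges of a Hamming graph on the rescaled
rows, the edges in each direction forming a matching. Splitting the `n` points by the value of one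
coordinate after the other shows that there are at most `n log₂ n` such edges, since an edge in the
direction of that coordinate has an end outside the largest part. Hence `k δ n ≤ n + n log₂ n`, over
any field. -/

open Finset Function

section Isoperimetry

variable {ι κ γ : Type*}

/-- The vertices in `e` are joined in direction `i` when a vertex `a` is placed at the point `w a`:
these points agree in all coordinates except `i`, where they do not all agree. Edges are finite sets
of arbitrary size. -/
def IsEdgeInDirection (w : ι → κ → γ) (i : κ) (e : Finset ι) : Prop :=
  (∀ a ∈ e, ∀ b ∈ e, ∀ j ≠ i, w a j = w b j) ∧ ∃ a ∈ e, ∃ b ∈ e, w a i ≠ w b i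

theorem IsEdgeInDirection.nonempty {w : ι → κ → γ} {i : κ} {e : Finset ι}
    (h : IsEdgeInDirection w i e) : e.Nonempty :=
  let ⟨_, a, ha, _⟩ := h
  ⟨a, ha⟩

theorem sum_mul_logb_add_sub_le {s : Finset γ} {m : γ → ℝ} (hm : ∀ c ∈ s, 0 ≤ m c)
    {c₀ : γ} (hc₀ : c₀ ∈ s) (hmax : ∀ c ∈ s, m c ≤ m c₀) :
    ∑ c ∈ s, m c * Real.logb 2 (m c) + (∑ c ∈ s, m c - m c₀) ≤
      (∑ c ∈ s, m c) * Real.logb 2 (∑ c ∈ s, m c) := by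
  classical
  set M := ∑ c ∈ s, m c
  have mul_logb_le {x y z : ℝ} (hx : 0 ≤ x) (h : x ≠ 0 → y ≤ z) : x * y ≤ x * z := by
    rcases eq_or_ne x 0 with rfl | hx0
    · simp
    · exact mul_le_mul_of_nonneg_left (h hx0) hx
  have largest : m c₀ * Real.logb 2 (m c₀) ≤ m c₀ * Real.logb 2 M :=
    mul_logb_le (hm c₀ hc₀) fun h =>
      Real.logb_le_logb_of_le one_lt_two ((hm c₀ hc₀).lt_of_ne' h) (single_le_sum hm hc₀)
  have others : ∀ c ∈ s.erase c₀, m c * (Real.logb 2 (m c) + 1) ≤ m c * Real.logb 2 M := by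
    intro c hc
    obtain ⟨hne, hcs⟩ := mem_erase.1 hc
    refine mul_logb_le (hm c hcs) fun h => ?_
    have two_mul_le : m c * 2 ≤ M := by
      have := add_le_sum hm hcs hc₀ hne
      linarith [hmax c hcs]
    have hpos : 0 < m c := (hm c hcs).lt_of_ne' h
    calc Real.logb 2 (m c) + 1 = Real.logb 2 (m c * 2) := by
          rw [Real.logb_mul h two_ne_zero, Real.logb_self_eq_one one_lt_two]
      _ ≤ Real.logb 2 M := Real.logb_le_logb_of_le one_lt_two (by positivity) two_mul_le
  have hsum := sum_le_sum others
  simp only [mul_add, mul_one, sum_add_distrib, ← sum_mul] at hsum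
  have hsplit : m c₀ + ∑ c ∈ s.erase c₀, m c = M := add_sum_erase s m hc₀
  rw [← add_sum_erase s (fun c => m c * Real.logb 2 (m c)) hc₀]
  calc _ ≤ m c₀ * Real.logb 2 M + (∑ c ∈ s.erase c₀, m c) * Real.logb 2 M := by linarith
    _ = M * Real.logb 2 M := by rw [← add_mul, hsplit]

variable [DecidableEq ι]

theorem card_filter_not_disjoint_le {H : Finset (Finset ι)}
    (hH : (H : Set (Finset ι)).PairwiseDisjoint id) (A : Finset ι) :
    #{e ∈ H | ¬Disjoint e A} ≤ #A := by
  have hdisj : (({e ∈ H | ¬Disjoint e A} : Finset (Finset ι)) : Set (Finset ι)).PairwiseDisjoint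
      (· ∩ A) := fun e he e' he' hne =>
    (hH (mem_filter.1 he).1 (mem_filter.1 he').1 hne).mono inter_subset_left inter_subset_left
  calc #{e ∈ H | ¬Disjoint e A}
      ≤ #({e ∈ H | ¬Disjoint e A}.biUnion (· ∩ A)) :=
        card_le_card_biUnion hdisj fun e he => not_disjoint_iff_nonempty_inter.1 (mem_filter.1 he).2
    _ ≤ #A := card_le_card (biUnion_subset.2 fun _ _ => inter_subset_right)

theorem card_filter_subset_le_sum_fiber [DecidableEq γ] {H : Finset (Finset ι)} {f : ι → γ}
    (hne : ∀ e ∈ H, e.Nonempty) (hf : ∀ e ∈ H, ∀ a ∈ e, ∀ b ∈ e, f a = f b) (S : Finset ι) :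
    #{e ∈ H | e ⊆ S} ≤ ∑ c ∈ S.image f, #{e ∈ H | e ⊆ {a ∈ S | f a = c}} := by
  refine (card_le_card fun e he => ?_).trans card_biUnion_le
  obtain ⟨heH, heS⟩ := mem_filter.1 he
  obtain ⟨a, ha⟩ := hne e heH
  exact mem_biUnion.2 ⟨f a, mem_image_of_mem f (heS ha),
    mem_filter.2 ⟨heH, fun b hb => mem_filter.2 ⟨heS hb, hf e heH b hb a ha⟩⟩⟩

theorem card_filter_subset_add_card_fiber_le [DecidableEq γ] {H : Finset (Finset ι)}
    (hH : (H : Set (Finset ι)).PairwiseDisjoint id) {f : ι → γ}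
    (hf : ∀ e ∈ H, ∃ a ∈ e, ∃ b ∈ e, f a ≠ f b) (S : Finset ι) (c : γ) :
    #{e ∈ H | e ⊆ S} + #{a ∈ S | f a = c} ≤ #S := by
  have meets : ({e ∈ H | e ⊆ S} : Finset (Finset ι)) ⊆
      {e ∈ H | ¬Disjoint e {a ∈ S | f a ≠ c}} := by
    intro e he
    obtain ⟨heH, heS⟩ := mem_filter.1 he
    obtain ⟨a, ha, b, hb, hab⟩ := hf e heH
    refine mem_filter.2 ⟨heH, not_disjoint_iff.2 ?_⟩
    by_cases hac : f a = c
    · exact ⟨b, hb, mem_filter.2 ⟨heS hb, fun hbc => hab (hac.trans hbc.symm)⟩⟩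
    · exact ⟨a, ha, mem_filter.2 ⟨heS ha, hac⟩⟩
  calc #{e ∈ H | e ⊆ S} + #{a ∈ S | f a = c}
      ≤ #{a ∈ S | f a ≠ c} + #{a ∈ S | f a = c} :=
        Nat.add_le_add_right ((card_le_card meets).trans (card_filter_not_disjoint_le hH _)) _
    _ = #S := by rw [add_comm, S.card_filter_add_card_filter_not (f · = c)]

theorem sum_card_edges_le_card_mul_logb {w : ι → κ → γ} {H : κ → Finset (Finset ι)}
    (hH : ∀ i, (H i : Set (Finset ι)).PairwiseDisjoint id)
    (hw : ∀ i, ∀ e ∈ H i, IsEdgeInDirection w i e) (T : Finset κ) (S : Finset ι) :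
    ∑ i ∈ T, (#{e ∈ H i | e ⊆ S} : ℝ) ≤ #S * Real.logb 2 #S := by
  classical
  induction T using Finset.induction_on generalizing S with
  | empty =>
    rw [sum_empty]
    exact mul_nonneg (by positivity) (div_nonneg (Real.log_natCast_nonneg _) (by positivity))
  | insert j T hj ih =>
    rcases S.eq_empty_or_nonempty with rfl | hS
    · refine (sum_eq_zero fun i _ => ?_).trans_le (by simp)
      rw [Nat.cast_eq_zero, card_eq_zero, filter_eq_empty_iff]
      exact fun e he hsub => (hw i e he).nonempty.ne_empty (subset_empty.1 hsub)
    let fiber (c : γ) : Finset ι := {a ∈ S | w a j = c}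
    let values : Finset γ := S.image (w · j)
    obtain ⟨c₀, hc₀, hmax⟩ :=
      exists_max_image values (fun c => #(fiber c)) (hS.image _)
    have card_eq : ∑ c ∈ values, (#(fiber c) : ℝ) = #S := by
      exact_mod_cast (card_eq_sum_card_image (w · j) S).symm
    have across : (#{e ∈ H j | e ⊆ S} : ℝ) ≤ #S - #(fiber c₀) := by
      rw [le_sub_iff_add_le]
      exact_mod_cast card_filter_subset_add_card_fiber_le (hH j) (fun e he => (hw j e he).2) S c₀
    have within : ∑ i ∈ T, (#{e ∈ H i | e ⊆ S} : ℝ) ≤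
        ∑ c ∈ values, (#(fiber c) : ℝ) * Real.logb 2 #(fiber c) :=
      calc ∑ i ∈ T, (#{e ∈ H i | e ⊆ S} : ℝ)
          ≤ ∑ i ∈ T, ∑ c ∈ values, (#{e ∈ H i | e ⊆ fiber c} : ℝ) :=
            sum_le_sum fun i hi => by
              exact_mod_cast card_filter_subset_le_sum_fiber (fun e he => (hw i e he).nonempty)
                (fun e he a ha b hb =>
                  (hw i e he).1 a ha b hb j (ne_of_mem_of_not_mem hi hj).symm) S
        _ = ∑ c ∈ values, ∑ i ∈ T, (#{e ∈ H i | e ⊆ fiber c} : ℝ) := sum_comm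
        _ ≤ _ := sum_le_sum fun c _ => ih (fiber c)
    have entropy := sum_mul_logb_add_sub_le (m := fun c => (#(fiber c) : ℝ))
      (fun c _ => Nat.cast_nonneg _) hc₀ fun c hc => Nat.cast_le.2 (hmax c hc)
    rw [card_eq] at entropy
    rw [sum_insert hj]
    linarith

end Isoperimetry

section Normalization

variable {ι κ F : Type*} [LinearOrder κ] [DivisionRing F]

open Classical in
/-- The leading entry of a vector: its first nonzero coordinate. The value is `0` for a vector
without a first nonzero coordinate, so that `(leadingEntry u)⁻¹ • u` rescales `u` to leading entry
`1`, or to `0` in that case. -/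
noncomputable def leadingEntry (u : κ → F) : F :=
  if h : ∃ i, IsLeast (support u) i then u h.choose else 0

theorem leadingEntry_eq_of_isLeast {u : κ → F} {i : κ} (h : IsLeast (support u) i) :
    leadingEntry u = u i := by
  have hex : ∃ i, IsLeast (support u) i := ⟨i, h⟩
  rw [leadingEntry, dif_pos hex, hex.choose_spec.unique h]

theorem isLeast_support_of_single_eq_smul {u : κ → F} {i : κ} {α : F}
    (h : Pi.single i 1 = α • u) : IsLeast (support u) i := by
  have apply_eq (j : κ) : (Pi.single i 1 : κ → F) j = α * u j := congrFun h j
  have hα : α ≠ 0 := left_ne_zero_of_mul_eq_one (by simpa using (apply_eq i).symm)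
  refine ⟨right_ne_zero_of_mul_eq_one (by simpa using (apply_eq i).symm), fun j hj => ?_⟩
  by_contra hij
  have := apply_eq j
  rw [Pi.single_eq_of_ne (fun hji => hij hji.ge)] at this
  exact mul_ne_zero hα hj this.symm

theorem exists_isLeast_support [WellFoundedLT κ] {u : κ → F} (hu : u ≠ 0) :
    ∃ i, IsLeast (support u) i :=
  ⟨_, minimal_iff_isLeast.1 (WellFounded.minimal_wellFounded_lt_min (support_nonempty_iff.2 hu))⟩

theorem exists_single_eq_smul_sub [WellFoundedLT κ] {u u' : κ → F} {i : κ} {α β : F}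
    (h : Pi.single i 1 = α • u + β • u') (hu : ¬IsLeast (support u) i)
    (hu' : ¬IsLeast (support u') i) :
    ∃ c : F, Pi.single i 1 = c • ((leadingEntry u)⁻¹ • u - (leadingEntry u')⁻¹ • u') := by
  have hαu : α • u ≠ 0 := fun h0 =>
    hu' (isLeast_support_of_single_eq_smul (h.trans (by rw [h0, zero_add])))
  have hβu' : β • u' ≠ 0 := fun h0 =>
    hu (isLeast_support_of_single_eq_smul (h.trans (by rw [h0, add_zero])))
  obtain ⟨hα, hu0⟩ := smul_ne_zero_iff.1 hαu
  obtain ⟨hβ, hu0'⟩ := smul_ne_zero_iff.1 hβu'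
  obtain ⟨l, hl⟩ := exists_isLeast_support hu0
  obtain ⟨l', hl'⟩ := exists_isLeast_support hu0'
  have cancel {j : κ} (hj : j ≠ i) : α * u j + β * u' j = 0 := by
    simpa [hj] using (congrFun h j).symm
  have mem_support_iff {j : κ} (hj : j ≠ i) : j ∈ support u ↔ j ∈ support u' := by
    calc u j ≠ 0 ↔ α * u j ≠ 0 := (mul_ne_zero_iff_left hα).symm
      _ ↔ β * u' j ≠ 0 := by rw [eq_neg_of_add_eq_zero_left (cancel hj), neg_ne_zero]
      _ ↔ u' j ≠ 0 := mul_ne_zero_iff_left hβ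
  have hli : l ≠ i := by rintro rfl; exact hu hl
  have hli' : l' ≠ i := by rintro rfl; exact hu' hl'
  obtain rfl : l = l' :=
    le_antisymm (hl.2 ((mem_support_iff hli').2 hl'.1)) (hl'.2 ((mem_support_iff hli).1 hl.1))
  refine ⟨α * u l, ?_⟩
  rw [leadingEntry_eq_of_isLeast hl, leadingEntry_eq_of_isLeast hl', smul_sub, smul_smul, smul_smul,
    mul_inv_cancel_right₀ hl.1, eq_neg_of_add_eq_zero_left (cancel hli), neg_mul, neg_smul,
    mul_inv_cancel_right₀ hl'.1, sub_neg_eq_add, h]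

end Normalization

section LocallyDecodable

variable {ι κ F : Type*} [Fintype ι] [LinearOrder κ] [DivisionRing F]

open Classical in
/-- The vertices `a` whose vector `v a` has its first nonzero coordinate at position `i`. These are
the vertices spoiling an edge that decodes `i`. -/
noncomputable def leadingAt (v : ι → κ → F) (i : κ) : Finset ι :=
  {a | IsLeast (support (v a)) i}

theorem mem_leadingAt {v : ι → κ → F} {i : κ} {a : ι} :
    a ∈ leadingAt v i ↔ IsLeast (support (v a)) i := by
  simp only [leadingAt, mem_filter, mem_univ, true_and]

theorem sum_card_leadingAt_le [Fintype κ] (v : ι → κ → F) :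
    ∑ i, #(leadingAt v i) ≤ Fintype.card ι := by
  classical
  have hdisj : ((univ : Finset κ) : Set κ).PairwiseDisjoint (leadingAt v) :=
    fun i _ j _ hij => disjoint_left.2 fun _ hi hj =>
      hij ((mem_leadingAt.1 hi).unique (mem_leadingAt.1 hj))
  rw [← card_biUnion hdisj]
  exact card_le_univ _

theorem isEdgeInDirection_of_single_mem_span [DecidableEq ι] [WellFoundedLT κ] {v : ι → κ → F}
    {i : κ} {a b : ι} (h : Pi.single i 1 ∈ Submodule.span F {v a, v b})
    (hdisj : Disjoint {a, b} (leadingAt v i)) :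
    IsEdgeInDirection (fun x => (leadingEntry (v x))⁻¹ • v x) i {a, b} := by
  obtain ⟨α, β, hαβ⟩ := Submodule.mem_span_pair.1 h
  simp only [disjoint_insert_left, disjoint_singleton_left, mem_leadingAt] at hdisj
  obtain ⟨c, hc⟩ := exists_single_eq_smul_sub hαβ.symm hdisj.1 hdisj.2
  have apply_eq (j : κ) : (Pi.single i 1 : κ → F) j =
      c * (((leadingEntry (v a))⁻¹ • v a) j - ((leadingEntry (v b))⁻¹ • v b) j) := congrFun hc j
  have at_i := apply_eq i
  rw [Pi.single_eq_same] at at_i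
  have hc0 : c ≠ 0 := left_ne_zero_of_mul_eq_one at_i.symm
  have agree (j : κ) (hj : j ≠ i) :
      ((leadingEntry (v a))⁻¹ • v a) j = ((leadingEntry (v b))⁻¹ • v b) j := by
    have at_j := apply_eq j
    rw [Pi.single_eq_of_ne hj] at at_j
    exact sub_eq_zero.1 ((mul_eq_zero_iff_left hc0).1 at_j.symm)
  constructor
  · simp only [mem_insert, mem_singleton]
    rintro x (rfl | rfl) y (rfl | rfl) j hj
    exacts [rfl, agree j hj, (agree j hj).symm, rfl]
  · exact ⟨a, by simp, b, by simp, sub_ne_zero.1 (right_ne_zero_of_mul_eq_one at_i.symm)⟩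

theorem sum_card_le_of_single_mem_span [DecidableEq ι] [Fintype κ] {v : ι → κ → F}
    {H : κ → Finset (Finset ι)} (hH : ∀ i, (H i : Set (Finset ι)).PairwiseDisjoint id)
    (hdec : ∀ i, ∀ e ∈ H i, ∃ a b, e = {a, b} ∧
      Pi.single i 1 ∈ Submodule.span F {v a, v b}) :
    ∑ i, (#(H i) : ℝ) ≤ Fintype.card ι * (1 + Real.logb 2 (Fintype.card ι)) := by
  classical
  let G (i : κ) : Finset (Finset ι) := {e ∈ H i | Disjoint e (leadingAt v i)}
  have hG (i : κ) : ∀ e ∈ G i,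
      IsEdgeInDirection (fun a => (leadingEntry (v a))⁻¹ • v a) i e := by
    intro e he
    obtain ⟨heH, hdisj⟩ := mem_filter.1 he
    obtain ⟨a, b, rfl, hspan⟩ := hdec i e heH
    exact isEdgeInDirection_of_single_mem_span hspan hdisj
  have edges : ∑ i, (#(G i) : ℝ) ≤ Fintype.card ι * Real.logb 2 (Fintype.card ι) := by
    simpa using sum_card_edges_le_card_mul_logb
      (fun i => (hH i).subset (coe_subset.2 (filter_subset _ _))) hG univ univ
  have card_le (i : κ) : #(H i) ≤ #(leadingAt v i) + #(G i) := by
    rw [← card_filter_add_card_filter_not (s := H i) (fun e => Disjoint e (leadingAt v i)),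
      add_comm]
    exact Nat.add_le_add_right (card_filter_not_disjoint_le (hH i) _) _
  calc ∑ i, (#(H i) : ℝ) ≤ ∑ i, ((#(leadingAt v i) : ℝ) + #(G i)) :=
        sum_le_sum fun i _ => by exact_mod_cast card_le i
    _ = ∑ i, (#(leadingAt v i) : ℝ) + ∑ i, (#(G i) : ℝ) := sum_add_distrib
    _ ≤ Fintype.card ι + Fintype.card ι * Real.logb 2 (Fintype.card ι) :=
        add_le_add (by exact_mod_cast sum_card_leadingAt_le v) edges
    _ = _ := by ring

end LocallyDecodable

theorem IsLinearLDC2.dimension_mul_le {F : Type} [Field F] {δ : ℝ} {n k : ℕ} {v : Fin n → Fin k → F}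
    {H : Fin k → Finset (Finset (Fin n))} (h : IsLinearLDC2 F δ v H) :
    k * (δ * n) ≤ n * (1 + Real.logb 2 n) := by
  obtain ⟨hcard, hdisj, hsize, hdec⟩ := h
  have hspan (i : Fin k) : ∀ e ∈ H i, ∃ a b, e = {a, b} ∧
      Pi.single i 1 ∈ Submodule.span F {v a, v b} := by
    intro e he
    obtain ⟨a, b, hab, rfl⟩ := card_eq_two.1 (hcard i e he)
    obtain ⟨α, β, -, -, hαβ⟩ := hdec i _ he a (by simp) b (by simp) hab
    exact ⟨a, b, rfl, Submodule.mem_span_pair.2 ⟨α, β, hαβ.symm⟩⟩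
  calc k * (δ * n) = ∑ _i : Fin k, δ * n := by simp
    _ ≤ ∑ i, (#(H i) : ℝ) := sum_le_sum fun i _ => hsize i
    _ ≤ n * (1 + Real.logb 2 n) := by simpa using sum_card_le_of_single_mem_span hdisj hspan

theorem stmt11_general {F : Type} [Field F] {δ : ℝ} (hδ : 0 < δ) {n k : ℕ} (hn : 2 ≤ n)
    {v : Fin n → Fin k → F} {H : Fin k → Finset (Finset (Fin n))} (h : IsLinearLDC2 F δ v H) :
    k ≤ 2 / δ * Real.logb 2 n := by
  have hn2 : (2 : ℝ) ≤ n := by exact_mod_cast hn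
  have one_le_logb : 1 ≤ Real.logb 2 n := by
    rwa [Real.le_logb_iff_rpow_le one_lt_two (by positivity), Real.rpow_one]
  have dimension_bound : k * δ ≤ 1 + Real.logb 2 n := by
    refine le_of_mul_le_mul_right ?_ (show (0 : ℝ) < n by positivity)
    linarith [h.dimension_mul_le]
  rw [div_mul_eq_mul_div, le_div_iff₀ hδ]
  linarith

/-- For every prime power `q` and `δ ∈ (0,1)` there is a constant `C = C(q,δ) > 0`
such that every linear `(2,δ)`-LDC over a field of cardinality `q`, of block
length `n ≥ 2` and dimension `k`, satisfies `k ≤ C·log₂ n`. -/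
theorem stmt11 (q : ℕ) (hq : IsPrimePow q) (δ : ℝ) (hδ0 : 0 < δ) (hδ1 : δ < 1) :
    ∃ C : ℝ, 0 < C ∧
      ∀ (F : Type) [Field F] [Fintype F], Fintype.card F = q →
        ∀ (n k : ℕ), 2 ≤ n →
          ∀ (v : Fin n → Fin k → F) (H : Fin k → Finset (Finset (Fin n))),
            IsLinearLDC2 F δ v H →
            (k : ℝ) ≤ C * Real.logb 2 n :=
  ⟨2 / δ, by positivity, fun _ _ _ _ _ _ hn _ _ h => stmt11_general hδ0 hn h⟩
end
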